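/- arXiv:math/0102057 — 8 statements merged into one kernel-verified Lean document; each statement's English description precedes it below -/
import Mathlib

section
/- There exists a family (G_α)_{α ∈ I} of subgroups of the Baer–Specker group ℤ^ω, indexed by a set I of cardinality 2^{ℵ₁}, such that: (i) each G_α is a pure subgroup of ℤ^ω; (ii) each G_α has cardinality ℵ₁; (iii) no G_α is free; and (iv) whenever α ≠ β, the groups G_α and G_β are almost disjoint — in particular G_α ∩ G_β is free and G_α is not isomorphic to G_β. -/
/-!
The groups are built from an almost disjoint family `b i` of infinite subsets of `ℕ`, indexed by the
reals: `b i` is the set of codes of finite initial segments of `i`. Let `p k` be the `k`-th prime and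
let `x i` (`branchVec (b i)`) be the function supported on `b i` whose value at `n ∈ b i` is the
product of the `p k` with `k ∈ b i`, `k < n`. For a set `X` of reals, `G_X` (`grp b X`) consists of
all integer sequences that are, modulo finitely supported functions, rational combinations of the
`x i` with `i ∈ X`. It is pure by definition, and modulo finitely supported functions it embeds
into `⊕_{i ∈ X} ℚ` with `i`-th coordinates having squarefree denominators composed of the primes
`p k`, `k ∈ b i`.

If `X` is uncountable then `G_X` is not free (`not_free_grp`): given a basis, some `x i` has a nonzero
coordinate at a basis element that is not used by the countably many finitely supported functions,
and that coordinate would be divisible by all `p k` with `k ∈ b i`.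

If `X ∩ Y` is countable and `H` embeds into both `G_X` and `G_Y`, then `H` is free
(`free_of_two_coordinates_countable_ker`). Indeed `H` carries two coordinate systems `f` and `g`. Call
a set `U ⊇ X ∩ Y` of indices closed if the elements with `f`-support in `U` are exactly those with
`g`-support in `U`. Every countable enlargement of a closed set is contained in a countable closed
enlargement, and the quotient of the corresponding subgroups of `H` is countable and embeds into
two rational direct sums over disjoint sets of indices. A finite rank pure subgroup of this quotient
has two full lattices, such that the denominators with respect to one are squarefree products of
primes from a finite union of `b i`, and with respect to the other from a finite union of other
`b j`. The two unions have finite intersection, so the denominators are bounded and the subgroup is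
finitely generated (`finite_of_two_coordinates`); by Pontryagin's criterion (`free_of_countable`) the
quotient is free. Zorn's lemma, started at a countable subgroup, which is free because `ℤ^ω` is
`ℵ₁`-free, assembles a basis of `H`.

Finally there are `2^ℵ₁` sets of reals of cardinality `ℵ₁` with pairwise countable intersections
(`exists_family`): code the bounded initial segments of subsets of `ω₁` by reals.
-/

namespace BaerSpecker

/-! ### Extending bases and Pontryagin's criterion -/

/-- A basis of a subgroup `N` extends to a basis of a larger subgroup `P` if `P / N` is free. -/
lemma exists_basis_extension {M : Type*} [AddCommGroup M] {B : Set M} {P : Submodule ℤ M}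
    (hB : LinearIndepOn ℤ id B) (hBP : Submodule.span ℤ B ≤ P)
    (hfree : Module.Free ℤ (P.map (Submodule.span ℤ B).mkQ)) :
    ∃ B' : Set M, B ⊆ B' ∧ LinearIndepOn ℤ id B' ∧ Submodule.span ℤ B' = P := by
  set N := Submodule.span ℤ B with hN
  let b := Module.Free.chooseBasis ℤ (P.map N.mkQ)
  have hlift : ∀ k, ∃ m ∈ P, N.mkQ m = (b k : M ⧸ N) := fun k => by
    exact Submodule.mem_map.1 (b k).2
  choose c hcP hc using hlift
  have hb : LinearIndependent ℤ (fun k => (b k : M ⧸ N)) :=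
    b.linearIndependent.map' (Submodule.subtype _) (Submodule.ker_subtype _)
  have hBN : LinearIndependent ℤ (fun x : B => (⟨x, Submodule.subset_span x.2⟩ : N)) := by
    refine LinearIndependent.of_comp N.subtype ?_
    exact hB
  have hsum := hBN.sumElim_of_quotient c (by
    have hmk : (Submodule.Quotient.mk (p := N)) ∘ c = fun k => (b k : M ⧸ N) := funext hc
    rw [hmk]
    exact hb)
  refine ⟨B ∪ Set.range c, Set.subset_union_left, ?_, ?_⟩
  · have := hsum.linearIndepOn_id
    rwa [Set.Sum.elim_range, Subtype.range_coe] at this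
  · rw [Submodule.span_union, ← hN]
    apply le_antisymm
    · refine sup_le hBP (Submodule.span_le.2 ?_)
      rintro _ ⟨k, rfl⟩
      exact hcP k
    · have h1 : Submodule.map N.mkQ P ≤ (Submodule.span ℤ (Set.range c)).map N.mkQ := by
        rw [Submodule.map_span, ← Set.range_comp]
        have : (N.mkQ ∘ c) = (fun k => (b k : M ⧸ N)) := funext hc
        rw [this]
        have h2 := congrArg (Submodule.map (P.map N.mkQ).subtype) b.span_eq
        rw [Submodule.map_span, ← Set.range_comp, Submodule.map_top, Submodule.range_subtype] at h2
        exact h2.ge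
      intro x hx
      obtain ⟨y, hy, hxy⟩ := h1 (Submodule.mem_map_of_mem hx)
      have : x - y ∈ N := by
        rw [← Submodule.Quotient.mk_eq_zero, Submodule.Quotient.mk_sub, sub_eq_zero]
        exact hxy.symm
      exact Submodule.mem_sup.2 ⟨_, this, _, hy, by abel⟩

/-- A subgroup is pure in the torsion-free sense: it is closed under division by nonzero
integers. -/
def IsPure {M : Type*} [AddCommGroup M] (P : Submodule ℤ M) : Prop :=
  ∀ (n : ℤ) (m : M), n ≠ 0 → n • m ∈ P → m ∈ P

/-- Pontryagin's criterion: a countable torsion-free group in which every finitely generated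
subgroup lies in a finitely generated pure subgroup is free. Torsion-freeness is the case `⊥` of
purity. -/
lemma free_of_countable {M : Type*} [AddCommGroup M] [Countable M]
    (h0 : IsPure (⊥ : Submodule ℤ M))
    (h : ∀ S : Finset M, ∃ P : Submodule ℤ M, (S : Set M) ⊆ P ∧ P.FG ∧ IsPure P) :
    Module.Free ℤ M := by
  classical
  let St := {B : Set M // LinearIndepOn ℤ id B ∧ (Submodule.span ℤ B).FG ∧
    IsPure (Submodule.span ℤ B)}
  have step : ∀ (B : St) (m : M), ∃ B' : St, B.1 ⊆ B'.1 ∧ m ∈ Submodule.span ℤ B'.1 := by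
    rintro ⟨B, hB, ⟨S, hS⟩, hpure⟩ m
    obtain ⟨P, hSP, hPfg, hPp⟩ := h (insert m S)
    have hle : Submodule.span ℤ B ≤ P := by
      rw [← hS, Submodule.span_le]
      exact fun x hx => hSP (by simp [Finset.mem_coe.1 hx])
    have hmP : m ∈ P := hSP (by simp)
    set N := Submodule.span ℤ B with hN
    have : Module.Finite ℤ (P.map N.mkQ) := Module.Finite.iff_fg.2 (hPfg.map _)
    have : Module.IsTorsionFree ℤ (M ⧸ N) := by
      refine ⟨fun r hr => ?_⟩
      have hr0 : r ≠ 0 := hr.ne_zero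
      rw [isSMulRegular_iff_right_eq_zero_of_smul]
      intro x hx
      obtain ⟨x, rfl⟩ := N.mkQ_surjective x
      rw [← map_smul, Submodule.mkQ_apply, Submodule.Quotient.mk_eq_zero] at hx
      rw [Submodule.mkQ_apply, Submodule.Quotient.mk_eq_zero]
      exact hpure r x hr0 hx
    obtain ⟨B', hBB', hB', hspan⟩ := exists_basis_extension hB hle inferInstance
    refine ⟨⟨B', hB', ?_, ?_⟩, hBB', ?_⟩ <;> rw [hspan] <;> assumption
  choose nxt hsub hmem using step
  obtain ⟨e, he⟩ := exists_surjective_nat M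
  let seq : ℕ → St := fun n => Nat.rec
    ⟨∅, linearIndepOn_empty _ _, by simpa using Submodule.fg_bot, by simpa using h0⟩
    (fun n B => nxt B (e n)) n
  have hmono : Monotone (fun n => (seq n).1) := monotone_nat_of_le_succ fun n => hsub _ _
  have hind : LinearIndepOn ℤ id (⋃ n, (seq n).1) :=
    linearIndepOn_iUnion_of_directed hmono.directed_le fun n => (seq n).2.1
  have hspan : ⊤ ≤ Submodule.span ℤ (Set.range (fun x : (⋃ n, (seq n).1) => id (x : M))) := by
    intro x _
    obtain ⟨n, rfl⟩ := he x
    have : e n ∈ Submodule.span ℤ (seq (n + 1)).1 := hmem (seq n) (e n)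
    refine Submodule.span_mono ?_ this
    intro y hy
    exact ⟨⟨y, Set.mem_iUnion.2 ⟨n + 1, hy⟩⟩, rfl⟩
  exact Module.Free.of_basis (Module.Basis.mk hind hspan)

/-- Specker's theorem that `ℤ^ω` is `ℵ₁`-free. -/
lemma free_of_countable_of_injective {M : Type*} [AddCommGroup M] [Countable M]
    (φ : M →+ (ℕ → ℤ)) (hφ : Function.Injective φ) : Module.Free ℤ M := by
  classical
  -- the embedding followed by the inclusion into `ℚ^ω`
  let c : M →ₗ[ℤ] (ℕ → ℚ) := AddMonoidHom.toIntLinearMap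
    { toFun := fun m n => (φ m n : ℚ)
      map_zero' := by ext; simp
      map_add' := by intros; ext; simp }
  have hc : ∀ m n, c m n = (φ m n : ℚ) := fun _ _ => rfl
  have hcinj : Function.Injective c := by
    intro x y hxy
    apply hφ
    ext n
    have := congrFun hxy n
    simpa [hc] using this
  have hpure : ∀ V : Submodule ℚ (ℕ → ℚ), IsPure ((V.restrictScalars ℤ).comap c) := by
    intro V n m hn hm
    have : (n : ℚ) • c m ∈ V := by
      have h1 : c (n • m) ∈ V := hm
      rwa [map_smul, ← Int.cast_smul_eq_zsmul ℚ] at h1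
    exact (V.smul_mem_iff (by exact_mod_cast hn)).1 this
  refine free_of_countable ?_ ?_
  · have := hpure ⊥
    convert this using 1
    symm
    rw [Submodule.eq_bot_iff]
    intro x hx
    exact hcinj (by simpa using hx)
  · intro S
    let V : Submodule ℚ (ℕ → ℚ) := Submodule.span ℚ (c '' S)
    refine ⟨(V.restrictScalars ℤ).comap c, ?_, ?_, hpure V⟩
    · exact fun x hx => Submodule.subset_span ⟨x, hx, rfl⟩
    · have : FiniteDimensional ℚ V := FiniteDimensional.span_of_finite ℚ (S.finite_toSet.image c)
      -- the elements of `V` vanishing at the first `n` places stabilise, hence become zero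
      let W : ℕ →o (Submodule ℚ V)ᵒᵈ :=
        { toFun := fun n => OrderDual.toDual
            { carrier := {v | ∀ i < n, (v : ℕ → ℚ) i = 0}
              zero_mem' := by simp
              add_mem' := by intro a b ha hb i hi; simp [ha i hi, hb i hi]
              smul_mem' := by intro a b hb i hi; simp [hb i hi] }
          monotone' := by
            intro a b hab v hv i hi
            exact hv i (hi.trans_le hab) }
      obtain ⟨n, hn⟩ := IsArtinian.monotone_stabilizes W
      let P := (V.restrictScalars ℤ).comap c
      let ev : P →ₗ[ℤ] (Fin n → ℤ) := AddMonoidHom.toIntLinearMap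
        { toFun := fun m i => φ m i
          map_zero' := by ext; simp
          map_add' := by intros; ext; simp }
      have hev : Function.Injective ev := by
        rw [injective_iff_map_eq_zero]
        intro m hm
        have h1 : (⟨c m, m.2⟩ : V) ∈ OrderDual.ofDual (W n) := by
          intro i hi
          have := congrFun hm ⟨i, hi⟩
          have h2 : φ m i = 0 := this
          simp [hc, h2]
        apply Subtype.ext
        apply hcinj
        rw [ZeroMemClass.coe_zero, map_zero]
        ext k
        have h2 : (⟨c m, m.2⟩ : V) ∈ OrderDual.ofDual (W (max n (k + 1))) := by
          rw [← hn _ (le_max_left _ _)]; exact h1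
        exact h2 k (by simp)
      exact Module.Finite.iff_fg.1 (Module.Finite.of_injective ev hev)

/-! ### Finite rank subgroups with two incompatible coordinate systems -/

/-- `q` becomes an integer after multiplication by a product of distinct primes with indices
in `A`, where the primes are enumerated as `Nat.nth Nat.Prime`. -/
def HasDenIn (A : Set ℕ) (q : ℚ) : Prop :=
  ∃ S : Finset ℕ, (S : Set ℕ) ⊆ A ∧ ∃ z : ℤ, ((∏ k ∈ S, Nat.nth Nat.Prime k : ℕ) : ℚ) * q = z

lemma prod_primes_ne_zero (S : Finset ℕ) : (∏ k ∈ S, Nat.nth Nat.Prime k) ≠ 0 :=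
  Finset.prod_ne_zero_iff.2 fun k _ => (Nat.prime_nth_prime k).ne_zero

lemma prod_primes_coprime {S T : Finset ℕ} (h : Disjoint S T) :
    (∏ k ∈ S, Nat.nth Nat.Prime k).Coprime (∏ k ∈ T, Nat.nth Nat.Prime k) := by
  refine Nat.Coprime.prod_left fun i hi => Nat.Coprime.prod_right fun j hj => ?_
  rw [Nat.coprime_primes (Nat.prime_nth_prime i) (Nat.prime_nth_prime j)]
  intro hij
  have := Nat.nth_injective Nat.infinite_setOfPred_prime hij
  exact Finset.disjoint_left.1 h hi (this ▸ hj)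

section Coordinates

variable {ι M : Type*} [AddCommGroup M]

/-- The subgroup of elements all of whose coordinates are integers. -/
def intPart (f : M →+ (ι →₀ ℚ)) : Submodule ℤ M where
  carrier := {h | ∀ i, ∃ z : ℤ, f h i = z}
  zero_mem' := fun i => ⟨0, by simp⟩
  add_mem' := fun {a b} ha hb i => by
    obtain ⟨x, hx⟩ := ha i
    obtain ⟨y, hy⟩ := hb i
    exact ⟨x + y, by simp [hx, hy]⟩
  smul_mem' := fun c a ha i => by
    obtain ⟨x, hx⟩ := ha i
    exact ⟨c * x, by simp [hx]⟩

/-- The subgroup of elements whose coordinates vanish outside `U`. -/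
def supportedOn (f : M →+ (ι →₀ ℚ)) (U : Set ι) : Submodule ℤ M where
  carrier := {h | ∀ i, i ∉ U → f h i = 0}
  zero_mem' := fun i _ => by simp
  add_mem' := fun {a b} ha hb i hi => by simp [ha i hi, hb i hi]
  smul_mem' := fun c a ha i hi => by simp [ha i hi]

lemma mem_supportedOn {f : M →+ (ι →₀ ℚ)} {U : Set ι} {h : M} :
    h ∈ supportedOn f U ↔ ∀ i, i ∉ U → f h i = 0 := Iff.rfl

lemma supportedOn_mono (f : M →+ (ι →₀ ℚ)) {U V : Set ι} (h : U ⊆ V) :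
    supportedOn f U ≤ supportedOn f V := fun _ hx i hi => hx i fun hU => hi (h hU)

lemma isPure_supportedOn (f : M →+ (ι →₀ ℚ)) (U : Set ι) : IsPure (supportedOn f U) := by
  intro n m hn hm i hi
  have := hm i hi
  simpa [hn] using this

lemma fg_intPart {f : M →+ (ι →₀ ℚ)} (hf : Function.Injective f) {F : Finset ι}
    (hF : ∀ h i, i ∉ F → f h i = 0) : (intPart f).FG := by
  let ev : intPart f →ₗ[ℤ] (F → ℤ) := AddMonoidHom.toIntLinearMap
    { toFun := fun m i => ⌊f m i⌋
      map_zero' := by ext; simp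
      map_add' := by
        intro a b
        ext i
        obtain ⟨x, hx⟩ := a.2 i
        obtain ⟨y, hy⟩ := b.2 i
        simp [hx, hy] }
  have hev : Function.Injective ev := by
    rw [injective_iff_map_eq_zero]
    intro m hm
    apply Subtype.ext
    apply hf
    ext i
    by_cases hi : i ∈ F
    · have h1 : ⌊f m i⌋ = 0 := congrFun hm ⟨i, hi⟩
      obtain ⟨x, hx⟩ := m.2 i
      rw [hx, Int.floor_intCast] at h1
      simp [hx, h1]
    · simp [hF _ i hi]
  exact Module.Finite.iff_fg.1 (Module.Finite.of_injective ev hev)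

/-- A common squarefree denominator for all coordinates of `h`. -/
lemma exists_prod_smul_mem_intPart {A : ι → Set ℕ} {f : M →+ (ι →₀ ℚ)} {F : Finset ι}
    (hF : ∀ h i, i ∉ F → f h i = 0) (hden : ∀ h i, HasDenIn (A i) (f h i)) (h : M) :
    ∃ S : Finset ℕ, (S : Set ℕ) ⊆ (⋃ i ∈ F, A i) ∧
      ((∏ k ∈ S, Nat.nth Nat.Prime k : ℕ) : ℤ) • h ∈ intPart f := by
  classical
  choose S hSA z hz using hden h
  refine ⟨F.biUnion S, ?_, ?_⟩
  · intro k hk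
    simp only [Finset.coe_biUnion, Set.mem_iUnion, Finset.mem_coe] at hk ⊢
    obtain ⟨i, hi, hk⟩ := hk
    exact ⟨i, hi, hSA i hk⟩
  · intro i
    by_cases hi : i ∈ F
    · obtain ⟨d, hd⟩ := Finset.prod_dvd_prod_of_subset _ _ (Nat.nth Nat.Prime)
        (Finset.subset_biUnion_of_mem S hi)
      refine ⟨d * z i, ?_⟩
      rw [hd, map_zsmul, Finsupp.smul_apply, zsmul_eq_mul]
      push_cast
      have := hz i
      push_cast at this
      rw [← this]
      ring
    · exact ⟨0, by simp [hF h i hi]⟩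

/-- If `M` embeds into `⊕_{i ∈ F} ℚ` with squarefree denominators from `⋃_{i ∈ F} A i`, and also
into `⊕_{i ∈ F'} ℚ` with squarefree denominators from `⋃_{i ∈ F'} A i`, where `F` and `F'` are
finite and disjoint and the `A i` are almost disjoint, then only finitely many primes occur, so
`M` is commensurable with a lattice. -/
lemma finite_of_two_coordinates {A : ι → Set ℕ} (hA : ∀ i j, i ≠ j → (A i ∩ A j).Finite)
    {f g : M →+ (ι →₀ ℚ)} (hf : Function.Injective f) (hg : Function.Injective g)
    {F F' : Finset ι} (hF : ∀ h i, i ∉ F → f h i = 0) (hF' : ∀ h i, i ∉ F' → g h i = 0)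
    (hFF' : Disjoint F F') (hfden : ∀ h i, HasDenIn (A i) (f h i))
    (hgden : ∀ h i, HasDenIn (A i) (g h i)) : Module.Finite ℤ M := by
  classical
  have hfinite : ((⋃ i ∈ F, A i) ∩ (⋃ j ∈ F', A j)).Finite := by
    have : ((⋃ i ∈ F, A i) ∩ (⋃ j ∈ F', A j)) ⊆ ⋃ i ∈ F, ⋃ j ∈ F', (A i ∩ A j) := by
      rintro k ⟨h1, h2⟩
      simp only [Set.mem_iUnion] at h1 h2 ⊢
      obtain ⟨i, hi, hki⟩ := h1
      obtain ⟨j, hj, hkj⟩ := h2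
      exact ⟨i, hi, j, hj, hki, hkj⟩
    refine Set.Finite.subset ?_ this
    refine F.finite_toSet.biUnion fun i hi => F'.finite_toSet.biUnion fun j hj => hA i j ?_
    rintro rfl
    exact Finset.disjoint_left.1 hFF' hi hj
  set K := hfinite.toFinset with hK
  -- a nonzero integer carrying the first lattice into the second
  obtain ⟨N, hN0, hN⟩ : ∃ N : ℤ, N ≠ 0 ∧ ∀ h ∈ intPart f, N • h ∈ intPart g := by
    obtain ⟨S, hS⟩ := fg_intPart hf hF
    choose T _ hT using exists_prod_smul_mem_intPart hF' hgden
    refine ⟨∏ s ∈ S, ((∏ k ∈ T s, Nat.nth Nat.Prime k : ℕ) : ℤ), ?_, ?_⟩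
    · exact Finset.prod_ne_zero_iff.2 fun s _ => by exact_mod_cast prod_primes_ne_zero _
    · intro h hh
      rw [← hS] at hh
      induction hh using Submodule.span_induction with
      | mem x hx =>
        rw [← Finset.prod_erase_mul _ _ (Finset.mem_coe.1 hx), mul_smul]
        exact Submodule.smul_mem _ _ (hT x)
      | zero => simp
      | add x y _ _ hx hy => rw [smul_add]; exact Submodule.add_mem _ hx hy
      | smul a x _ hx => rw [smul_comm]; exact Submodule.smul_mem _ _ hx
  set D : ℤ := ((∏ k ∈ K, Nat.nth Nat.Prime k : ℕ) : ℤ) with hD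
  have hD0 : D ≠ 0 := Int.natCast_ne_zero.2 (prod_primes_ne_zero K)
  have key : ∀ h : M, (N * D) • h ∈ intPart g := by
    intro h
    obtain ⟨S, hSF, hS⟩ := exists_prod_smul_mem_intPart hF hfden h
    obtain ⟨T, hTF, hT⟩ := exists_prod_smul_mem_intPart hF' hgden h
    have hcop : IsCoprime ((∏ k ∈ S \ T, Nat.nth Nat.Prime k : ℕ) : ℤ)
        ((∏ k ∈ T, Nat.nth Nat.Prime k : ℕ) : ℤ) :=
      (prod_primes_coprime Finset.sdiff_disjoint).isCoprime
    have hdvd : ((∏ k ∈ S, Nat.nth Nat.Prime k : ℕ) : ℤ) ∣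
        D * ((∏ k ∈ S \ T, Nat.nth Nat.Prime k : ℕ) : ℤ) := by
      have hKS : S ∩ T ⊆ K := by
        intro k hk
        rw [Finset.mem_inter] at hk
        rw [hK, Set.Finite.mem_toFinset]
        exact ⟨hSF hk.1, hTF hk.2⟩
      rw [hD]
      norm_cast
      rw [← Finset.prod_inter_mul_prod_sdiff S T]
      exact mul_dvd_mul_right (Finset.prod_dvd_prod_of_subset _ _ _ hKS) _
    obtain ⟨u, v, huv⟩ := hcop
    obtain ⟨e, he⟩ := hdvd
    have hsplit : (N * D) • h =
        (u * e) • N • ((∏ k ∈ S, Nat.nth Nat.Prime k : ℕ) : ℤ) • h +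
        (N * D * v) • ((∏ k ∈ T, Nat.nth Nat.Prime k : ℕ) : ℤ) • h := by
      rw [smul_smul, smul_smul, smul_smul, ← add_smul]
      congr 1
      linear_combination (-(N * D)) * huv + N * u * he
    rw [hsplit]
    exact Submodule.add_mem _ (Submodule.smul_mem _ _ (hN _ hS)) (Submodule.smul_mem _ _ hT)
  let mulND : M →ₗ[ℤ] intPart g :=
    (LinearMap.lsmul ℤ M (N * D)).codRestrict _ key
  have hinj : Function.Injective mulND := by
    rw [injective_iff_map_eq_zero]
    intro m hm
    have h1 : (N * D) • m = 0 := congrArg Subtype.val hm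
    apply hg
    ext i
    have h2 := DFunLike.congr_fun (congrArg g h1) i
    simpa [hN0, hD0] using h2
  have : Module.Finite ℤ (intPart g) := Module.Finite.iff_fg.2 (fg_intPart hg hF')
  exact Module.Finite.of_injective mulND hinj

/-- A countable group with two embeddings into direct sums of copies of `ℚ`, over disjoint sets of
indices and with squarefree denominators taken from almost disjoint sets of primes, is free. -/
lemma free_of_two_coordinates [Countable M] {A : ι → Set ℕ}
    (hA : ∀ i j, i ≠ j → (A i ∩ A j).Finite)
    {f g : M →+ (ι →₀ ℚ)} (hf : Function.Injective f) (hg : Function.Injective g)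
    (hdisj : ∀ h h' i, f h i = 0 ∨ g h' i = 0) (hfden : ∀ h i, HasDenIn (A i) (f h i))
    (hgden : ∀ h i, HasDenIn (A i) (g h i)) : Module.Free ℤ M := by
  classical
  refine free_of_countable ?_ fun S => ?_
  · have h0 := isPure_supportedOn f ∅
    convert h0
    symm
    rw [Submodule.eq_bot_iff]
    intro x hx
    apply hf
    ext i
    simpa using hx i
  · let F := S.biUnion fun h => (f h).support
    let F' := S.biUnion fun h => (g h).support
    let P := supportedOn f F ⊓ supportedOn g F'
    refine ⟨P, ?_, ?_, ?_⟩
    · intro h hh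
      refine ⟨fun i hi => ?_, fun i hi => ?_⟩
      · by_contra hne
        exact hi (Finset.mem_biUnion.2 ⟨h, hh, Finsupp.mem_support_iff.2 hne⟩)
      · by_contra hne
        exact hi (Finset.mem_biUnion.2 ⟨h, hh, Finsupp.mem_support_iff.2 hne⟩)
    · rw [← Module.Finite.iff_fg]
      refine finite_of_two_coordinates (F := F) (F' := F') hA
        (f := f.comp P.toAddSubgroup.subtype) (g := g.comp P.toAddSubgroup.subtype)
        (hf.comp Subtype.val_injective) (hg.comp Subtype.val_injective)
        (fun h i hi => h.2.1 i hi) (fun h i hi => h.2.2 i hi) ?_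
        (fun h i => hfden _ i) (fun h i => hgden _ i)
      rw [Finset.disjoint_left]
      intro i hi hi'
      obtain ⟨a, -, ha⟩ := Finset.mem_biUnion.1 hi
      obtain ⟨b, -, hb⟩ := Finset.mem_biUnion.1 hi'
      rcases hdisj a b i with h | h
      · exact Finsupp.mem_support_iff.1 ha h
      · exact Finsupp.mem_support_iff.1 hb h
    · intro n m hn hm
      exact ⟨isPure_supportedOn f _ n m hn hm.1, isPure_supportedOn g _ n m hn hm.2⟩

end Coordinates

/-! ### Freeness of uncountable groups with two incompatible coordinate systems -/

section Uncountable

variable {ι H : Type*} [AddCommGroup H]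

lemma countable_finsupp_supported {R : Type*} [Zero R] [Countable R] {C : Set ι}
    (hC : C.Countable) : {v : ι →₀ R | ∀ i, i ∉ C → v i = 0}.Countable := by
  classical
  have := hC.to_subtype
  refine Set.countable_coe_iff.1 (Function.Injective.countable
    (f := fun v : {v : ι →₀ R | ∀ i, i ∉ C → v i = 0} =>
      (Finsupp.subtypeDomain (· ∈ C) v.1 : C →₀ R)) ?_)
  intro v w hvw
  apply Subtype.ext
  ext i
  by_cases hi : i ∈ C
  · exact DFunLike.congr_fun hvw ⟨i, hi⟩
  · rw [v.2 i hi, w.2 i hi]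

/-- The coordinates outside `U`, as a homomorphism; its kernel is `supportedOn f U`. -/
noncomputable def coordOutside (f : H →+ (ι →₀ ℚ)) (U : Set ι) : H →+ (ι →₀ ℚ) := by
  classical
  exact (Finsupp.filterAddHom (· ∉ U)).comp f

lemma coordOutside_of_mem (f : H →+ (ι →₀ ℚ)) {U : Set ι} {i : ι} (hi : i ∈ U) (h : H) :
    coordOutside f U h i = 0 := by
  classical
  simp [coordOutside, Finsupp.filterAddHom, hi]

lemma coordOutside_of_notMem (f : H →+ (ι →₀ ℚ)) {U : Set ι} {i : ι} (hi : i ∉ U) (h : H) :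
    coordOutside f U h i = f h i := by
  classical
  simp [coordOutside, Finsupp.filterAddHom, hi]

lemma coordOutside_eq_zero_iff (f : H →+ (ι →₀ ℚ)) {U : Set ι} {h : H} :
    coordOutside f U h = 0 ↔ h ∈ supportedOn f U := by
  constructor
  · intro h0 i hi
    rw [← coordOutside_of_notMem f hi, h0, Finsupp.zero_apply]
  · intro hh
    ext i
    by_cases hi : i ∈ U
    · simp [coordOutside_of_mem f hi]
    · simp [coordOutside_of_notMem f hi, hh i hi]

/-- Adding countably many indices to `U` on the `f`-side involves only countably many new indices
on the `g`-side. -/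
def CountableTransfer (f g : H →+ (ι →₀ ℚ)) (U : Set ι) : Prop :=
  ∀ C : Set ι, C.Countable →
    (⋃ h ∈ supportedOn f (U ∪ C), {i | g h i ≠ 0} \ U).Countable

lemma countable_support (g : H →+ (ι →₀ ℚ)) (h : H) : {i | g h i ≠ 0}.Countable := by
  have : {i | g h i ≠ 0} = ((g h).support : Set ι) := by ext; simp
  rw [this]
  exact Finset.countable_toSet _

/-- If `f` and `g` have the same kernel modulo `U`, the `g`-coordinates of `h` outside `U` depend
only on its `f`-coordinates outside `U`, of which there are countably many. -/
lemma countableTransfer_of_eq {f g : H →+ (ι →₀ ℚ)} {U : Set ι}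
    (hU : supportedOn f U = supportedOn g U) : CountableTransfer f g U := by
  classical
  intro C hC
  have hR : (coordOutside f U '' supportedOn f (U ∪ C)).Countable := by
    refine (countable_finsupp_supported hC).mono ?_
    rintro _ ⟨h, hh, rfl⟩ i hi
    by_cases hiU : i ∈ U
    · exact coordOutside_of_mem f hiU h
    · rw [coordOutside_of_notMem f hiU]
      exact hh i (by simp [hiU, hi])
  let c : (ι →₀ ℚ) → H := Function.invFun (coordOutside f U)
  refine Set.Countable.mono ?_ (hR.biUnion fun r _ => countable_support g (c r))
  intro i hi
  simp only [Set.mem_iUnion] at hi ⊢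
  obtain ⟨h, hh, hgi, hiU⟩ := hi
  refine ⟨coordOutside f U h, ⟨h, hh, rfl⟩, ?_⟩
  have hc : coordOutside f U (c (coordOutside f U h)) = coordOutside f U h :=
    Function.invFun_eq ⟨h, rfl⟩
  have h1 : c (coordOutside f U h) - h ∈ supportedOn g U := by
    rw [← hU, ← coordOutside_eq_zero_iff, map_sub, hc, sub_self]
  have h2 := h1 i hiU
  rw [map_sub, Finsupp.sub_apply, sub_eq_zero] at h2
  rw [Set.mem_ofPred, h2]
  exact hgi

lemma countable_supportedOn {f : H →+ (ι →₀ ℚ)} (hk : {h | f h = 0}.Countable) {C : Set ι}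
    (hC : C.Countable) : (supportedOn f C : Set H).Countable := by
  let c : (ι →₀ ℚ) → H := Function.invFun f
  refine Set.Countable.mono ?_ ((countable_finsupp_supported hC).biUnion
    fun r _ => hk.image (fun k => c r + k))
  intro h hh
  simp only [Set.mem_iUnion]
  have hc : f (c (f h)) = f h := Function.invFun_eq ⟨h, rfl⟩
  exact ⟨f h, hh, h - c (f h), by simp [hc], by simp⟩

lemma countableTransfer_empty {f : H →+ (ι →₀ ℚ)} (hk : {h | f h = 0}.Countable)
    (g : H →+ (ι →₀ ℚ)) : CountableTransfer f g ∅ := by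
  intro C hC
  rw [Set.empty_union]
  exact (countable_supportedOn hk hC).biUnion fun h _ => (countable_support g h).mono Set.sdiff_subset

lemma supportedOn_iUnion_le {f g : H →+ (ι →₀ ℚ)} {κ : Type*} [Nonempty κ] {V : κ → Set ι}
    (hV : Directed (· ⊆ ·) V)
    (h : ∀ k, ∃ l, supportedOn f (V k) ≤ supportedOn g (V l)) :
    supportedOn f (⋃ k, V k) ≤ supportedOn g (⋃ k, V k) := by
  intro x hx
  have hs : ((f x).support : Set ι) ⊆ ⋃ k, V k := by
    intro i hi
    by_contra hne
    exact Finsupp.mem_support_iff.1 hi (hx i hne)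
  obtain ⟨k, hk⟩ := hV.exists_mem_subset_of_finset_subset_biUnion hs
  obtain ⟨l, hl⟩ := h k
  refine supportedOn_mono g (Set.subset_iUnion V l) (hl fun i hi => ?_)
  by_contra hne
  exact hi (hk (Finsupp.mem_support_iff.2 hne))

/-- Closing off: every countable enlargement of `U` is contained in a countable enlargement on
which the two coordinate systems cut out the same subgroup. -/
lemma exists_closed_enlargement {f g : H →+ (ι →₀ ℚ)} {U : Set ι}
    (hfg : CountableTransfer f g U) (hgf : CountableTransfer g f U) {C : Set ι}
    (hC : C.Countable) :
    ∃ D : Set ι, C ⊆ D ∧ D.Countable ∧ supportedOn f (U ∪ D) = supportedOn g (U ∪ D) := by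
  let T : Set ι → Set ι := fun E => E ∪
    ((⋃ h ∈ supportedOn f (U ∪ E), {i | g h i ≠ 0} \ U) ∪
      (⋃ h ∈ supportedOn g (U ∪ E), {i | f h i ≠ 0} \ U))
  let D : ℕ → Set ι := fun n => T^[n] C
  have hsucc : ∀ n, D (n + 1) = T (D n) := fun n => Function.iterate_succ_apply' T n C
  have hcount : ∀ n, (D n).Countable := by
    intro n
    induction n with
    | zero => exact hC
    | succ n ih => rw [hsucc]; exact ih.union ((hfg _ ih).union (hgf _ ih))
  have hmono : Monotone D := monotone_nat_of_le_succ fun n => by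
    rw [hsucc]; exact Set.subset_union_left
  have hdir : Directed (· ⊆ ·) (fun n => U ∪ D n) :=
    Monotone.directed_le fun a b hab => Set.union_subset_union_right U (hmono hab)
  refine ⟨⋃ n, D n, Set.subset_iUnion D 0, Set.countable_iUnion hcount, ?_⟩
  rw [Set.union_iUnion]
  apply le_antisymm
  · refine supportedOn_iUnion_le hdir fun n => ⟨n + 1, fun h hh i hi => ?_⟩
    by_contra hne
    refine hi ?_
    rw [hsucc]
    refine Or.inr (Or.inr (Or.inl ?_))
    simp only [Set.mem_iUnion]
    exact ⟨h, hh, hne, fun hU => hi (Or.inl hU)⟩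
  · refine supportedOn_iUnion_le hdir fun n => ⟨n + 1, fun h hh i hi => ?_⟩
    by_contra hne
    refine hi ?_
    rw [hsucc]
    refine Or.inr (Or.inr (Or.inr ?_))
    simp only [Set.mem_iUnion]
    exact ⟨h, hh, hne, fun hU => hi (Or.inl hU)⟩

/-- If `supportedOn f U` is also `supportedOn g U` and `U` contains all common indices, then adding
countably many indices to `U` enlarges this subgroup by a free quotient: `f` and `g` induce on the
quotient two embeddings over disjoint sets of indices. -/
lemma free_quotient {A : ι → Set ℕ} (hA : ∀ i j, i ≠ j → (A i ∩ A j).Finite)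
    {f g : H →+ (ι →₀ ℚ)} {X Y : Set ι} (hfX : ∀ h i, i ∉ X → f h i = 0)
    (hgY : ∀ h i, i ∉ Y → g h i = 0) (hfden : ∀ h i, HasDenIn (A i) (f h i))
    (hgden : ∀ h i, HasDenIn (A i) (g h i)) {U D : Set ι} (hXY : X ∩ Y ⊆ U)
    (hU : supportedOn f U = supportedOn g U)
    (hD : D.Countable) :
    Module.Free ℤ ((supportedOn f (U ∪ D)).map (supportedOn f U).mkQ) := by
  classical
  set N := supportedOn f U with hN
  set P := (supportedOn f (U ∪ D)).map N.mkQ with hP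
  -- the two coordinate systems on `H / N`
  let F : (H ⧸ N) →+ (ι →₀ ℚ) := (N.liftQ (coordOutside f U).toIntLinearMap
    fun h hh => (coordOutside_eq_zero_iff f).2 hh).toAddMonoidHom
  let G : (H ⧸ N) →+ (ι →₀ ℚ) := (N.liftQ (coordOutside g U).toIntLinearMap
    fun h hh => (coordOutside_eq_zero_iff g).2 (hU ▸ hh)).toAddMonoidHom
  have hF : ∀ h, F (N.mkQ h) = coordOutside f U h := fun h => rfl
  have hG : ∀ h, G (N.mkQ h) = coordOutside g U h := fun h => rfl
  have hFinj : Function.Injective F := by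
    rw [injective_iff_map_eq_zero]
    intro x hx
    obtain ⟨h, rfl⟩ := N.mkQ_surjective x
    rw [hF, coordOutside_eq_zero_iff] at hx
    exact (Submodule.Quotient.mk_eq_zero N).2 hx
  have hGinj : Function.Injective G := by
    rw [injective_iff_map_eq_zero]
    intro x hx
    obtain ⟨h, rfl⟩ := N.mkQ_surjective x
    rw [hG, coordOutside_eq_zero_iff, ← hU] at hx
    exact (Submodule.Quotient.mk_eq_zero N).2 hx
  have hden0 : ∀ B : Set ℕ, HasDenIn B 0 := fun B => ⟨∅, by simp, 0, by simp⟩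
  have hFP : Function.Injective (F.comp P.toAddSubgroup.subtype) :=
    hFinj.comp Subtype.val_injective
  have hGP : Function.Injective (G.comp P.toAddSubgroup.subtype) :=
    hGinj.comp Subtype.val_injective
  have : Countable P := by
    have hr : (Set.range (F.comp P.toAddSubgroup.subtype)).Countable := by
      refine (countable_finsupp_supported hD).mono ?_
      rintro _ ⟨⟨x, hx⟩, rfl⟩ i hi
      obtain ⟨h, hh, rfl⟩ := hx
      change coordOutside f U h i = 0
      by_cases hiU : i ∈ U
      · exact coordOutside_of_mem f hiU h
      · rw [coordOutside_of_notMem f hiU]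
        exact hh i (by simp [hiU, hi])
    have := hr.to_subtype
    exact Function.Injective.countable
      (f := Set.rangeFactorization (F.comp P.toAddSubgroup.subtype))
      (fun x y hxy => hFP (congrArg Subtype.val hxy))
  refine free_of_two_coordinates hA hFP hGP ?_ ?_ ?_
  · rintro ⟨x, hx⟩ ⟨y, hy⟩ i
    obtain ⟨h, rfl⟩ := N.mkQ_surjective x
    obtain ⟨k, rfl⟩ := N.mkQ_surjective y
    change coordOutside f U h i = 0 ∨ coordOutside g U k i = 0
    by_cases hiU : i ∈ U
    · exact Or.inl (coordOutside_of_mem f hiU h)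
    · rw [coordOutside_of_notMem f hiU, coordOutside_of_notMem g hiU]
      by_cases hiX : i ∈ X
      · exact Or.inr (hgY k i fun hiY => hiU (hXY ⟨hiX, hiY⟩))
      · exact Or.inl (hfX h i hiX)
  · rintro ⟨x, hx⟩ i
    obtain ⟨h, rfl⟩ := N.mkQ_surjective x
    change HasDenIn (A i) (coordOutside f U h i)
    by_cases hiU : i ∈ U
    · rw [coordOutside_of_mem f hiU]; exact hden0 _
    · rw [coordOutside_of_notMem f hiU]; exact hfden h i
  · rintro ⟨x, hx⟩ i
    obtain ⟨h, rfl⟩ := N.mkQ_surjective x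
    change HasDenIn (A i) (coordOutside g U h i)
    by_cases hiU : i ∈ U
    · rw [coordOutside_of_mem g hiU]; exact hden0 _
    · rw [coordOutside_of_notMem g hiU]; exact hgden h i

/-- A subgroup `H` of `ℤ^ω` with two coordinate systems, each with countable kernel and squarefree
denominators taken from the almost disjoint sets `A i`, and with countably many indices in common,
is free: by Zorn's lemma there is a maximal closed subgroup with a basis, and a proper one would
have a countable closed extension with free quotient. -/
lemma free_of_two_coordinates_countable_ker {A : ι → Set ℕ}
    (hA : ∀ i j, i ≠ j → (A i ∩ A j).Finite)
    (φ : H →+ (ℕ → ℤ)) (hφ : Function.Injective φ)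
    {f g : H →+ (ι →₀ ℚ)} {X Y : Set ι} (hXY : (X ∩ Y).Countable)
    (hfX : ∀ h i, i ∉ X → f h i = 0)
    (hgY : ∀ h i, i ∉ Y → g h i = 0) (hfden : ∀ h i, HasDenIn (A i) (f h i))
    (hgden : ∀ h i, HasDenIn (A i) (g h i))
    (hkf : {h | f h = 0}.Countable) (hkg : {h | g h = 0}.Countable) : Module.Free ℤ H := by
  classical
  let 𝒮 : Set (Set H × Set ι) := {p | LinearIndepOn ℤ id p.1 ∧
    Submodule.span ℤ p.1 = supportedOn f p.2 ∧ supportedOn f p.2 = supportedOn g p.2 ∧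
    X ∩ Y ⊆ p.2}
  obtain ⟨p₀, hp₀⟩ : ∃ p, p ∈ 𝒮 := by
    obtain ⟨D, hCD, hD, hfg⟩ := exists_closed_enlargement (countableTransfer_empty hkf g)
      (countableTransfer_empty hkg f) hXY
    rw [Set.empty_union] at hfg
    have : Countable (supportedOn f D) := (countable_supportedOn hkf hD).to_subtype
    have hfree : Module.Free ℤ (supportedOn f D) :=
      free_of_countable_of_injective (φ.comp (supportedOn f D).toAddSubgroup.subtype)
        (hφ.comp Subtype.val_injective)
    let b := Module.Free.chooseBasis ℤ (supportedOn f D)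
    have hb : LinearIndependent ℤ (fun k => (b k : H)) :=
      b.linearIndependent.map' (Submodule.subtype _) (Submodule.ker_subtype _)
    refine ⟨(Set.range (fun k => (b k : H)), D), hb.linearIndepOn_id, ?_, hfg, hCD⟩
    have h2 := congrArg (Submodule.map (supportedOn f D).subtype) b.span_eq
    rw [Submodule.map_span, ← Set.range_comp, Submodule.map_top, Submodule.range_subtype] at h2
    exact h2
  obtain ⟨⟨B, U⟩, -, ⟨⟨hB, hspan, hU, hXYU⟩, hmax⟩⟩ := zorn_le_nonempty₀ 𝒮 (by
    intro c hc hchain y hy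
    have : Nonempty c := ⟨⟨y, hy⟩⟩
    have hdir : Directed (· ≤ ·) (fun p : c => p.1) := hchain.directed
    have hdirU : Directed (· ⊆ ·) (fun p : c => p.1.2) := hdir.mono_comp _ fun _ _ h => h.2
    have hdirB : Directed (· ⊆ ·) (fun p : c => p.1.1) := hdir.mono_comp _ fun _ _ h => h.1
    refine ⟨(⋃ p : c, p.1.1, ⋃ p : c, p.1.2), ⟨?_, ?_, ?_, ?_⟩, ?_⟩
    · exact linearIndepOn_iUnion_of_directed hdirB fun p => (hc p.2).1
    · apply le_antisymm
      · rw [Submodule.span_le, Set.iUnion_subset_iff]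
        intro p x hx
        refine supportedOn_mono f (Set.subset_iUnion (fun p : c => p.1.2) p) ?_
        rw [← (hc p.2).2.1]
        exact Submodule.subset_span hx
      · intro x hx
        have hs : ((f x).support : Set ι) ⊆ ⋃ p : c, p.1.2 := by
          intro i hi
          by_contra hne
          exact Finsupp.mem_support_iff.1 hi (hx i hne)
        obtain ⟨p, hp⟩ := hdirU.exists_mem_subset_of_finset_subset_biUnion hs
        have hxp : x ∈ supportedOn f p.1.2 := fun i hi => by
          by_contra hne
          exact hi (hp (Finsupp.mem_support_iff.2 hne))
        rw [← (hc p.2).2.1] at hxp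
        exact Submodule.span_mono (Set.subset_iUnion (fun p : c => p.1.1) p) hxp
    · exact le_antisymm
        (supportedOn_iUnion_le hdirU fun p => ⟨p, (hc p.2).2.2.1.le⟩)
        (supportedOn_iUnion_le hdirU fun p => ⟨p, (hc p.2).2.2.1.ge⟩)
    · exact (hc hy).2.2.2.trans (Set.subset_iUnion (fun p : c => p.1.2) ⟨y, hy⟩)
    · intro p hp
      exact ⟨Set.subset_iUnion (fun p : c => p.1.1) ⟨p, hp⟩,
        Set.subset_iUnion (fun p : c => p.1.2) ⟨p, hp⟩⟩) p₀ hp₀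
  have htop : ∀ h, h ∈ supportedOn f U := by
    intro h
    obtain ⟨D, hCD, hD, hfg⟩ := exists_closed_enlargement (countableTransfer_of_eq hU)
      (countableTransfer_of_eq hU.symm) (countable_support f h)
    have hle : Submodule.span ℤ B ≤ supportedOn f (U ∪ D) :=
      hspan.le.trans (supportedOn_mono f Set.subset_union_left)
    have hfree := free_quotient hA hfX hgY hfden hgden hXYU hU hD
    obtain ⟨B', hBB', hB', hspan'⟩ := exists_basis_extension hB hle (by rw [hspan]; exact hfree)
    have hlt := hmax (y := (B', U ∪ D)) ⟨hB', hspan', hfg, hXYU.trans Set.subset_union_left⟩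
      ⟨hBB', Set.subset_union_left⟩
    refine supportedOn_mono f hlt.2 fun i hi => ?_
    by_contra hne
    exact hi (Or.inr (hCD hne))
  refine Module.Free.of_basis (Module.Basis.mk hB (fun h _ => ?_))
  have := htop h
  rw [← hspan] at this
  simpa using this

end Uncountable

/-! ### The groups attached to almost disjoint sets -/

section Construction

open Classical in
/-- The element of `ℤ^ω` supported on `b` whose value at `n ∈ b` is the product of the primes with
index in `b` below `n`. Modulo finitely supported functions it is divisible by each prime with
index in `b`. -/
noncomputable def branchVec (b : Set ℕ) : ℕ → ℤ := fun n =>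
  if n ∈ b then ((∏ k ∈ (Finset.range n).filter (· ∈ b), Nat.nth Nat.Prime k : ℕ) : ℤ) else 0

lemma branchVec_ne_zero_iff {b : Set ℕ} {n : ℕ} : branchVec b n ≠ 0 ↔ n ∈ b := by
  classical
  unfold branchVec
  split_ifs with h
  · exact iff_of_true (Int.natCast_ne_zero.2 (prod_primes_ne_zero _)) h
  · simp [h]

/-- The inclusion `ℤ^ω → ℚ^ω`. -/
def castVec : (ℕ → ℤ) →+ (ℕ → ℚ) where
  toFun g n := g n
  map_zero' := by ext; simp
  map_add' := by intros; ext; simp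

lemma castVec_apply (g : ℕ → ℤ) (n : ℕ) : castVec g n = (g n : ℚ) := rfl

lemma castVec_injective : Function.Injective castVec := by
  intro x y h
  ext n
  have := congrFun h n
  simpa [castVec_apply] using this

variable {ι : Type} (b : ι → Set ℕ)

/-- The map `(q, e) ↦ ∑ qᵢ xᵢ + e`, where `xᵢ` is `branchVec (b i)` and `e` is finitely
supported. -/
noncomputable def comb : ((ι →₀ ℚ) × (ℕ →₀ ℚ)) →ₗ[ℚ] (ℕ → ℚ) :=
  LinearMap.coprod (Finsupp.linearCombination ℚ (fun i => castVec (branchVec (b i))))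
    Finsupp.lcoeFun

lemma comb_apply (q : ι →₀ ℚ) (e : ℕ →₀ ℚ) (n : ℕ) :
    comb b (q, e) n = (q.sum fun i c => c * (branchVec (b i) n : ℚ)) + e n := by
  simp [comb, Finsupp.linearCombination_apply, Finsupp.sum, castVec_apply, Finsupp.lcoeFun]

/-- The group `G_X`: the elements of `ℤ^ω` which modulo finitely supported functions are rational
linear combinations of the `branchVec (b i)` with `i ∈ X`. -/
noncomputable def grp (X : Set ι) : AddSubgroup (ℕ → ℤ) :=
  (((Finsupp.supported ℚ ℚ X).prod ⊤).map (comb b)).toAddSubgroup.comap castVec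

variable {b}

lemma mem_grp {X : Set ι} {g : ℕ → ℤ} :
    g ∈ grp b X ↔ ∃ q ∈ Finsupp.supported ℚ ℚ X, ∃ e, comb b (q, e) = castVec g := by
  simp [grp, Submodule.mem_map, Submodule.mem_prod]

lemma grp_pure (X : Set ι) (n : ℤ) (x g : ℕ → ℤ) (hg : g ∈ grp b X) (hx : n • x = g) :
    ∃ g' ∈ grp b X, n • g' = g := by
  by_cases hn : n = 0
  · refine ⟨0, zero_mem _, ?_⟩
    rw [← hx, hn, zero_smul, zero_smul]
  · refine ⟨x, ?_, hx⟩
    have h1 : castVec g ∈ ((Finsupp.supported ℚ ℚ X).prod ⊤).map (comb b) := hg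
    have h2 : castVec g = (n : ℚ) • castVec x := by
      rw [← hx, map_zsmul, Int.cast_smul_eq_zsmul]
    rw [h2] at h1
    exact (Submodule.smul_mem_iff _ (by exact_mod_cast hn)).1 h1

lemma branchVec_mem_grp {X : Set ι} {i : ι} (hi : i ∈ X) : branchVec (b i) ∈ grp b X := by
  refine mem_grp.2 ⟨Finsupp.single i 1, Finsupp.single_mem_supported ℚ 1 hi, 0, ?_⟩
  ext n
  simp [comb_apply, castVec_apply]

lemma mem_grp_of_finite (X : Set ι) {g : ℕ → ℤ} (hg : (Function.support g).Finite) :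
    g ∈ grp b X := by
  refine mem_grp.2 ⟨0, zero_mem _, Finsupp.ofSupportFinite (castVec g) (hg.subset ?_), ?_⟩
  · intro n hn
    simpa [castVec_apply] using hn
  · ext n
    simp [comb_apply, Finsupp.ofSupportFinite_coe]

/-- At some point of `b i` a combination is its `i`-th coordinate times `branchVec (b i)`, since
`b i` meets each other `b j` and the support of `e` in a finite set. -/
lemma exists_comb_eq
    (hinf : ∀ i, (b i).Infinite) (hA : ∀ i j, i ≠ j → (b i ∩ b j).Finite)
    (q : ι →₀ ℚ) (e : ℕ →₀ ℚ) (i : ι) :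
    ∃ n ∈ b i, comb b (q, e) n = q i * (branchVec (b i) n : ℚ) := by
  classical
  have hbad : ((e.support : Set ℕ) ∪ ⋃ j ∈ q.support.erase i, b i ∩ b j).Finite :=
    e.support.finite_toSet.union ((q.support.erase i).finite_toSet.biUnion fun j hj =>
      hA i j (Finset.ne_of_mem_erase hj).symm)
  obtain ⟨n, hn, hnbad⟩ := (hinf i).exists_notMem_finite hbad
  refine ⟨n, hn, ?_⟩
  simp only [Set.mem_union, Set.mem_iUnion, not_or, not_exists] at hnbad
  have he : e n = 0 := by simpa using hnbad.1
  rw [comb_apply, he, add_zero, Finsupp.sum, Finset.sum_eq_single i]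
  · intro j hj hji
    have : n ∉ b j := fun hnj => hnbad.2 j (Finset.mem_erase.2 ⟨hji, hj⟩) ⟨hn, hnj⟩
    have h0 : branchVec (b j) n = 0 := by
      by_contra hne
      exact this (branchVec_ne_zero_iff.1 hne)
    simp [h0]
  · intro hi
    simp [Finsupp.notMem_support_iff.1 hi]

lemma comb_injective
    (hinf : ∀ i, (b i).Infinite) (hA : ∀ i j, i ≠ j → (b i ∩ b j).Finite) :
    Function.Injective (comb b) := by
  rw [injective_iff_map_eq_zero]
  rintro ⟨q, e⟩ h
  have hq : q = 0 := by
    ext i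
    obtain ⟨n, hn, hc⟩ := exists_comb_eq hinf hA q e i
    rw [h] at hc
    have h0 : (branchVec (b i) n : ℚ) ≠ 0 := by exact_mod_cast branchVec_ne_zero_iff.2 hn
    simpa [h0] using hc.symm
  subst hq
  congr 1
  ext n
  have := congrFun h n
  simpa [comb_apply] using this

lemma hasDenIn_of_comb_eq
    (hinf : ∀ i, (b i).Infinite) (hA : ∀ i j, i ≠ j → (b i ∩ b j).Finite)
    {q : ι →₀ ℚ} {e : ℕ →₀ ℚ} {g : ℕ → ℤ}
    (h : comb b (q, e) = castVec g) (i : ι) : HasDenIn (b i) (q i) := by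
  classical
  obtain ⟨n, hn, hc⟩ := exists_comb_eq hinf hA q e i
  refine ⟨(Finset.range n).filter (· ∈ b i), by intro k; simp, g n, ?_⟩
  rw [h, castVec_apply, branchVec, if_pos hn, Int.cast_natCast] at hc
  rw [hc, mul_comm]

/-- A group mapping injectively into `grp b X` acquires a coordinate system indexed by `X`. -/
lemma exists_coordinates
    (hinf : ∀ i, (b i).Infinite) (hA : ∀ i j, i ≠ j → (b i ∩ b j).Finite)
    {X : Set ι} {H : Type} [AddCommGroup H] (φ : H →+ (ℕ → ℤ))
    (hφ : Function.Injective φ) (hX : ∀ h, φ h ∈ grp b X) :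
    ∃ f : H →+ (ι →₀ ℚ), (∀ h i, i ∉ X → f h i = 0) ∧ (∀ h i, HasDenIn (b i) (f h i)) ∧
      {h | f h = 0}.Countable := by
  choose q hq e he using fun h => mem_grp.1 (hX h)
  have hadd : ∀ x y, q (x + y) = q x + q y := by
    intro x y
    have : comb b (q (x + y), e (x + y)) = comb b ((q x, e x) + (q y, e y)) := by
      rw [map_add, he, he, he, map_add, map_add]
    exact congrArg Prod.fst (comb_injective hinf hA this)
  refine ⟨AddMonoidHom.mk' q hadd, ?_, ?_, ?_⟩
  · intro h i hi
    by_contra hne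
    exact hi ((Finsupp.mem_supported ℚ _).1 (hq h) (Finsupp.mem_support_iff.2 hne))
  · exact fun h i => hasDenIn_of_comb_eq hinf hA (he h) i
  · refine Set.countable_coe_iff.1 (Function.Injective.countable
      (f := fun h : {h | AddMonoidHom.mk' q hadd h = 0} => e h.1) ?_)
    intro x y hxy
    have hx : q x.1 = 0 := x.2
    have hy : q y.1 = 0 := y.2
    have hxy : e x.1 = e y.1 := hxy
    apply Subtype.ext
    apply hφ
    apply castVec_injective
    rw [← he, ← he, hx, hy, hxy]

/-- Groups attached to index sets with countable intersection are almost disjoint. -/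
lemma free_of_embeddings
    (hinf : ∀ i, (b i).Infinite) (hA : ∀ i j, i ≠ j → (b i ∩ b j).Finite)
    {X Y : Set ι} (hXY : (X ∩ Y).Countable) {H : Type} [AddCommGroup H]
    (φ : H →+ (ℕ → ℤ)) (hφ : Function.Injective φ) (hX : ∀ h, φ h ∈ grp b X)
    (ψ : H →+ (ℕ → ℤ)) (hψ : Function.Injective ψ) (hY : ∀ h, ψ h ∈ grp b Y) :
    Module.Free ℤ H := by
  obtain ⟨f, hf1, hf2, hf3⟩ := exists_coordinates hinf hA φ hφ hX
  obtain ⟨g, hg1, hg2, hg3⟩ := exists_coordinates hinf hA ψ hψ hY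
  exact free_of_two_coordinates_countable_ker hA φ hφ hXY hf1 hg1 hf2 hg2 hf3 hg3

lemma branchVec_index_injective
    (hinf : ∀ i, (b i).Infinite) (hA : ∀ i j, i ≠ j → (b i ∩ b j).Finite) :
    Function.Injective (fun i => branchVec (b i)) := by
  intro i j hij
  by_contra hne
  have : b i = b j := by
    ext n
    rw [← branchVec_ne_zero_iff, ← branchVec_ne_zero_iff]
    exact not_congr (by rw [show branchVec (b i) = branchVec (b j) from hij])
  have h2 := hA i j hne
  rw [← this, Set.inter_self] at h2
  exact hinf i h2

open Cardinal in
lemma mk_grp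
    (hinf : ∀ i, (b i).Infinite) (hA : ∀ i j, i ≠ j → (b i ∩ b j).Finite)
    {X : Set ι} (hX : ℵ₀ ≤ #X) : #(grp b X) = #X := by
  apply le_antisymm
  · choose q hq e he using fun g : grp b X => mem_grp.1 g.2
    have hinj : Function.Injective
        (fun g : grp b X => ((⟨q g, hq g⟩ : Finsupp.supported ℚ ℚ X), e g)) := by
      intro x y hxy
      have h1 : q x = q y := congrArg (fun p => p.1.1) hxy
      have h2 : e x = e y := congrArg Prod.snd hxy
      apply Subtype.ext
      apply castVec_injective
      rw [← he, ← he, h1, h2]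
    have hinfX : Infinite X := infinite_iff.2 hX
    refine (mk_le_of_injective hinj).trans ?_
    rw [mk_prod, lift_id, lift_id, (Finsupp.supportedEquivFinsupp X).toEquiv.cardinal_eq,
      mk_finsupp_of_infinite, mk_finsupp_of_infinite]
    simp [hX]
  · refine mk_le_of_injective (f := fun i : X => (⟨branchVec (b i), branchVec_mem_grp i.2⟩ :
      grp b X)) ?_
    intro i j hij
    exact Subtype.ext (branchVec_index_injective hinf hA (congrArg Subtype.val hij))

/-- `grp b X` is not free for uncountable `X`: some coordinate of some `branchVec (b i)` with
respect to a basis vanishes on all finitely supported functions, so it would be a nonzero integer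
divisible by infinitely many primes. -/
lemma not_free_grp
    (hinf : ∀ i, (b i).Infinite) (hA : ∀ i j, i ≠ j → (b i ∩ b j).Finite)
    {X : Set ι} (hX : ¬ X.Countable) : ¬ Module.Free ℤ (grp b X) := by
  classical
  intro hfree
  let β := Module.Free.chooseBasis ℤ (grp b X)
  let E : Set (grp b X) := {g | (Function.support g.1).Finite}
  have hE : E.Countable := by
    refine Set.countable_coe_iff.1 (Function.Injective.countable
      (f := fun g : E => Finsupp.ofSupportFinite g.1.1 g.2) ?_)
    intro x y hxy
    apply Subtype.ext
    apply Subtype.ext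
    ext n
    exact DFunLike.congr_fun hxy n
  let K : Set (Module.Free.ChooseBasisIndex ℤ (grp b X)) := ⋃ e ∈ E, (β.repr e).support
  have hK : K.Countable := hE.biUnion fun e _ => Finset.countable_toSet _
  let v : X → grp b X := fun i => ⟨branchVec (b i), branchVec_mem_grp i.2⟩
  have hv : Function.Injective v := fun i j hij =>
    Subtype.ext (branchVec_index_injective hinf hA (congrArg Subtype.val hij))
  obtain ⟨i, k, hkK, hk⟩ : ∃ i : X, ∃ k, k ∉ K ∧ β.repr (v i) k ≠ 0 := by
    by_contra! hcon
    apply hX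
    have := (countable_finsupp_supported (R := ℤ) hK).to_subtype
    refine Set.countable_coe_iff.1 (Function.Injective.countable
      (f := fun i : X => (⟨β.repr (v i), hcon i⟩ : {w : _ →₀ ℤ | ∀ k, k ∉ K → w k = 0})) ?_)
    intro i j hij
    exact hv (β.repr.injective (congrArg Subtype.val hij))
  refine hinf i ((Set.finite_Iic (β.repr (v i) k).natAbs).subset fun m hm => ?_)
  -- split off the part of `branchVec (b i)` up to `m`; the rest is divisible by the `m`-th prime
  let p := Nat.nth Nat.Prime m
  let e : ℕ → ℤ := fun n => if n ≤ m then branchVec (b i) n else 0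
  have heE : (Function.support e).Finite := (Set.finite_Iic m).subset fun n hn => by
    by_contra hnm
    exact hn (if_neg hnm)
  let e' : grp b X := ⟨e, mem_grp_of_finite X heE⟩
  have hdvd : ∀ n, (p : ℤ) ∣ branchVec (b i) n - e n := by
    intro n
    by_cases hnm : n ≤ m
    · simp [e, hnm]
    · by_cases hn : n ∈ b i
      · simp only [e, hnm, if_false, sub_zero, branchVec, if_pos hn]
        exact_mod_cast Finset.dvd_prod_of_mem (Nat.nth Nat.Prime)
          (Finset.mem_filter.2 ⟨Finset.mem_range.2 (not_le.1 hnm), hm⟩)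
      · simp [e, hnm, branchVec, hn]
  choose x hx using hdvd
  obtain ⟨g', hg', hgx⟩ := grp_pure X (p : ℤ) x (v i - e' : grp b X) (v i - e').2 (by
    ext n
    simpa [v, e'] using (hx n).symm)
  have hdecomp : v i = e' + (p : ℤ) • (⟨g', hg'⟩ : grp b X) := by
    apply Subtype.ext
    simp only [AddSubgroup.coe_add, AddSubgroup.coe_zsmul, hgx, AddSubgroup.coe_sub]
    abel
  have he'k : β.repr e' k = 0 := by
    by_contra hne
    exact hkK (Set.mem_biUnion (show e' ∈ E from heE) (Finsupp.mem_support_iff.2 hne))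
  have hpk : (p : ℤ) ∣ β.repr (v i) k := by
    refine ⟨β.repr ⟨g', hg'⟩ k, ?_⟩
    rw [hdecomp, map_add, Finsupp.add_apply, he'k, zero_add, map_zsmul, Finsupp.smul_apply,
      smul_eq_mul]
  have h1 : p ≤ (β.repr (v i) k).natAbs :=
    Nat.le_of_dvd (Int.natAbs_pos.2 hk) (Int.natCast_dvd.1 hpk)
  exact ((Nat.nth_strictMono Nat.infinite_setOfPred_prime).le_apply).trans h1

end Construction

/-! ### Almost disjoint families -/

/-- The set of (codes of) finite initial segments of `r`. -/
def branch (r : ℕ → Bool) : Set ℕ :=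
  Set.range fun m => Encodable.encode ((List.range m).map r)

lemma branch_infinite (r : ℕ → Bool) : (branch r).Infinite := by
  refine Set.infinite_range_of_injective fun m n h => ?_
  simpa using congrArg List.length (Encodable.encode_injective h)

lemma branch_almostDisjoint (r s : ℕ → Bool) (h : r ≠ s) : (branch r ∩ branch s).Finite := by
  obtain ⟨i, hi⟩ := Function.ne_iff.1 h
  refine ((Set.finite_Iic i).image
    (fun m => Encodable.encode ((List.range m).map r))).subset ?_
  rintro _ ⟨⟨m, rfl⟩, n, hn⟩
  refine ⟨m, ?_, rfl⟩
  by_contra him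
  rw [Set.mem_Iic, not_le] at him
  have hl := Encodable.encode_injective hn
  have hmn : n = m := by simpa using congrArg List.length hl
  subst hmn
  exact hi (List.map_inj_left.1 hl i (List.mem_range.2 him)).symm

open Cardinal in
/-- There are `2^ℵ₁` sets of reals of size `ℵ₁` with pairwise countable intersections: to
`η ⊆ ω₁` is attached the set of its initial segments `(δ, η ∩ δ)`, each coded by a real. -/
lemma exists_family : ∃ (I : Type) (X : I → Set (ℕ → Bool)), #I = 2 ^ ℵ₁ ∧ (∀ α, #(X α) = ℵ₁) ∧
    ∀ α β, α ≠ β → (X α ∩ X β).Countable := by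
  let W := (ℵ₁ : Cardinal.{0}).ord.ToType
  have hW : #W = ℵ₁ := mk_ord_toType _
  have hIio : ∀ δ : W, (Set.Iio δ).Countable := fun δ => by
    rw [← le_aleph0_iff_set_countable, ← Order.lt_succ_iff, succ_aleph0]
    have h := mk_Iio_lt δ (by rw [hW, Ordinal.type_toType])
    rwa [hW] at h
  have hcode : ∀ δ : W, ∃ e : W → ℕ, Set.InjOn e (Set.Iio δ) := fun δ =>
    Set.countable_iff_exists_injOn.1 (hIio δ)
  choose e he using hcode
  have hcard : #(W × Set ℕ) ≤ #(ℕ → Bool) := by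
    rw [mk_prod, hW, mk_set, ← power_def]
    simpa using mul_le_of_le aleph0_le_continuum aleph_one_le_continuum le_rfl
  obtain ⟨j⟩ := hcard
  let code : Set W → W → (ℕ → Bool) := fun η δ => j (δ, e δ '' (η ∩ Set.Iio δ))
  have hfst : ∀ η ν δ ε, code η δ = code ν ε → δ = ε := fun η ν δ ε h =>
    congrArg Prod.fst (j.injective h)
  refine ⟨Set W, fun η => Set.range (code η), ?_, ?_, ?_⟩
  · rw [mk_set, hW]
  · intro η
    rw [mk_range_eq _ (fun δ ε h => hfst η η δ ε h), hW]
  · intro η ν hne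
    obtain ⟨δ₀, hδ₀⟩ : ∃ δ₀, ¬ (δ₀ ∈ η ↔ δ₀ ∈ ν) := by
      by_contra! hcon
      exact hne (Set.ext hcon)
    have hIic : (Set.Iic δ₀).Countable := by
      rw [← Set.Iio_insert]
      exact (hIio δ₀).insert _
    refine (hIic.image (code η)).mono ?_
    rintro _ ⟨⟨δ, rfl⟩, ε, hε⟩
    refine ⟨δ, ?_, rfl⟩
    by_contra hlt
    rw [Set.mem_Iic, not_le] at hlt
    obtain rfl : ε = δ := hfst _ _ _ _ hε
    have h2 : e ε '' (ν ∩ Set.Iio ε) = e ε '' (η ∩ Set.Iio ε) :=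
      congrArg Prod.snd (j.injective hε)
    rw [(he ε).image_eq_image_iff Set.inter_subset_right Set.inter_subset_right] at h2
    have h3 := Set.ext_iff.1 h2 δ₀
    have hlt' : δ₀ ∈ Set.Iio ε := hlt
    simp only [Set.mem_inter_iff, hlt', and_true] at h3
    exact hδ₀ h3.symm

end BaerSpecker

/-- There exists a family `(G_α)_{α ∈ I}` of subgroups of the Baer–Specker
group `ℤ^ω = ℕ → ℤ`, indexed by a set `I` of cardinality `2^{ℵ₁}`, such that each `G_α`
is pure in `ℤ^ω`, has cardinality `ℵ₁`, is not free, and any two distinct members are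
almost disjoint (hence have free intersection and are non-isomorphic). -/
theorem stmt0 :
    ∃ (I : Type) (G : I → AddSubgroup (ℕ → ℤ)),
      Cardinal.mk I = 2 ^ Cardinal.aleph 1 ∧
      (∀ α, ∀ (n : ℤ) (x g : ℕ → ℤ), g ∈ G α → n • x = g → ∃ g' ∈ G α, n • g' = g) ∧
      (∀ α, Cardinal.mk (G α) = Cardinal.aleph 1) ∧
      (∀ α, ¬ Module.Free ℤ (G α)) ∧
      (∀ α β, α ≠ β →
        (∀ (H : Type) [AddCommGroup H],
          (∃ φ : H →+ (ℕ → ℤ), Function.Injective φ ∧ ∀ h, φ h ∈ G α) →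
          (∃ ψ : H →+ (ℕ → ℤ), Function.Injective ψ ∧ ∀ h, ψ h ∈ G β) →
          Module.Free ℤ H) ∧
        Module.Free ℤ (↥(G α ⊓ G β)) ∧
        ¬ Nonempty ((G α) ≃+ (G β))) := by
  classical
  obtain ⟨I, X, hI, hX, hXX⟩ := BaerSpecker.exists_family
  have hfree : ∀ α β, α ≠ β → ∀ (H : Type) [AddCommGroup H],
      (∃ φ : H →+ (ℕ → ℤ), Function.Injective φ ∧
        ∀ h, φ h ∈ BaerSpecker.grp BaerSpecker.branch (X α)) →
      (∃ ψ : H →+ (ℕ → ℤ), Function.Injective ψ ∧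
        ∀ h, ψ h ∈ BaerSpecker.grp BaerSpecker.branch (X β)) →
      Module.Free ℤ H := by
    rintro α β hαβ H _ ⟨φ, hφ, hα⟩ ⟨ψ, hψ, hβ⟩
    exact BaerSpecker.free_of_embeddings BaerSpecker.branch_infinite
      BaerSpecker.branch_almostDisjoint (hXX α β hαβ) φ hφ hα ψ hψ hβ
  have hnot : ∀ α, ¬ Module.Free ℤ (BaerSpecker.grp BaerSpecker.branch (X α)) := by
    intro α
    refine BaerSpecker.not_free_grp BaerSpecker.branch_infinite
      BaerSpecker.branch_almostDisjoint ?_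
    rw [← Cardinal.le_aleph0_iff_set_countable, hX, not_le]
    exact Cardinal.aleph0_lt_aleph_one
  refine ⟨I, fun α => BaerSpecker.grp BaerSpecker.branch (X α), hI,
    fun α => BaerSpecker.grp_pure (X α), fun α => ?_, hnot,
    fun α β hαβ => ⟨hfree α β hαβ, ?_, ?_⟩⟩
  · rw [BaerSpecker.mk_grp BaerSpecker.branch_infinite BaerSpecker.branch_almostDisjoint, hX]
    rw [hX]
    exact Cardinal.aleph0_lt_aleph_one.le
  · exact hfree α β hαβ _
      ⟨AddSubgroup.subtype _, Subtype.val_injective, fun h => h.2.1⟩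
      ⟨AddSubgroup.subtype _, Subtype.val_injective, fun h => h.2.2⟩
  · rintro ⟨e⟩
    exact hnot α (hfree α β hαβ _
      ⟨AddSubgroup.subtype _, Subtype.val_injective, fun h => h.2⟩
      ⟨(AddSubgroup.subtype _).comp e.toAddMonoidHom,
        Subtype.val_injective.comp e.injective, fun h => (e h).2⟩)
end

section
/- Let σ, μ, λ be cardinals and X, Y sets with |Y| = μ, |X| = λ, μ^{<σ} = μ, and μ < λ ≤ 2^μ. Then there exist functions h_α : X → Y for α < μ such that for every partial function f from X to Y of cardinality less than σ there is some α < μ with f ⊆ h_α. -/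
universe u

/-!
The substance is the case `μ` infinite, where `σ` may be enlarged to be infinite because
`μ ^< ℵ₀ = μ`. Since `|X| ≤ 2 ^ μ`, identify the points of `X` with distinct subsets of `Y`. A set
`D ⊆ X` with `|D| < σ` is separated by fewer than `σ` points of `Y`: pick, for each pair of distinct
members of `D`, a point of `Y` in their symmetric difference. The members of `D` then have distinct
traces on these chosen points, so a partial function on `D` is extended by the total function that
reads off the trace of `x` and looks it up in a table of size less than `σ`. Such tables (`EKCode`) are counted by `μ ^< σ = μ`, which is `mk_ekIndex_le`;
the extension property is `exists_ekFun_eq`.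

If `μ` is finite and at least `2`, then `μ ^< σ = μ` forces `σ ≤ 2`, so that the constant functions
suffice; `μ = 0` forces `σ = 0`, and for `μ = 1` there is only one function to consider.
-/

open Cardinal

/-- A lookup table of size `N`: a family of `N` test points of `Y`, and `N` rows, each consisting of
a trace (a subset of the test points) and a value in `Y`. -/
abbrev EKCode (Y N : Type u) : Type u := (N → Y) × (N → Set N) × (N → Y)

open Classical in
/-- The total function defined by a lookup table: `x` is sent to the value in some row whose trace is
the set of test points lying in `φ x`, and to `y₀` if there is no such row. -/
noncomputable def ekFun {X Y N : Type u} (φ : X → Set Y) (y₀ : Y) (c : EKCode Y N) (x : X) : Y :=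
  if hx : ∃ n, c.2.1 n = {m | c.1 m ∈ φ x} then c.2.2 hx.choose else y₀

/-- A partial function on `D` is extended by a table of size `|D × D|`, the test points being chosen
to separate all pairs of members of `D`. -/
theorem exists_ekFun_eq {X Y N : Type u} (φ : X → Set Y) (hφ : Function.Injective φ) (y₀ : Y)
    (D : Set X) (f : D → Y) (e : D × D ≃ N) :
    ∃ c : EKCode Y N, ∀ x : D, ekFun φ y₀ c x = f x := by
  have hsep : ∀ p : D × D, ∃ y : Y, p.1 ≠ p.2 → ¬ (y ∈ φ p.1 ↔ y ∈ φ p.2) := by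
    intro p
    by_cases hp : p.1 = p.2
    · exact ⟨y₀, fun h => absurd hp h⟩
    · by_contra! hcon
      exact hp (Subtype.ext (hφ (Set.ext fun y => (hcon y).2)))
  choose a ha using hsep
  refine ⟨⟨fun m => a (e.symm m), fun n => {m | a (e.symm m) ∈ φ (e.symm n).1},
    fun n => f (e.symm n).1⟩, fun x => ?_⟩
  have hx : ∃ n, {m | a (e.symm m) ∈ φ (e.symm n).1} = {m | a (e.symm m) ∈ φ x} :=
    ⟨e (x, x), by simp⟩
  rw [ekFun, dif_pos hx]
  -- Any row with the trace of `x` belongs to `x` itself.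
  refine congrArg f ?_
  by_contra hne
  refine ha (_, x) hne ?_
  simpa using Set.ext_iff.1 hx.choose_spec (e ((e.symm hx.choose).1, x))

/-- The lookup tables of all sizes less than `σ`, the sizes being represented by the ordinals below
the initial ordinal of `σ`. -/
abbrev EKIndex (σ : Cardinal.{u}) (Y : Type u) : Type u :=
  Σ i : σ.ord.ToType, EKCode Y i.toOrd.1.ToType

theorem mk_ekIndex_le {σ : Cardinal.{u}} {Y : Type u} (hY : ℵ₀ ≤ #Y) (hσ : ℵ₀ ≤ σ)
    (hpow : #Y ^< σ = #Y) : #(EKIndex σ Y) ≤ #Y := by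
  have htwo : (2 : Cardinal.{u}) ≤ #Y := ofNat_lt_aleph0.le.trans hY
  have hle : ∀ ν < σ, #Y ^ ν ≤ #Y := powerlt_le.1 hpow.le
  have hσY : σ ≤ #Y := by
    by_contra! h
    exact ((cantor #Y).trans_le (power_le_power_right htwo)).not_ge (hle _ h)
  have hcode : ∀ i : σ.ord.ToType, #(EKCode Y i.toOrd.1.ToType) ≤ #Y := by
    intro i
    have hi : #(i.toOrd.1.ToType) < σ := by
      rw [mk_toType]; exact lt_ord.1 i.toOrd.2
    generalize i.toOrd.1.ToType = N at hi
    have h2 : ((2 : Cardinal.{u}) ^ #N) ^ #N ≤ #Y := by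
      rw [← power_mul]
      exact (power_le_power_right htwo).trans (hle _ (mul_lt_of_lt hσ hi hi))
    have : #(EKCode Y N) = #Y ^ #N * (((2 : Cardinal.{u}) ^ #N) ^ #N * #Y ^ #N) := by
      simp [EKCode]
    rw [this]
    calc _ ≤ #Y * (#Y * #Y) := by gcongr <;> exact hle _ hi
      _ = #Y := by rw [mul_eq_self hY, mul_eq_self hY]
  calc #(EKIndex σ Y) = Cardinal.sum fun i : σ.ord.ToType => #(EKCode Y i.toOrd.1.ToType) :=
        mk_sigma _
    _ ≤ Cardinal.sum fun _ : σ.ord.ToType => #Y := sum_le_sum _ _ hcode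
    _ = σ * #Y := by simp
    _ ≤ #Y * #Y := by gcongr
    _ = #Y := mul_eq_self hY

theorem engelking_karlowicz_infinite {σ : Cardinal.{u}} {X Y : Type u} (hY : ℵ₀ ≤ #Y)
    (hσ : ℵ₀ ≤ σ) (hpow : #Y ^< σ = #Y) (hle : #X ≤ 2 ^ #Y) :
    ∃ (ι : Type u) (h : ι → X → Y), #ι = #Y ∧
      ∀ (D : Set X) (f : D → Y), #D < σ → ∃ α : ι, ∀ x : D, h α (x : X) = f x := by
  rw [← mk_set] at hle
  obtain ⟨φ⟩ := hle
  obtain ⟨y₀⟩ : Nonempty Y := mk_ne_zero_iff.1 (aleph0_pos.trans_le hY).ne'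
  -- The summand `Y`, indexing constant functions, only serves to make the cardinality exactly `μ`.
  refine ⟨EKIndex σ Y ⊕ Y, Sum.elim (fun i => ekFun φ y₀ i.2) fun y _ => y, ?_, ?_⟩
  · rw [mk_sum, lift_id, lift_id, add_eq_right hY (mk_ekIndex_le hY hσ hpow)]
  · intro D f hD
    have hDD : #(D × D) < σ := by
      rw [mk_prod, lift_id]; exact mul_lt_of_lt hσ hD hD
    let i : σ.ord.ToType := Ordinal.ToType.mk ⟨(#(D × D)).ord, ord_lt_ord.2 hDD⟩
    have hi : #(D × D) = #(i.toOrd.1.ToType) := by simp [i, Ordinal.ToType.toOrd]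
    obtain ⟨e⟩ := Cardinal.eq.1 hi
    obtain ⟨c, hc⟩ := exists_ekFun_eq φ φ.injective y₀ D f e
    exact ⟨Sum.inl ⟨i, c⟩, hc⟩

/-- Engelking–Karłowicz: if `|Y| = μ`, `|X| = λ`, `μ^{<σ} = μ` and
`μ < λ ≤ 2^μ`, then there are `μ` many functions `h_α : X → Y` such that every partial
function from `X` to `Y` of size `< σ` is extended by some `h_α`. Partial functions are
modelled as functions on a subset `D ⊆ X`. -/
theorem stmt1 (σ μ lam : Cardinal.{u}) (X Y : Type u)
    (hY : Cardinal.mk Y = μ) (hX : Cardinal.mk X = lam)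
    (hpow : μ ^< σ = μ) (hlt : μ < lam) (hle : lam ≤ 2 ^ μ) :
    ∃ (ι : Type u) (h : ι → X → Y), Cardinal.mk ι = μ ∧
      ∀ (D : Set X) (f : D → Y), Cardinal.mk D < σ →
        ∃ α : ι, ∀ x : D, h α (x : X) = f x := by
  subst hY hX
  rcases le_or_gt ℵ₀ #Y with hinf | hfin
  · have hpow' : #Y ^< max σ ℵ₀ = #Y := by
      rw [powerlt_max, hpow, powerlt_aleph0 hinf, max_self]
    obtain ⟨ι, h, hι, H⟩ :=
      engelking_karlowicz_infinite hinf (le_max_right σ ℵ₀) hpow' hle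
    exact ⟨ι, h, hι, fun D f hD => H D f (hD.trans_le (le_max_left _ _))⟩
  · refine ⟨Y, fun y _ => y, rfl, fun D f hD => ?_⟩
    -- For `μ = 0` this uses `0 ^ 0 = 1`, which excludes `0 < σ`.
    have hne : Nonempty Y := by
      rw [← mk_ne_zero_iff]
      intro h0
      have := le_powerlt #Y ((zero_le).trans_lt hD)
      rw [hpow, power_zero, h0] at this
      exact absurd this (by simp)
    by_cases hsub : Subsingleton Y
    · exact ⟨hne.some, fun x => Subsingleton.elim _ _⟩
    have hY1 : 1 < #Y := by
      rw [one_lt_iff_nontrivial]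
      exact not_subsingleton_iff_nontrivial.1 hsub
    have hσ : σ ≤ 2 := by
      by_contra! h2
      have h := le_powerlt #Y h2
      rw [hpow] at h
      obtain ⟨n, hn⟩ := lt_aleph0.1 hfin
      rw [hn] at h hY1
      norm_cast at h hY1
      nlinarith
    have hD1 : #D ≤ 1 := by
      have := hD.trans_le hσ
      obtain ⟨n, hn⟩ := lt_aleph0.1 (this.trans ofNat_lt_aleph0)
      rw [hn] at this ⊢
      norm_cast at this ⊢
      omega
    have hDs : Subsingleton D := le_one_iff_subsingleton.1 hD1
    rcases isEmpty_or_nonempty D with hD0 | ⟨⟨d⟩⟩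
    · exact ⟨hne.some, fun x => hD0.elim x⟩
    · exact ⟨f d, fun x => congrArg f (Subsingleton.elim _ _)⟩
end

section
/- For every subset S of X, the subgroup G_S is a pure subgroup of ℤ^ω: whenever r ∈ ℤ, x ∈ ℤ^ω, g ∈ G_S and r·x = g, there exists g' ∈ G_S with r·g' = g. -/
/-!
Fix `r ≠ 0` and let `m > |r|`. Modulo finitely supported functions, `x_{η,j}` is an integer multiple
of `x_{η,m}` whenever `j ≤ m`, so every `g ∈ G_S` has, for all large `m`, the form
`z + ∑ η, b η • x_{η,m}` with `z` finitely supported (`exists_normal_form`). Every prime in the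
product defining `x_{η,m}(i)` exceeds `|r|`, hence that product is coprime to `r`
(`isCoprime_prod`). By independence there is, for each `η` in the support of `b`, an `i` outside the
support of `z` with `f_η(i) = 1` and `f_ν(i) = 0` for the other `ν` in the support; evaluating `g`
at `i` shows that `r ∣ g` forces `r ∣ b η`. So `r` divides the whole sum within `G_S`, hence it
divides `z` pointwise, and the quotient of `z` by `r` is again finitely supported.
-/

open scoped Classical

/-- `xv P f η j` is the element `x_{η,j}` of `ℤ^ω`:
`x_{η,j}(i) = (∏ {p ∈ P_η : j ≤ p < i}) * f_η(i)` (empty product `= 1`). -/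
noncomputable def xv {X : Type*} (P : X → Set ℕ) (f : X → ℕ → ℤ) (η : X) (j : ℕ) :
    ℕ → ℤ :=
  fun i => (∏ p ∈ (Finset.range i).filter (fun p => p ∈ P η ∧ j ≤ p), (p : ℤ)) * f η i

/-- `Z_ω`: the subgroup of finitely supported functions in `ℤ^ω`. -/
def Zomega : AddSubgroup (ℕ → ℤ) where
  carrier := {g | (Function.support g).Finite}
  zero_mem' := by simp
  add_mem' := fun ha hb => (ha.union hb).subset (Function.support_add _ _)
  neg_mem' := fun ha => by simpa using ha

/-- `G_S`: the subgroup of `ℤ^ω` generated by `Z_ω ∪ {x_{η,j} : η ∈ S, j ∈ ℕ}`. -/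
noncomputable def GS {X : Type*} (P : X → Set ℕ) (f : X → ℕ → ℤ) (S : Set X) :
    AddSubgroup (ℕ → ℤ) :=
  AddSubgroup.closure ((Zomega : Set (ℕ → ℤ)) ∪ {g | ∃ η ∈ S, ∃ j : ℕ, g = xv P f η j})

lemma xv_sub_smul_mem_Zomega {X : Type*} (P : X → Set ℕ) (f : X → ℕ → ℤ) (η : X) {j m : ℕ}
    (hjm : j ≤ m) :
    xv P f η j - (∏ p ∈ (Finset.range m).filter (fun p => p ∈ P η ∧ j ≤ p), (p : ℤ)) • xv P f η m
      ∈ Zomega := by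
  refine (Set.finite_Iio m).subset fun i hi => ?_
  by_contra hmi
  have hmi : m ≤ i := by simpa using hmi
  apply hi
  have hprod : (∏ p ∈ (Finset.range i).filter (fun p => p ∈ P η ∧ j ≤ p), (p : ℤ)) =
      (∏ p ∈ (Finset.range m).filter (fun p => p ∈ P η ∧ j ≤ p), (p : ℤ)) *
      ∏ p ∈ (Finset.range i).filter (fun p => p ∈ P η ∧ m ≤ p), (p : ℤ) := by
    rw [← Finset.prod_union]
    · congr 1
      ext p
      simp only [Finset.mem_union, Finset.mem_filter, Finset.mem_range]
      grind
    · rw [Finset.disjoint_left]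
      intro p
      simp only [Finset.mem_filter, Finset.mem_range]
      grind
  simp only [Pi.sub_apply, Pi.smul_apply, smul_eq_mul, xv, hprod]
  ring

/-- The form is available for all large `m`, not just for one, so that two elements can be
added at a common index, and so that `m` can later be taken larger than `|r|`. -/
lemma exists_normal_form {X : Type*} (P : X → Set ℕ) (f : X → ℕ → ℤ) (S : Set X) {g : ℕ → ℤ}
    (hg : g ∈ GS P f S) :
    ∃ M : ℕ, ∀ m ≥ M, ∃ b : X →₀ ℤ, (∀ η ∈ b.support, η ∈ S) ∧ ∃ z ∈ Zomega,
      g = z + b.sum (fun η c => c • xv P f η m) := by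
  induction hg using AddSubgroup.closure_induction with
  | mem g hg =>
    rcases hg with hg | ⟨η, hη, j, rfl⟩
    · exact ⟨0, fun m _ => ⟨0, by simp, g, hg, by simp⟩⟩
    · refine ⟨j, fun m hm => ⟨Finsupp.single η
        (∏ p ∈ (Finset.range m).filter (fun p => p ∈ P η ∧ j ≤ p), (p : ℤ)), ?_, _,
        xv_sub_smul_mem_Zomega P f η hm, ?_⟩⟩
      · intro ν hν
        have := Finsupp.support_single_subset hν
        rw [Finset.mem_singleton] at this
        rwa [this]
      · rw [Finsupp.sum_single_index (by simp)]
        simp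
  | zero => exact ⟨0, fun m _ => ⟨0, by simp, 0, zero_mem _, by simp⟩⟩
  | add g h _ _ ihg ihh =>
    obtain ⟨M, hM⟩ := ihg
    obtain ⟨N, hN⟩ := ihh
    refine ⟨max M N, fun m hm => ?_⟩
    obtain ⟨b, hb, z, hz, rfl⟩ := hM m (le_trans (le_max_left _ _) hm)
    obtain ⟨c, hc, w, hw, rfl⟩ := hN m (le_trans (le_max_right _ _) hm)
    refine ⟨b + c, fun η hη => ?_, z + w, add_mem hz hw, ?_⟩
    · rcases Finset.mem_union.1 (Finsupp.support_add hη) with h | h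
      exacts [hb η h, hc η h]
    · rw [Finsupp.sum_add_index' (by simp) (by intros; rw [add_smul])]
      abel
  | neg g _ ih =>
    obtain ⟨M, hM⟩ := ih
    refine ⟨M, fun m hm => ?_⟩
    obtain ⟨b, hb, z, hz, rfl⟩ := hM m hm
    refine ⟨-b, fun η hη => hb η (by simpa using hη), -z, neg_mem hz, ?_⟩
    rw [Finsupp.sum_neg_index (by simp), neg_add]
    simp [Finsupp.sum, Finset.sum_neg_distrib]

lemma isCoprime_prod {Q : Set ℕ} (hQ : ∀ p ∈ Q, p.Prime) {r : ℤ} (hr : r ≠ 0) {m : ℕ}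
    (hm : r.natAbs < m) (i : ℕ) :
    IsCoprime r (∏ p ∈ (Finset.range i).filter (fun p => p ∈ Q ∧ m ≤ p), (p : ℤ)) := by
  refine IsCoprime.prod_right fun p hp => ?_
  obtain ⟨-, hpQ, hmp⟩ := Finset.mem_filter.1 hp
  rw [Int.isCoprime_iff_gcd_eq_one]
  exact (Nat.coprime_of_lt_prime (Int.natAbs_ne_zero.2 hr) (hm.trans_le hmp) (hQ p hpQ)).symm

/-- `G_S` is a pure subgroup of `ℤ^ω`: whenever `r ∈ ℤ`, `x ∈ ℤ^ω`,
`g ∈ G_S` and `r • x = g`, there is `g' ∈ G_S` with `r • g' = g`. -/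
theorem stmt4
    {X : Type*} (P : X → Set ℕ) (f : X → ℕ → ℤ)
    (hprime : ∀ η, ∀ p ∈ P η, p.Prime)
    (hinf : ∀ η, (P η).Infinite)
    (hdisj : ∀ η ν, η ≠ ν → (P η ∩ P ν).Finite)
    (hind : ∀ (k : ℕ) (ηs : Fin k → X) (a : Fin k → ℤ), Function.Injective ηs →
      {i : ℕ | ∀ l, f (ηs l) i = a l}.Infinite)
    (S : Set X) :
    ∀ (r : ℤ) (x g : ℕ → ℤ), g ∈ GS P f S → r • x = g → ∃ g' ∈ GS P f S, r • g' = g := by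
  intro r x g hg hx
  rcases eq_or_ne r 0 with rfl | hr
  · exact ⟨0, zero_mem _, by simpa using hx⟩
  obtain ⟨M, hM⟩ := exists_normal_form P f S hg
  set m := max M (r.natAbs + 1) with hmdef
  have hm : r.natAbs < m := lt_of_lt_of_le (Nat.lt_succ_self _) (le_max_right _ _)
  obtain ⟨b, hbS, z, hz, hgz⟩ := hM m (le_max_left _ _)
  have hdvd : ∀ η ∈ b.support, r ∣ b η := by
    intro η hη
    let e := b.support.equivFin
    -- Independence isolates `η`: a coordinate where `f η = 1` and the other `f ν` vanish.
    obtain ⟨i, hi, hiz⟩ := ((hind _ (fun l => (e.symm l : X))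
      (fun l => if (e.symm l : X) = η then 1 else 0)
      (Subtype.val_injective.comp e.symm.injective)).sdiff hz).nonempty
    have hf : ∀ ν ∈ b.support, f ν i = if ν = η then 1 else 0 := by
      intro ν hν
      simpa using hi (e ⟨ν, hν⟩)
    have hzi : z i = 0 := by simpa using hiz
    have hgi : r * x i = b η *
        ∏ p ∈ (Finset.range i).filter (fun p => p ∈ P η ∧ m ≤ p), (p : ℤ) := by
      have h1 : r * x i = g i := by rw [← hx]; simp
      rw [h1, hgz, Pi.add_apply, hzi, zero_add, Finsupp.sum, Finset.sum_apply,
        Finset.sum_eq_single η]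
      · simp [xv, hf η hη]
      · intro ν hν hne
        simp [xv, hf ν hν, hne]
      · intro h
        exact absurd hη h
    exact (isCoprime_prod (hprime η) hr hm i).dvd_of_dvd_mul_right ⟨x i, hgi.symm⟩
  set h : ℕ → ℤ := ∑ η ∈ b.support, (b η / r) • xv P f η m with hh
  have hhG : h ∈ GS P f S := sum_mem fun η hη =>
    AddSubgroup.zsmul_mem (GS P f S)
      (AddSubgroup.subset_closure (Set.mem_union_right _ ⟨η, hbS η hη, m, rfl⟩)) _
  have hrh : r • h = b.sum (fun η c => c • xv P f η m) := by
    rw [hh, Finset.smul_sum, Finsupp.sum]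
    refine Finset.sum_congr rfl fun η hη => ?_
    rw [smul_smul, Int.mul_ediv_cancel' (hdvd η hη)]
  have hzx : r • (x - h) = z := by
    rw [smul_sub, hx, hrh, hgz, add_sub_cancel_right]
  have hxh : x - h ∈ Zomega := by
    refine Set.Finite.subset (show (Function.support z).Finite from hz) fun i hi => ?_
    rw [← hzx]
    exact mul_ne_zero hr hi
  refine ⟨x, ?_, hx⟩
  have := add_mem (AddSubgroup.subset_closure (Or.inl hxh) : x - h ∈ GS P f S) hhG
  rwa [sub_add_cancel] at this
end

section
/- For any finitely many distinct η_1, …, η_k ∈ X, any j ∈ ℕ, and any integers n_1, …, n_k, if the function n_1·x_{η_1,j} + ⋯ + n_k·x_{η_k,j} has finite support (i.e., lies in Z_ω), then n_1 = ⋯ = n_k = 0. -/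
/-!
By independence, there are infinitely many `i` with `f_{η_l}(i) = 1` and `f_{η_m}(i) = 0` for all
`m ≠ l`, so one of them lies outside the finite support of the combination. There the combination
vanishes and equals `n_l` times a finite product of primes, whence `n_l = 0`.
-/

open scoped Classical

/-- for distinct `η_1, …, η_k ∈ X`, any `j ∈ ℕ` and integers `n_1, …, n_k`,
if `n_1 • x_{η_1,j} + ⋯ + n_k • x_{η_k,j}` has finite support (lies in `Z_ω`),
then all `n_l = 0`. -/
theorem stmt5
    {X : Type*} (P : X → Set ℕ) (f : X → ℕ → ℤ)
    (hprime : ∀ η, ∀ p ∈ P η, p.Prime)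
    (hinf : ∀ η, (P η).Infinite)
    (hdisj : ∀ η ν, η ≠ ν → (P η ∩ P ν).Finite)
    (hind : ∀ (k : ℕ) (ηs : Fin k → X) (a : Fin k → ℤ), Function.Injective ηs →
      {i : ℕ | ∀ l, f (ηs l) i = a l}.Infinite)
    (k : ℕ) (ηs : Fin k → X) (hη : Function.Injective ηs) (j : ℕ) (n : Fin k → ℤ)
    (hmem : (∑ l, n l • xv P f (ηs l) j) ∈ Zomega) :
    ∀ l, n l = 0 := by
  intro l
  -- Membership in `Zomega` unfolds definitionally to finiteness of the support.
  obtain ⟨i, hi, hsupp⟩ := ((hind k ηs (Pi.single l 1) hη).sdiff hmem).nonempty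
  have h0 : (∑ m, n m • xv P f (ηs m) j) i = 0 := by
    by_contra h
    exact hsupp h
  rw [Finset.sum_apply, Finset.sum_eq_single l] at h0
  · have hl : f (ηs l) i = 1 := by simpa using hi l
    simp only [Pi.smul_apply, xv, smul_eq_mul, hl, mul_one] at h0
    refine (mul_eq_zero.mp h0).resolve_right (Finset.prod_ne_zero_iff.mpr fun p hp => ?_)
    exact_mod_cast (hprime _ p (Finset.mem_filter.mp hp).2.1).ne_zero
  · intro m _ hm
    have hm0 : f (ηs m) i = 0 := by simpa [hm] using hi m
    simp [xv, hm0]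
  · simp
end

section
/- For every η ∈ X and all j ≤ j' in ℕ, the element x_{η,j} − (∏{p ∈ P_η : j ≤ p < j'})·x_{η,j'} lies in Z_ω. Consequently, for any S ⊆ X with η ∈ S and any m ∈ ℕ, the coset x_η + Z_ω in the quotient group G_S/Z_ω is divisible by ∏{p ∈ P_η : p < m}; in particular, x_η + Z_ω is divisible in G_S/Z_ω by every prime p ∈ P_η. -/
/-!
For `i ≥ j'` the primes of `P_η` in `[j, i)` split into those in `[j, j')` and those in `[j', i)`,
so `x_{η,j}` and `(∏ {p ∈ P_η : j ≤ p < j'}) • x_{η,j'}` agree from `j'` on and their difference is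
finitely supported (`xv_sub_smul_mem`). Taking `j = 0`, the element `x_{η,m}` of `G_S` witnesses
divisibility of `x_η + Z_ω` by `∏ {p ∈ P_η : p < m}`; for `p ∈ P_η` the case `m = p + 1` gives a
product that is a multiple of `p`.
-/

open scoped Classical

theorem mem_Zomega_of_eq_zero {g : ℕ → ℤ} (n : ℕ) (h : ∀ i, n ≤ i → g i = 0) : g ∈ Zomega := by
  refine (Set.finite_lt_nat n).subset fun i hi => ?_
  by_contra hn
  exact hi (h i (not_lt.mp hn))

theorem prod_filter_split (A : Set ℕ) {j j' i : ℕ} (hj : j ≤ j') (hi : j' ≤ i) :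
    (∏ p ∈ (Finset.range i).filter (fun p => p ∈ A ∧ j ≤ p), (p : ℤ)) =
      (∏ p ∈ (Finset.range j').filter (fun p => p ∈ A ∧ j ≤ p), (p : ℤ)) *
        ∏ p ∈ (Finset.range i).filter (fun p => p ∈ A ∧ j' ≤ p), (p : ℤ) := by
  rw [← Finset.prod_union]
  · congr 1
    ext p
    simp only [Finset.mem_filter, Finset.mem_range, Finset.mem_union]
    grind
  · rw [Finset.disjoint_left]
    intro p hp hp'
    simp only [Finset.mem_filter, Finset.mem_range] at hp hp'
    omega

theorem xv_sub_smul_mem {X : Type*} (P : X → Set ℕ) (f : X → ℕ → ℤ) (η : X) {j j' : ℕ}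
    (hj : j ≤ j') :
    xv P f η j -
      (∏ p ∈ (Finset.range j').filter (fun p => p ∈ P η ∧ j ≤ p), (p : ℤ)) • xv P f η j'
      ∈ Zomega := by
  refine mem_Zomega_of_eq_zero j' fun i hi => ?_
  simp only [Pi.sub_apply, Pi.smul_apply, smul_eq_mul, xv]
  rw [prod_filter_split (P η) hj hi]
  ring

theorem exists_divisor {X : Type*} (P : X → Set ℕ) (f : X → ℕ → ℤ) (η : X) (S : Set X)
    (hη : η ∈ S) (m : ℕ) :
    ∃ g ∈ GS P f S,
      xv P f η 0 - (∏ p ∈ (Finset.range m).filter (fun p => p ∈ P η), (p : ℤ)) • g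
        ∈ Zomega := by
  refine ⟨xv P f η m, AddSubgroup.subset_closure (Or.inr ⟨η, hη, m, rfl⟩), ?_⟩
  simpa using xv_sub_smul_mem P f η (Nat.zero_le m)

/-- for `η ∈ X` and `j ≤ j'`, the element
`x_{η,j} - (∏ {p ∈ P_η : j ≤ p < j'}) • x_{η,j'}` lies in `Z_ω`.  Consequently, for
`S ⊆ X` with `η ∈ S` and any `m`, the coset `x_η + Z_ω` in `G_S/Z_ω` is divisible by
`∏ {p ∈ P_η : p < m}` (expressed here as: there is `g ∈ G_S` with
`x_η - (∏ …) • g ∈ Z_ω`); in particular it is divisible by every prime `p ∈ P_η`. -/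
theorem stmt8
    {X : Type*} (P : X → Set ℕ) (f : X → ℕ → ℤ)
    (hprime : ∀ η, ∀ p ∈ P η, p.Prime)
    (hinf : ∀ η, (P η).Infinite)
    (hdisj : ∀ η ν, η ≠ ν → (P η ∩ P ν).Finite)
    (hind : ∀ (k : ℕ) (ηs : Fin k → X) (a : Fin k → ℤ), Function.Injective ηs →
      {i : ℕ | ∀ l, f (ηs l) i = a l}.Infinite)
    (η : X) :
    (∀ j j' : ℕ, j ≤ j' →
      xv P f η j -
        (∏ p ∈ (Finset.range j').filter (fun p => p ∈ P η ∧ j ≤ p), (p : ℤ)) • xv P f η j'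
        ∈ Zomega) ∧
    (∀ S : Set X, η ∈ S → ∀ m : ℕ,
      ∃ g ∈ GS P f S,
        xv P f η 0 - (∏ p ∈ (Finset.range m).filter (fun p => p ∈ P η), (p : ℤ)) • g
          ∈ Zomega) ∧
    (∀ S : Set X, η ∈ S → ∀ p ∈ P η,
      ∃ g ∈ GS P f S, xv P f η 0 - (p : ℤ) • g ∈ Zomega) := by
  refine ⟨fun j j' hj => xv_sub_smul_mem P f η hj, exists_divisor P f η, fun S hη p hp => ?_⟩
  obtain ⟨g, hg, h⟩ := exists_divisor P f η S hη (p + 1)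
  have hmem : p ∈ (Finset.range (p + 1)).filter (fun p => p ∈ P η) := by simp [hp]
  obtain ⟨c, hc⟩ := Finset.dvd_prod_of_mem (fun p : ℕ => (p : ℤ)) hmem
  refine ⟨c • g, AddSubgroup.zsmul_mem _ hg c, ?_⟩
  rwa [hc, mul_smul] at h
end

section
/- If S ⊆ X is uncountable, then the subgroup G_S is not a free abelian group. -/
/-!
If `G_S` had a `ℤ`-basis `b`, then, `Z_ω` being countable, only countably many basis indices would
occur in the expansions of elements of `Z_ω`; call the set of these indices `I₀`. Modulo `Z_ω` the
element `x_η` is divisible in `G_S` by every `p ∈ P_η` (`xv_sub_mul_mem`), so each coordinate of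
`x_η` outside `I₀` is an integer with infinitely many prime divisors and vanishes. Hence all the
`x_η`, `η ∈ S`, lie in the countable subgroup spanned by `I₀`. They are pairwise distinct by the
independence property (`xv_injective`), so `S` is countable.
-/

open scoped Classical

instance countable_Zomega : Countable Zomega := by
  have : Function.Injective
      (fun g : Zomega => (Finsupp.ofSupportFinite g.1 g.2 : ℕ →₀ ℤ)) := by
    intro g h e
    apply Subtype.ext
    exact congrArg (fun v : ℕ →₀ ℤ => (v : ℕ → ℤ)) e
  exact this.countable

/-- With `c` the product of the elements of `P_η` up to `q`, the functions `x_η` and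
`c • x_{η,q+1}` agree beyond `q`. -/
theorem xv_sub_mul_mem {X : Type*} (P : X → Set ℕ) (f : X → ℕ → ℤ) (η : X) (q : ℕ) :
    xv P f η 0 - (∏ p ∈ (Finset.range (q + 1)).filter (fun p => p ∈ P η), (p : ℤ)) •
      xv P f η (q + 1) ∈ Zomega := by
  refine (Set.finite_Iio (q + 1)).subset fun i hi => ?_
  by_contra hlt
  have hle : q + 1 ≤ i := by simpa using hlt
  apply hi
  have hsplit : ((Finset.range i).filter (fun p => p ∈ P η ∧ 0 ≤ p)) =
      (Finset.range (q + 1)).filter (fun p => p ∈ P η) ∪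
        (Finset.range i).filter (fun p => p ∈ P η ∧ q + 1 ≤ p) := by
    ext p
    simp only [Finset.mem_filter, Finset.mem_range, Finset.mem_union]
    grind
  have hd : Disjoint ((Finset.range (q + 1)).filter (fun p => p ∈ P η))
      ((Finset.range i).filter (fun p => p ∈ P η ∧ q + 1 ≤ p)) := by
    rw [Finset.disjoint_left]
    intro p
    simp only [Finset.mem_filter, Finset.mem_range]
    grind
  simp only [Pi.sub_apply, Pi.smul_apply, smul_eq_mul, xv]
  rw [hsplit, Finset.prod_union hd]
  ring

theorem xv_injective {X : Type*} (P : X → Set ℕ) (f : X → ℕ → ℤ)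
    (hprime : ∀ η, ∀ p ∈ P η, p.Prime)
    (hind : ∀ (k : ℕ) (ηs : Fin k → X) (a : Fin k → ℤ), Function.Injective ηs →
      {i : ℕ | ∀ l, f (ηs l) i = a l}.Infinite) :
    Function.Injective (fun η => xv P f η 0) := by
  intro η ν e
  by_contra hne
  -- At a place where `f η = 1` and `f ν = 0`, the element `x_ν` vanishes and `x_η` does not.
  obtain ⟨i, hi⟩ := (hind 2 ![η, ν] ![1, 0] (by
    intro a b hab
    fin_cases a <;> fin_cases b <;> simp_all [eq_comm])).nonempty
  have h0 : f η i = 1 := by simpa using hi 0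
  have h1 : f ν i = 0 := by simpa using hi 1
  have e' := congrFun e i
  simp only [xv, h0, h1, mul_one, mul_zero] at e'
  obtain ⟨p, hp, hp0⟩ := Finset.prod_eq_zero_iff.1 e'
  have := (hprime η p (Finset.mem_filter.1 hp).2.1).ne_zero
  exact this (by exact_mod_cast hp0)

/-- if `S ⊆ X` is uncountable, then `G_S` is not a free abelian group. -/
theorem stmt10
    {X : Type*} (P : X → Set ℕ) (f : X → ℕ → ℤ)
    (hprime : ∀ η, ∀ p ∈ P η, p.Prime)
    (hinf : ∀ η, (P η).Infinite)
    (hdisj : ∀ η ν, η ≠ ν → (P η ∩ P ν).Finite)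
    (hind : ∀ (k : ℕ) (ηs : Fin k → X) (a : Fin k → ℤ), Function.Injective ηs →
      {i : ℕ | ∀ l, f (ηs l) i = a l}.Infinite)
    (S : Set X) (hS : ¬ S.Countable) :
    ¬ Module.Free ℤ (GS P f S) := by
  intro hfree
  apply hS
  let b := Module.Free.chooseBasis ℤ (GS P f S)
  have hZ : ∀ z : Zomega, z.1 ∈ GS P f S := fun z =>
    AddSubgroup.subset_closure (Or.inl z.2)
  have hx : ∀ (η : S) (j : ℕ), xv P f η j ∈ GS P f S := fun η j =>
    AddSubgroup.subset_closure (Or.inr ⟨η, η.2, j, rfl⟩)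
  let I₀ : Set (Module.Free.ChooseBasisIndex ℤ (GS P f S)) :=
    ⋃ z : Zomega, ((b.repr ⟨z.1, hZ z⟩).support : Set _)
  have hI₀ : I₀.Countable := Set.countable_iUnion fun z => Finset.countable_toSet _
  have hzero : ∀ (η : S), ∀ i ∉ I₀, b.repr ⟨xv P f η 0, hx η 0⟩ i = 0 := by
    intro η i hi
    obtain ⟨q, hq, hlt⟩ := (hinf η).exists_gt (b.repr ⟨xv P f η 0, hx η 0⟩ i).natAbs
    let z : Zomega := ⟨_, xv_sub_mul_mem P f η q⟩
    have hz : b.repr ⟨z.1, hZ z⟩ i = 0 := by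
      by_contra h
      exact hi (Set.mem_iUnion.2 ⟨z, by simpa using h⟩)
    have hdec : (⟨xv P f η 0, hx η 0⟩ : GS P f S) = ⟨z.1, hZ z⟩ +
        (∏ p ∈ (Finset.range (q + 1)).filter (fun p => p ∈ P η), (p : ℤ)) •
          ⟨xv P f η (q + 1), hx η (q + 1)⟩ := by
      apply Subtype.ext
      simp [z]
    have hdvd : (q : ℤ) ∣ b.repr ⟨xv P f η 0, hx η 0⟩ i := by
      rw [hdec, map_add, Finsupp.add_apply, hz, zero_add, map_smul, Finsupp.smul_apply,
        smul_eq_mul]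
      apply Dvd.dvd.mul_right
      exact Finset.dvd_prod_of_mem (fun p : ℕ => (p : ℤ)) (by simp [hq])
    exact Int.natAbs_eq_zero.1
      (Nat.eq_zero_of_dvd_of_lt (Int.natCast_dvd.1 hdvd) hlt)
  have : Countable I₀ := hI₀.to_subtype
  have hinj : Function.Injective (fun η : S =>
      (b.repr ⟨xv P f η 0, hx η 0⟩).subtypeDomain (· ∈ I₀)) := by
    intro η ν e
    apply Subtype.ext
    apply xv_injective P f hprime hind
    have : b.repr ⟨xv P f η 0, hx η 0⟩ = b.repr ⟨xv P f ν 0, hx ν 0⟩ := by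
      ext i
      by_cases hi : i ∈ I₀
      · exact DFunLike.congr_fun e (⟨i, hi⟩ : I₀)
      · rw [hzero η i hi, hzero ν i hi]
    exact congrArg Subtype.val (b.repr.injective this)
  have : Countable (Subtype (· ∈ I₀) →₀ ℤ) := inferInstanceAs (Countable (I₀ →₀ ℤ))
  exact Set.countable_coe_iff.1 hinj.countable
end

section
/- Let η₁ and η₂ be distinct functions from ω₁ to {0,1}. Then the groups G_{η₁} and G_{η₂} are almost disjoint: every abelian group H that is isomorphic to a subgroup of G_{η₁} and to a subgroup of G_{η₂} is free. In particular, G_{η₁} ∩ G_{η₂} is free. -/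
/-!
Write `ratSub A ⊆ ℚ` for the fractions whose denominators are products of distinct elements of `A`.
Modulo `Z_ω`, the group generated by the `x_{η,j}`, `η ∈ S`, embeds in the direct sum of the groups
`ratSub (P η)`, `η ∈ S`: the element `x_{η,j}` corresponds to `1 / ∏ {p ∈ P η : p < j}` in
coordinate `η`, and the independence of the `f η` makes the coordinates well defined
(`exists_coord`, `eq_zero_of_ratFun`). Hence a group `H` embedded in both `G_{η₁}` and `G_{η₂}`
carries two maps `v`, `w` with countable kernels into such direct sums (`exists_isAdm`), and the
two index sets share only countably many indices, the restrictions of `η₁` up to its first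
difference from `η₂` (`countable_common`).

A back-and-forth argument (`exists_closed`) gives a countable subgroup `K` of `H` consisting of all
elements with `v`-support in a countable set `C₁` containing the common indices, and also of all
elements with `w`-support in a set `C₂`. By Specker's theorem
(`free_of_countable_of_injective`) `K` is free, so it is enough that `H / K` is free. Deleting the
coordinates in `C₁` and `C₂` embeds `H / K` in two direct sums with disjoint index sets.

For such a group `Q` (`free_of_isAdm`), consider the subgroups that are closed for both support
functions. They form a class closed under unions of chains, and back-and-forth again shows that
each proper one has a proper closed extension with countable quotient. That quotient is of the same
kind as `Q`, so by dévissage (`free_of_devissage`) only countable `Q` matter. For those,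
Pontryagin's criterion (`free_of_countable`) reduces to finite index sets. There almost
disjointness leaves only finitely many primes occurring in denominators on both sides; with `e`
their product and by Bézout, `e Q` lies in the sum of the two subgroups of elements with integral
coordinates, and both of these are finitely generated (`finite_of_isAdm`).
-/

open scoped Classical

/-- `ω₁`, the first uncountable ordinal. -/
noncomputable def omega1 : Ordinal.{0} := (Cardinal.aleph 1).ord

/-- `X`: the set of all functions from a countable ordinal `α < ω₁` into `{0,1}`. -/
def BinSeqLt : Type 1 := {s : Σ α : Ordinal.{0}, Set.Iio α → Bool // s.1 < omega1}

/-- the restriction `η ↾ α ∈ X` of `η : ω₁ → {0,1}` to `α < ω₁`. -/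
noncomputable def restrictSeq (η : Set.Iio omega1 → Bool) (α : Set.Iio omega1) :
    BinSeqLt :=
  ⟨⟨α.1, fun β => η ⟨β.1, Set.mem_Iio.mpr (lt_trans (Set.mem_Iio.mp β.2) (Set.mem_Iio.mp α.2))⟩⟩, α.2⟩

/-- `G_η`: the subgroup of `ℤ^ω` generated by `Z_ω ∪ {x_{η↾α,j} : α < ω₁, j ∈ ℕ}`. -/
noncomputable def Geta (P : BinSeqLt → Set ℕ) (f : BinSeqLt → ℕ → ℤ)
    (η : Set.Iio omega1 → Bool) : AddSubgroup (ℕ → ℤ) :=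
  AddSubgroup.closure ((Zomega : Set (ℕ → ℤ)) ∪
    {g | ∃ α : Set.Iio omega1, ∃ j : ℕ, g = xv P f (restrictSeq η α) j})

/-! ### Filtrations with free quotients -/

/-- `B` is a basis of the subgroup `N`, as a set of elements of the ambient group. -/
def IsBasisOf {Q : Type*} [AddCommGroup Q] (N : Submodule ℤ Q) (B : Set Q) : Prop :=
  LinearIndepOn ℤ id B ∧ Submodule.span ℤ B = N

theorem IsBasisOf.free {Q : Type*} [AddCommGroup Q] {B : Set Q}
    (h : IsBasisOf (⊤ : Submodule ℤ Q) B) : Module.Free ℤ Q := by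
  have h1 : LinearIndependent ℤ (fun x : B => (x : Q)) := h.1
  exact Module.Free.of_basis (Module.Basis.mk h1 (by simp [h.2]))

theorem Submodule.exists_isBasisOf {Q : Type*} [AddCommGroup Q] (N : Submodule ℤ Q)
    [Module.Free ℤ N] : ∃ B, IsBasisOf N B := by
  let b := Module.Free.chooseBasis ℤ N
  have hli : LinearIndependent ℤ (fun i => (b i : Q)) :=
    b.linearIndependent.map' N.subtype N.ker_subtype
  refine ⟨Set.range (fun i => (b i : Q)), hli.linearIndepOn_id, ?_⟩
  have : Set.range (fun i => (b i : Q)) = N.subtype '' Set.range b := by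
    rw [← Set.range_comp]; rfl
  rw [this, Submodule.span_image, b.span_eq]
  simp

/-- A basis of `N` extends to a basis of `N'` as soon as `N' / N` is free. -/
theorem IsBasisOf.extend {Q : Type*} [AddCommGroup Q] {N N' : Submodule ℤ Q} {B : Set Q}
    (h : IsBasisOf N B) (hle : N ≤ N') (hfree : Module.Free ℤ (N'.map N.mkQ)) :
    ∃ B', B ⊆ B' ∧ IsBasisOf N' B' := by
  let b := Module.Free.chooseBasis ℤ (N'.map N.mkQ)
  have hx : ∀ i, ∃ x ∈ N', N.mkQ x = (b i : Q ⧸ N) := fun i => (b i).2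
  choose x hxN hxb using hx
  have hli : LinearIndependent ℤ (fun i => N.mkQ (x i)) := by
    simp_rw [hxb]
    exact b.linearIndependent.map' (Submodule.subtype _) (Submodule.ker_subtype _)
  have ht : LinearIndepOn ℤ N.mkQ (Set.range x) := by
    exact (linearIndepOn_range_iff (fun i j hij => hli.injective (by simp [hij])) N.mkQ).2 hli
  refine ⟨B ∪ Set.range x, Set.subset_union_left, ?_, ?_⟩
  · refine LinearIndepOn.union_id_of_quotient (M' := N) ?_ h.1 ht
    rw [← h.2]; exact Submodule.subset_span
  · rw [Submodule.span_union, h.2]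
    apply le_antisymm
    · refine sup_le hle (Submodule.span_le.2 ?_)
      rintro _ ⟨i, rfl⟩; exact hxN i
    · intro y hy
      have h1 : N'.map N.mkQ ≤ (Submodule.span ℤ (Set.range x)).map N.mkQ := by
        rw [← Submodule.span_image, ← Set.range_comp]
        have h2 : N.mkQ ∘ x = (N'.map N.mkQ).subtype ∘ b := funext hxb
        rw [h2, Set.range_comp, Submodule.span_image, b.span_eq]
        simp
      obtain ⟨z, hz, hzy⟩ := h1 ⟨y, hy, rfl⟩
      have h3 : y - z ∈ N := by
        rw [← Submodule.ker_mkQ N, LinearMap.mem_ker, map_sub, hzy, sub_self]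
      rw [← sub_add_cancel y z]
      exact Submodule.add_mem_sup h3 hz

/-- Dévissage: if a class `F` of subgroups contains `⊥`, is closed under unions of chains, and
each proper member of it is properly contained in another one with free quotient, then the whole
group is free. -/
theorem free_of_devissage {Q : Type*} [AddCommGroup Q] (F : Submodule ℤ Q → Prop)
    (hbot : F ⊥)
    (hchain : ∀ c : Set (Submodule ℤ Q), (∀ N ∈ c, F N) → IsChain (· ≤ ·) c → c.Nonempty →
      F (sSup c))
    (hsucc : ∀ N, F N → N ≠ ⊤ → ∃ N', F N' ∧ N < N' ∧ Module.Free ℤ (N'.map N.mkQ)) :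
    Module.Free ℤ Q := by
  obtain ⟨⟨N, B⟩, -, hmax⟩ := zorn_le_nonempty₀
    {p : Submodule ℤ Q × Set Q | F p.1 ∧ IsBasisOf p.1 p.2} (by
      intro c hc hch y hy
      have hch1 : IsChain (· ≤ ·) (Prod.fst '' c) := by
        rintro _ ⟨p, hp, rfl⟩ _ ⟨q, hq, rfl⟩ -
        rcases hch.total hp hq with h | h
        · exact Or.inl h.1
        · exact Or.inr h.1
      refine ⟨(sSup (Prod.fst '' c), ⋃ p ∈ c, p.2), ⟨?_, ?_, ?_⟩, ?_⟩
      · refine hchain _ ?_ hch1 ⟨_, y, hy, rfl⟩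
        rintro _ ⟨p, hp, rfl⟩; exact (hc hp).1
      · refine linearIndepOn_biUnion_of_directed ?_ fun p hp => (hc hp).2.1
        intro p hp q hq
        rcases hch.total hp hq with h | h
        · exact ⟨q, hq, h.2, subset_rfl⟩
        · exact ⟨p, hp, subset_rfl, h.2⟩
      · simp only [Submodule.span_iUnion₂]
        rw [sSup_image]
        exact iSup_congr fun p => iSup_congr fun hp => (hc hp).2.2
      · intro p hp
        exact ⟨le_sSup ⟨p, hp, rfl⟩, Set.subset_biUnion_of_mem (u := fun p => p.2) hp⟩)
    (⊥, ∅) ⟨hbot, linearIndepOn_empty _ _, by simp⟩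
  obtain ⟨hF, hB⟩ := hmax.prop
  by_cases hN : N = ⊤
  · subst hN; exact hB.free
  · exfalso
    obtain ⟨N', hF', hlt, hfr⟩ := hsucc N hF hN
    obtain ⟨B', hBB, hB'⟩ := hB.extend hlt.le hfr
    have := hmax.le_of_ge (y := (N', B')) ⟨hF', hB'⟩ ⟨hlt.le, hBB⟩
    exact absurd this.1 hlt.not_ge

/-- An extension of a free group by a free group is free. -/
theorem free_of_quotient {Q : Type*} [AddCommGroup Q] (N : Submodule ℤ Q)
    [Module.Free ℤ N] [Module.Free ℤ (Q ⧸ N)] : Module.Free ℤ Q := by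
  obtain ⟨B, hB⟩ := N.exists_isBasisOf
  have hfr : Module.Free ℤ ((⊤ : Submodule ℤ Q).map N.mkQ) := by
    rw [Submodule.map_top, Submodule.range_mkQ]
    exact Module.Free.of_equiv (Submodule.topEquiv (R := ℤ) (M := Q ⧸ N)).symm
  obtain ⟨B', -, hB'⟩ := hB.extend le_top hfr
  exact hB'.free

/-! ### Pontryagin's criterion -/

/-- The purification of `N`: all elements having a nonzero multiple in `N`. -/
def pureClosure {Q : Type*} [AddCommGroup Q] (N : Submodule ℤ Q) : Submodule ℤ Q where
  carrier := {h | ∃ m : ℤ, m ≠ 0 ∧ m • h ∈ N}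
  zero_mem' := ⟨1, one_ne_zero, by simp⟩
  add_mem' := by
    rintro a b ⟨m, hm, ha⟩ ⟨n, hn, hb⟩
    refine ⟨m * n, mul_ne_zero hm hn, ?_⟩
    rw [smul_add]
    refine N.add_mem ?_ ?_
    · rw [mul_comm, mul_smul]; exact N.smul_mem _ ha
    · rw [mul_smul]; exact N.smul_mem _ hb
  smul_mem' := by
    rintro c a ⟨m, hm, ha⟩
    exact ⟨m, hm, by rw [smul_comm]; exact N.smul_mem _ ha⟩

theorem mem_pureClosure {Q : Type*} [AddCommGroup Q] {N : Submodule ℤ Q} {h : Q} :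
    h ∈ pureClosure N ↔ ∃ m : ℤ, m ≠ 0 ∧ m • h ∈ N := Iff.rfl

theorem pureClosure_mono {Q : Type*} [AddCommGroup Q] {N N' : Submodule ℤ Q} (h : N ≤ N') :
    pureClosure N ≤ pureClosure N' := fun _ ⟨m, hm, hx⟩ => ⟨m, hm, h hx⟩

theorem le_pureClosure {Q : Type*} [AddCommGroup Q] (N : Submodule ℤ Q) :
    N ≤ pureClosure N := fun _ hx => ⟨1, one_ne_zero, by simpa using hx⟩

instance {Q : Type*} [AddCommGroup Q] (N : Submodule ℤ Q) :
    Module.IsTorsionFree ℤ (Q ⧸ pureClosure N) := by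
  refine Module.IsTorsionFree.of_smul_eq_zero fun r m hrm => ?_
  obtain ⟨x, rfl⟩ := (pureClosure N).mkQ_surjective m
  by_contra! hcon
  refine hcon.2 ?_
  rw [← map_smul] at hrm
  have h1 : r • x ∈ pureClosure N := (Submodule.Quotient.mk_eq_zero _).1 hrm
  obtain ⟨k, hk, hkx⟩ := h1
  have : x ∈ pureClosure N := ⟨k * r, mul_ne_zero hk hcon.1, by rwa [mul_smul]⟩
  simpa using this

/-- Pontryagin's criterion: a countable torsion-free group in which the purification of every
finitely generated subgroup is finitely generated is free. -/
theorem free_of_countable {Q : Type*} [AddCommGroup Q] [Countable Q] [Module.IsTorsionFree ℤ Q]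
    (hfg : ∀ T : Set Q, T.Finite → Module.Finite ℤ (pureClosure (Submodule.span ℤ T))) :
    Module.Free ℤ Q := by
  obtain ⟨e, he⟩ := exists_surjective_nat Q
  let L : ℕ → Submodule ℤ Q := fun n => pureClosure (Submodule.span ℤ (e '' Set.Iio n))
  have hLmono : Monotone L := fun m n hmn =>
    pureClosure_mono (Submodule.span_mono (Set.image_mono (Set.Iio_subset_Iio hmn)))
  have heL : ∀ n, e n ∈ L (n + 1) := fun n =>
    le_pureClosure _ (Submodule.subset_span ⟨n, by simp, rfl⟩)
  have hL0 : L 0 = ⊥ := by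
    rw [eq_bot_iff]
    rintro x ⟨m, hm, hx⟩
    have h0 : m • x = 0 := by simpa using hx
    simpa [hm] using h0
  refine free_of_devissage (fun N => N = ⊤ ∨ ∃ n, N = L n) (Or.inr ⟨0, hL0.symm⟩) ?_ ?_
  · intro c hc _ hne
    by_cases hb : ∃ n, ∀ N ∈ c, N ≤ L n
    · right
      -- the chain attains its least bound `L n`: some member is not below `L (n - 1)`
      have hmin := Nat.find_spec hb
      refine ⟨Nat.find hb, le_antisymm (sSup_le hmin) ?_⟩
      by_cases h0 : Nat.find hb = 0
      · rw [h0, hL0]; exact bot_le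
      obtain ⟨k, hk⟩ := Nat.exists_eq_succ_of_ne_zero h0
      have hlt := Nat.find_min hb (m := k) (by omega)
      push Not at hlt
      obtain ⟨N, hN, hNk⟩ := hlt
      refine le_trans ?_ (le_sSup hN)
      rcases hc N hN with rfl | ⟨n, rfl⟩
      · exact le_top
      · refine hLmono ?_
        by_contra hcon
        exact hNk (hLmono (by omega))
    · left
      push Not at hb
      rw [eq_top_iff]
      rintro x -
      obtain ⟨n, rfl⟩ := he x
      obtain ⟨N, hN, hNn⟩ := hb (n + 1)
      refine le_sSup hN ?_
      rcases hc N hN with rfl | ⟨m, rfl⟩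
      · trivial
      · refine hLmono ?_ (heL n)
        by_contra hcon
        exact hNn (hLmono (by omega))
  · intro N hN hNt
    rcases hN with rfl | ⟨n, rfl⟩
    · exact absurd rfl hNt
    obtain ⟨x, hx⟩ : ∃ x, x ∉ L n := by
      by_contra! hcon
      exact hNt (eq_top_iff.2 fun x _ => hcon x)
    obtain ⟨k, rfl⟩ := he x
    have hnk : n ≤ k + 1 := by
      by_contra hcon
      exact hx (hLmono (by omega) (heL k))
    refine ⟨L (k + 1), Or.inr ⟨_, rfl⟩,
      lt_of_le_of_ne (hLmono hnk) fun h => hx (h ▸ heL k), ?_⟩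
    have := hfg (e '' Set.Iio (k + 1)) ((Set.finite_Iio _).image _)
    have : Module.Finite ℤ ((L (k + 1)).map (L n).mkQ) := by
      have h1 : (L (k + 1)).FG := Module.Finite.iff_fg.1 this
      exact Module.Finite.iff_fg.2 (h1.map _)
    have : Module.IsTorsionFree ℤ (Q ⧸ L n) := by dsimp only [L]; infer_instance
    infer_instance

/-- Specker: a countable group embedding into `ℤ^ω` is free. -/
theorem free_of_countable_of_injective {H : Type*} [AddCommGroup H] [Countable H]
    (φ : H →ₗ[ℤ] (ℕ → ℤ)) (hφ : Function.Injective φ) : Module.Free ℤ H := by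
  have : Module.IsTorsionFree ℤ H :=
    hφ.moduleIsTorsionFree φ (fun r m => map_smul φ r m)
  refine free_of_countable fun T hT => ?_
  -- `V` is the finite-dimensional rational span of `T`; finitely many coordinates separate it
  let ι : H →ₗ[ℤ] (ℕ → ℚ) :=
    { toFun := fun h i => (φ h i : ℚ)
      map_add' := fun a b => by ext i; simp
      map_smul' := fun a b => by ext i; simp }
  let V : Submodule ℚ (ℕ → ℚ) := Submodule.span ℚ (ι '' T)
  have : FiniteDimensional ℚ V := FiniteDimensional.span_of_finite ℚ (hT.image _)
  let K : ℕ →o (Submodule ℚ V)ᵒᵈ :=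
    { toFun := fun n => OrderDual.toDual
        { carrier := {v | ∀ i < n, (v : ℕ → ℚ) i = 0}
          zero_mem' := by simp
          add_mem' := fun {a b} ha hb i hi => by simp [ha i hi, hb i hi]
          smul_mem' := fun c a ha i hi => by simp [ha i hi] }
      monotone' := fun m n hmn => by
        rw [OrderDual.toDual_le_toDual]
        intro v hv i hi
        exact hv i (lt_of_lt_of_le hi hmn) }
  obtain ⟨n, hn⟩ := IsArtinian.monotone_stabilizes K
  have hsep : ∀ v : V, (∀ i < n, (v : ℕ → ℚ) i = 0) → v = 0 := by
    intro v hv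
    ext i
    have h1 : v ∈ OrderDual.ofDual (K n) := hv
    rw [hn (max n (i + 1)) (le_max_left _ _)] at h1
    exact h1 i (by simp)
  have hspan : ∀ x ∈ Submodule.span ℤ T, ι x ∈ V := by
    intro x hx
    induction hx using Submodule.span_induction with
    | mem x hx => exact Submodule.subset_span ⟨x, hx, rfl⟩
    | zero => simp
    | add x y _ _ hx hy => rw [map_add]; exact V.add_mem hx hy
    | smul a x _ hx => rw [map_smul]; exact V.toAddSubgroup.zsmul_mem hx a
  have hpure : ∀ x ∈ pureClosure (Submodule.span ℤ T), ι x ∈ V := by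
    rintro x ⟨m, hm, hx⟩
    have h1 := hspan _ hx
    have hm' : (m : ℚ) ≠ 0 := by exact_mod_cast hm
    have h2 : ι x = (m : ℚ)⁻¹ • ι (m • x) := by
      ext i; simp [ι, hm']
    rw [h2]
    exact V.smul_mem _ h1
  let π : pureClosure (Submodule.span ℤ T) →ₗ[ℤ] (Fin n → ℤ) :=
    (LinearMap.funLeft ℤ ℤ (fun i : Fin n => (i : ℕ))) ∘ₗ φ ∘ₗ Submodule.subtype _
  refine Module.Finite.of_injective π ?_
  rw [← LinearMap.ker_eq_bot, LinearMap.ker_eq_bot']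
  rintro ⟨x, hx⟩ hπ
  have h1 := hsep ⟨ι x, hpure x hx⟩ (fun i hi => by
    have := congrFun hπ ⟨i, hi⟩
    simpa [π, ι, LinearMap.funLeft_apply] using this)
  have h2 : φ x = 0 := by
    ext i
    have := congrFun (congrArg Subtype.val h1) i
    simpa [ι] using this
  ext
  exact hφ (by simpa using h2)

/-! ### Groups embedded in direct sums of rational groups -/

/-- The subgroup of `ℚ` consisting of the fractions whose denominator may be taken to be a product
of distinct elements of `A`. -/
def ratSub (A : Set ℕ) : AddSubgroup ℚ where
  carrier := {q | ∃ s : Finset ℕ, ↑s ⊆ A ∧ ∃ z : ℤ, ((∏ p ∈ s, p : ℕ) : ℚ) * q = z}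
  zero_mem' := ⟨∅, by simp, 0, by simp⟩
  add_mem' := by
    rintro a b ⟨s, hs, z, hz⟩ ⟨t, ht, y, hy⟩
    obtain ⟨c, hc⟩ := Finset.prod_dvd_prod_of_subset s (s ∪ t) (fun p => p) Finset.subset_union_left
    obtain ⟨d, hd⟩ := Finset.prod_dvd_prod_of_subset t (s ∪ t) (fun p => p) Finset.subset_union_right
    refine ⟨s ∪ t, by simp [hs, ht], c * z + d * y, ?_⟩
    rw [mul_add]
    nth_rewrite 1 [hc]
    rw [hd]
    push_cast at hz hy ⊢
    rw [← hz, ← hy]; ring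
  neg_mem' := by
    rintro a ⟨s, hs, z, hz⟩
    exact ⟨s, hs, -z, by rw [mul_neg, hz]; simp⟩

/-- `v` maps into the direct sum of the groups `ratSub (P η)`, `η ∈ A`. -/
def IsAdm {X H : Type*} [AddCommGroup H] (P : X → Set ℕ) (A : Set X)
    (v : H →ₗ[ℤ] (X →₀ ℚ)) : Prop :=
  ∀ h, (∀ η, v h η ∈ ratSub (P η)) ∧ ((v h).support : Set X) ⊆ A

/-- The elements with integral image under `v`. -/
def integralPart {X H : Type*} [AddCommGroup H] (v : H →ₗ[ℤ] (X →₀ ℚ)) : Submodule ℤ H where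
  carrier := {h | ∀ η, ∃ z : ℤ, v h η = z}
  zero_mem' := fun η => ⟨0, by simp⟩
  add_mem' := by
    intro a b ha hb η
    obtain ⟨z, hz⟩ := ha η
    obtain ⟨y, hy⟩ := hb η
    exact ⟨z + y, by simp [hz, hy]⟩
  smul_mem' := by
    intro c a ha η
    obtain ⟨z, hz⟩ := ha η
    exact ⟨c * z, by simp [hz]⟩

theorem integralPart_fg {X H : Type*} [AddCommGroup H] {P : X → Set ℕ} {A : Set X}
    {v : H →ₗ[ℤ] (X →₀ ℚ)} (hv : IsAdm P A v) (hinj : Function.Injective v) (hA : A.Finite) :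
    (integralPart v).FG := by
  let S : Submodule ℤ (X →₀ ℚ) := Submodule.span ℤ ((fun η => Finsupp.single η (1 : ℚ)) '' A)
  have hS : Module.Finite ℤ S := Module.Finite.span_of_finite ℤ (hA.image _)
  have hmem : ∀ h ∈ integralPart v, v h ∈ S := by
    intro h hh
    rw [← Finsupp.sum_single (v h)]
    refine S.sum_mem fun η hη => ?_
    obtain ⟨z, hz⟩ := hh η
    have : Finsupp.single η (v h η) = z • Finsupp.single η (1 : ℚ) := by
      rw [hz, Finsupp.smul_single]; simp
    simp only [this]
    exact S.smul_mem _ (Submodule.subset_span ⟨η, (hv h).2 hη, rfl⟩)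
  let g : integralPart v →ₗ[ℤ] S := v.restrict hmem
  have : Module.Finite ℤ (integralPart v) := Module.Finite.of_injective g
    (fun a b hab => Subtype.ext (hinj (congrArg Subtype.val hab)))
  exact Module.Finite.iff_fg.1 this

/-- A common squarefree denominator for `v h`. -/
theorem IsAdm.exists_denom {X H : Type*} [AddCommGroup H] {P : X → Set ℕ} {A : Set X}
    {v : H →ₗ[ℤ] (X →₀ ℚ)} (hv : IsAdm P A v) (h : H) :
    ∃ s : Finset ℕ, (∀ p ∈ s, ∃ η ∈ A, p ∈ P η) ∧
      ((∏ p ∈ s, p : ℕ) : ℤ) • h ∈ integralPart v := by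
  choose s hs z hz using (hv h).1
  refine ⟨(v h).support.biUnion s, ?_, ?_⟩
  · intro p hp
    obtain ⟨η, hη, hp⟩ := Finset.mem_biUnion.1 hp
    exact ⟨η, (hv h).2 hη, hs η hp⟩
  · intro η
    by_cases h0 : v h η = 0
    · exact ⟨0, by simp [h0]⟩
    obtain ⟨c, hc⟩ := Finset.prod_dvd_prod_of_subset (s η) ((v h).support.biUnion s) (fun p => p)
      (Finset.subset_biUnion_of_mem s (Finsupp.mem_support_iff.2 h0))
    refine ⟨c * z η, ?_⟩
    rw [hc, map_smul, Finsupp.smul_apply, zsmul_eq_mul]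
    have := hz η
    push_cast at this ⊢
    rw [← this]; ring

theorem IsAdm.comp {X H H' : Type*} [AddCommGroup H] [AddCommGroup H'] {P : X → Set ℕ} {A : Set X}
    {v : H →ₗ[ℤ] (X →₀ ℚ)} (hv : IsAdm P A v) (g : H' →ₗ[ℤ] H) : IsAdm P A (v ∘ₗ g) :=
  fun h => hv (g h)

/-- If a group embeds in two finite sums of rational groups with disjoint index sets, then only
finitely many primes occur in denominators for both embeddings; with `e` their product,
multiplication by `e` embeds the group into the sum of the two (finitely generated) integral
parts. -/
theorem finite_of_isAdm {X L : Type*} [AddCommGroup L] {P : X → Set ℕ}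
    (hprime : ∀ η, ∀ p ∈ P η, p.Prime) (hdisj : ∀ η ν, η ≠ ν → (P η ∩ P ν).Finite)
    {A B : Set X} {v w : L →ₗ[ℤ] (X →₀ ℚ)} (hv : IsAdm P A v) (hw : IsAdm P B w)
    (hvi : Function.Injective v) (hwi : Function.Injective w)
    (hA : A.Finite) (hB : B.Finite) (hAB : Disjoint A B) : Module.Finite ℤ L := by
  have htf : Module.IsTorsionFree ℤ L := hvi.moduleIsTorsionFree v (fun r m => map_smul v r m)
  have hE : (⋃ η ∈ A, ⋃ ν ∈ B, P η ∩ P ν).Finite :=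
    hA.biUnion fun η hη => hB.biUnion fun ν hν =>
      hdisj η ν (fun h => Set.disjoint_left.1 hAB hη (h ▸ hν))
  let E : Finset ℕ := hE.toFinset
  have hEp : ∀ p ∈ E, p.Prime := by
    intro p hp
    simp only [E, Set.Finite.mem_toFinset, Set.mem_iUnion] at hp
    obtain ⟨η, -, ν, -, hp⟩ := hp
    exact hprime η p hp.1
  let e : ℕ := ∏ p ∈ E, p
  have he : (e : ℤ) ≠ 0 := by
    exact_mod_cast Finset.prod_ne_zero_iff.2 fun p hp => (hEp p hp).ne_zero
  let S := integralPart v ⊔ integralPart w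
  have hS : Module.Finite ℤ S := Module.Finite.iff_fg.2
    ((integralPart_fg hv hvi hA).sup (integralPart_fg hw hwi hB))
  have hmem : ∀ h, (e : ℤ) • h ∈ S := by
    intro h
    obtain ⟨s, hs, hsv⟩ := hv.exists_denom h
    obtain ⟨t, ht, htw⟩ := hw.exists_denom h
    have hsub : s ∩ t ⊆ E := by
      intro p hp
      obtain ⟨η, hη, hpη⟩ := hs p (Finset.mem_inter.1 hp).1
      obtain ⟨ν, hν, hpν⟩ := ht p (Finset.mem_inter.1 hp).2
      simp only [E, Set.Finite.mem_toFinset, Set.mem_iUnion]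
      exact ⟨η, hη, ν, hν, hpη, hpν⟩
    have hsp : ∀ p ∈ s, p.Prime := fun p hp => by
      obtain ⟨η, -, hη⟩ := hs p hp; exact hprime η p hη
    have htp : ∀ p ∈ t, p.Prime := fun p hp => by
      obtain ⟨η, -, hη⟩ := ht p hp; exact hprime η p hη
    have hcop : Nat.Coprime (∏ p ∈ s \ t, p) (∏ p ∈ t \ s, p) := by
      refine Nat.Coprime.prod_left fun p hp => Nat.Coprime.prod_right fun q hq => ?_
      rw [Finset.mem_sdiff] at hp hq
      refine (Nat.coprime_primes (hsp p hp.1) (htp q hq.1)).2 ?_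
      rintro rfl
      exact hp.2 hq.1
    obtain ⟨a, b, hab⟩ := Nat.isCoprime_iff_coprime.2 hcop
    have h1 : ∏ p ∈ s, p = (∏ p ∈ s ∩ t, p) * ∏ p ∈ s \ t, p :=
      (Finset.prod_inter_mul_prod_sdiff s t _).symm
    have h2 : ∏ p ∈ t, p = (∏ p ∈ s ∩ t, p) * ∏ p ∈ t \ s, p := by
      rw [Finset.inter_comm]; exact (Finset.prod_inter_mul_prod_sdiff t s _).symm
    have h3 : ((∏ p ∈ s ∩ t, p : ℕ) : ℤ) • h ∈ S := by
      have : ((∏ p ∈ s ∩ t, p : ℕ) : ℤ) • h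
          = a • ((∏ p ∈ s, p : ℕ) : ℤ) • h + b • ((∏ p ∈ t, p : ℕ) : ℤ) • h := by
        rw [h1, h2, smul_smul, smul_smul, ← add_smul]
        congr 1
        rw [Nat.cast_mul, Nat.cast_mul]
        linear_combination (-((∏ p ∈ s ∩ t, p : ℕ) : ℤ)) * hab
      rw [this]
      exact Submodule.add_mem_sup (Submodule.smul_mem _ _ hsv) (Submodule.smul_mem _ _ htw)
    obtain ⟨c, hc⟩ := Finset.prod_dvd_prod_of_subset _ _ (fun p => p) hsub
    have h4 : (e : ℤ) = c * ((∏ p ∈ s ∩ t, p : ℕ) : ℤ) := by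
      rw [← Nat.cast_mul, mul_comm]; exact congrArg _ hc
    rw [h4, mul_smul]
    exact S.smul_mem _ h3
  let g : L →ₗ[ℤ] S := (LinearMap.lsmul ℤ L (e : ℤ)).codRestrict S hmem
  refine Module.Finite.of_injective g fun a b hab => ?_
  have : (e : ℤ) • a = (e : ℤ) • b := congrArg Subtype.val hab
  exact smul_right_injective L he this

theorem support_of_mem_pureClosure {X H : Type*} [AddCommGroup H] (v : H →ₗ[ℤ] (X →₀ ℚ))
    (T : Set H) {h : H} (hh : h ∈ pureClosure (Submodule.span ℤ T)) :
    ((v h).support : Set X) ⊆ ⋃ t ∈ T, ((v t).support : Set X) := by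
  obtain ⟨m, hm, hx⟩ := hh
  have key : ∀ x ∈ Submodule.span ℤ T, ((v x).support : Set X) ⊆ ⋃ t ∈ T, ((v t).support : Set X) := by
    intro x hx
    induction hx using Submodule.span_induction with
    | mem x hx => exact Set.subset_biUnion_of_mem (u := fun t => ((v t).support : Set X)) hx
    | zero => simp
    | add x y _ _ hx hy =>
      rw [map_add]
      refine (Finset.coe_subset.2 Finsupp.support_add).trans ?_
      rw [Finset.coe_union]; exact Set.union_subset hx hy
    | smul a x _ hx =>
      rw [map_smul]
      exact (Finset.coe_subset.2 Finsupp.support_smul).trans hx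
  refine subset_trans ?_ (key _ hx)
  intro η hη
  simp only [Finset.mem_coe, Finsupp.mem_support_iff] at hη ⊢
  simpa [hm] using hη

theorem free_of_isAdm_of_countable {X Q : Type*} [AddCommGroup Q] [Countable Q] {P : X → Set ℕ}
    (hprime : ∀ η, ∀ p ∈ P η, p.Prime) (hdisj : ∀ η ν, η ≠ ν → (P η ∩ P ν).Finite)
    {A B : Set X} {v w : Q →ₗ[ℤ] (X →₀ ℚ)} (hv : IsAdm P A v) (hw : IsAdm P B w)
    (hvi : Function.Injective v) (hwi : Function.Injective w)
    (hAB : Disjoint A B) : Module.Free ℤ Q := by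
  have htf : Module.IsTorsionFree ℤ Q := hvi.moduleIsTorsionFree v (fun r m => map_smul v r m)
  refine free_of_countable fun T hT => ?_
  let i := (pureClosure (Submodule.span ℤ T)).subtype
  have hi : Function.Injective i := Subtype.val_injective
  refine finite_of_isAdm (v := v ∘ₗ i) (w := w ∘ₗ i)
    (A := ⋃ t ∈ T, ((v t).support : Set X)) (B := ⋃ t ∈ T, ((w t).support : Set X)) hprime hdisj
    (fun h => ⟨(hv h).1, support_of_mem_pureClosure v T h.2⟩)
    (fun h => ⟨(hw h).1, support_of_mem_pureClosure w T h.2⟩)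
    (hvi.comp hi) (hwi.comp hi)
    (hT.biUnion fun t _ => Finset.finite_toSet _) (hT.biUnion fun t _ => Finset.finite_toSet _) ?_
  exact hAB.mono (Set.iUnion₂_subset fun t _ => (hv t).2) (Set.iUnion₂_subset fun t _ => (hw t).2)

/-! ### Closing off under two support functions -/

/-- The elements whose `v`-support is contained in `C`. -/
noncomputable def suppIn {X H : Type*} [AddCommGroup H] (v : H →ₗ[ℤ] (X →₀ ℚ)) (C : Set X) :
    Submodule ℤ H :=
  (Finsupp.supported ℚ ℤ C).comap v

theorem mem_suppIn {X H : Type*} [AddCommGroup H] {v : H →ₗ[ℤ] (X →₀ ℚ)} {C : Set X} {h : H} :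
    h ∈ suppIn v C ↔ ((v h).support : Set X) ⊆ C := Iff.rfl

theorem countable_suppIn {X H : Type*} [AddCommGroup H] {v : H →ₗ[ℤ] (X →₀ ℚ)}
    (hker : ((LinearMap.ker v : Submodule ℤ H) : Set H).Countable) {C : Set X}
    (hC : C.Countable) : ((suppIn v C : Submodule ℤ H) : Set H).Countable := by
  have := hC.to_subtype
  have hfib : ∀ u : X →₀ ℚ, {h | v h = u}.Countable := by
    intro u
    by_cases hu : ∃ h0, v h0 = u
    · obtain ⟨h0, rfl⟩ := hu
      refine (hker.image (fun k => k + h0)).mono fun h hh => ?_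
      have : v h = v h0 := hh
      exact ⟨h - h0, by simp [this], by simp⟩
    · refine Set.countable_empty.mono fun h hh => hu ⟨h, hh⟩
  have hrange : ((Finsupp.supported ℚ ℤ C : Submodule ℤ (X →₀ ℚ)) : Set (X →₀ ℚ)).Countable := by
    rw [← Set.countable_coe_iff]
    exact (Finsupp.supportedEquivFinsupp (M := ℚ) (R := ℤ) C).injective.countable
  refine (hrange.biUnion fun u _ => hfib u).mono fun h hh => ?_
  simp only [Set.mem_iUnion]
  exact ⟨v h, hh, rfl⟩

/-- Back-and-forth: countable sets can be enlarged to countable sets `C₁'`, `C₂'` such that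
`v`-support in `C₁'` and `w`-support in `C₂'` mean the same. -/
theorem exists_closed {X H : Type*} [AddCommGroup H] {v w : H →ₗ[ℤ] (X →₀ ℚ)}
    (hv : ((LinearMap.ker v : Submodule ℤ H) : Set H).Countable)
    (hw : ((LinearMap.ker w : Submodule ℤ H) : Set H).Countable)
    {C₁ C₂ : Set X} (hC₁ : C₁.Countable) (hC₂ : C₂.Countable) :
    ∃ C₁' C₂' : Set X, C₁ ⊆ C₁' ∧ C₂ ⊆ C₂' ∧ C₁'.Countable ∧ C₂'.Countable ∧
      suppIn v C₁' = suppIn w C₂' := by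
  let W : Set X → Set X := fun C => C₂ ∪ ⋃ h ∈ suppIn v C, ((w h).support : Set X)
  let g : Set X → Set X := fun C => C ∪ ⋃ h ∈ suppIn w (W C), ((v h).support : Set X)
  have hWc : ∀ C, C.Countable → (W C).Countable := fun C hC =>
    hC₂.union ((countable_suppIn hv hC).biUnion fun h _ => (Finset.finite_toSet _).countable)
  have hgc : ∀ C, C.Countable → (g C).Countable := fun C hC =>
    hC.union ((countable_suppIn hw (hWc C hC)).biUnion fun h _ =>
      (Finset.finite_toSet _).countable)
  let D : ℕ → Set X := fun n => g^[n] C₁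
  have hD0 : D 0 = C₁ := rfl
  have hDs : ∀ n, D (n + 1) = g (D n) := fun n => Function.iterate_succ_apply' g n C₁
  have hDc : ∀ n, (D n).Countable := by
    intro n
    induction n with
    | zero => exact hC₁
    | succ n ih => rw [hDs]; exact hgc _ ih
  have hDm : Monotone D := monotone_nat_of_le_succ fun n => by
    rw [hDs]; exact Set.subset_union_left
  have hWm : Monotone W := fun C C' h => Set.union_subset_union_right _
    (Set.biUnion_subset_biUnion_left fun x (hx : x ∈ suppIn v C) => subset_trans hx h)
  have hfin : ∀ (u : X →₀ ℚ) (E : ℕ → Set X), Monotone E → (u.support : Set X) ⊆ ⋃ n, E n →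
      ∃ n, (u.support : Set X) ⊆ E n := fun u E hE h =>
    hE.directed_le.exists_mem_subset_of_finset_subset_biUnion h
  refine ⟨⋃ n, D n, ⋃ n, W (D n), ?_, ?_, Set.countable_iUnion hDc,
    Set.countable_iUnion fun n => hWc _ (hDc n), ?_⟩
  · exact Set.subset_iUnion D 0
  · exact Set.subset_union_left.trans (Set.subset_iUnion (fun n => W (D n)) 0)
  · ext h
    rw [mem_suppIn, mem_suppIn]
    constructor
    · intro hh
      obtain ⟨n, hn⟩ := hfin _ D hDm hh
      refine subset_trans ?_ (Set.subset_iUnion (fun n => W (D n)) n)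
      exact (Set.subset_biUnion_of_mem (u := fun h => ((w h).support : Set X))
        (show h ∈ suppIn v (D n) from hn)).trans Set.subset_union_right
    · intro hh
      obtain ⟨n, hn⟩ := hfin _ (fun n => W (D n)) (hWm.comp hDm) hh
      refine subset_trans ?_ (Set.subset_iUnion D (n + 1))
      rw [hDs]
      exact (Set.subset_biUnion_of_mem (u := fun h => ((v h).support : Set X))
        (show h ∈ suppIn w (W (D n)) from hn)).trans Set.subset_union_right

/-- `v` with the coordinates in `C` deleted, as a map on the quotient by the kernel `N` of that
map. -/
noncomputable def deleted {X H : Type*} [AddCommGroup H] (v : H →ₗ[ℤ] (X →₀ ℚ)) (C : Set X)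
    (N : Submodule ℤ H) (hN : N = suppIn v C) : (H ⧸ N) →ₗ[ℤ] (X →₀ ℚ) :=
  N.liftQ ((Finsupp.filterAddHom (fun η => η ∉ C)).toIntLinearMap ∘ₗ v) (by
    subst hN
    intro h hh
    ext η
    change (if η ∉ C then v h η else 0) = 0
    split_ifs with hη
    · rfl
    · by_contra h0
      exact hη (hh (Finsupp.mem_support_iff.2 h0)))

theorem deleted_mk {X H : Type*} [AddCommGroup H] (v : H →ₗ[ℤ] (X →₀ ℚ)) (C : Set X)
    (N : Submodule ℤ H) (hN : N = suppIn v C) (h : H) (η : X) :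
    deleted v C N hN (N.mkQ h) η = if η ∈ C then 0 else v h η := by
  change (if η ∉ C then v h η else 0) = _
  rw [ite_not]

theorem deleted_injective {X H : Type*} [AddCommGroup H] (v : H →ₗ[ℤ] (X →₀ ℚ)) (C : Set X)
    (N : Submodule ℤ H) (hN : N = suppIn v C) : Function.Injective (deleted v C N hN) := by
  rw [← LinearMap.ker_eq_bot, LinearMap.ker_eq_bot']
  intro q hq
  obtain ⟨h, rfl⟩ := N.mkQ_surjective q
  have : h ∈ N := by
    rw [hN, mem_suppIn]
    intro η hη
    by_contra hC
    have h1 := DFunLike.congr_fun hq η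
    rw [deleted_mk, if_neg hC] at h1
    exact (Finsupp.mem_support_iff.1 hη) h1
  exact (Submodule.Quotient.mk_eq_zero _).2 this

theorem IsAdm.deleted {X H : Type*} [AddCommGroup H] {P : X → Set ℕ} {A : Set X}
    {v : H →ₗ[ℤ] (X →₀ ℚ)} (hv : IsAdm P A v) (C : Set X)
    (N : Submodule ℤ H) (hN : N = suppIn v C) : IsAdm P (A \ C) (deleted v C N hN) := by
  intro q
  obtain ⟨h, rfl⟩ := N.mkQ_surjective q
  refine ⟨fun η => ?_, fun η hη => ?_⟩
  · rw [deleted_mk]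
    split_ifs
    · exact zero_mem _
    · exact (hv h).1 η
  · rw [Finset.mem_coe, Finsupp.mem_support_iff, deleted_mk] at hη
    split_ifs at hη with hC
    · exact absurd rfl hη
    · exact ⟨(hv h).2 (Finsupp.mem_support_iff.2 hη), hC⟩

/-- The union of the `v`-supports of the elements of `N`. -/
def suppUnion {X H : Type*} [AddCommGroup H] (v : H →ₗ[ℤ] (X →₀ ℚ)) (N : Submodule ℤ H) :
    Set X := ⋃ n ∈ N, ((v n).support : Set X)

theorem suppUnion_sSup {X H : Type*} [AddCommGroup H] (v : H →ₗ[ℤ] (X →₀ ℚ))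
    {c : Set (Submodule ℤ H)} (hc : IsChain (· ≤ ·) c) (hne : c.Nonempty)
    (hcl : ∀ N ∈ c, N = suppIn v (suppUnion v N)) :
    sSup c = suppIn v (suppUnion v (sSup c)) := by
  apply le_antisymm
  · intro h hh
    exact Set.subset_biUnion_of_mem (u := fun h => ((v h).support : Set X)) hh
  · intro h hh
    have := hne.to_subtype
    have hdir : DirectedOn (· ≤ ·) c := hc.directedOn
    have h1 : ((v h).support : Set X) ⊆ ⋃ N : c, suppUnion v (N : Submodule ℤ H) := by
      intro η hη
      obtain ⟨n, hn, hηn⟩ := Set.mem_iUnion₂.1 (hh hη)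
      obtain ⟨N, hN, hnN⟩ := (Submodule.mem_sSup_of_directed hne hdir).1 hn
      exact Set.mem_iUnion.2 ⟨⟨N, hN⟩, Set.mem_iUnion₂.2 ⟨n, hnN, hηn⟩⟩
    have hd : Directed (· ⊆ ·) fun N : c => suppUnion v (N : Submodule ℤ H) := by
      intro N N'
      obtain ⟨M, hM, h1, h2⟩ := hdir N N.2 N' N'.2
      exact ⟨⟨M, hM⟩, Set.biUnion_subset_biUnion_left h1, Set.biUnion_subset_biUnion_left h2⟩
    obtain ⟨N, hN⟩ := hd.exists_mem_subset_of_finset_subset_biUnion h1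
    refine le_sSup N.2 ?_
    rw [hcl N N.2]
    exact hN

/-- The preimage of a subgroup of `H / N` that is defined by a support condition is determined by
the union of its `v`-supports. -/
theorem closed_comap {X H : Type*} [AddCommGroup H] (v : H →ₗ[ℤ] (X →₀ ℚ)) (C : Set X)
    (N : Submodule ℤ H) (hN : N = suppIn v C) (D : Set X) (N' : Submodule ℤ H)
    (hN' : N' = (suppIn (deleted v C N hN) D).comap N.mkQ) :
    N' = suppIn v (suppUnion v N') := by
  apply le_antisymm
  · intro h hh
    exact Set.subset_biUnion_of_mem (u := fun h => ((v h).support : Set X)) hh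
  · intro h hh
    rw [hN', Submodule.mem_comap, mem_suppIn]
    intro η hη
    rw [Finset.mem_coe, Finsupp.mem_support_iff, deleted_mk] at hη
    split_ifs at hη with hC
    · exact absurd rfl hη
    obtain ⟨n, hn, hηn⟩ := Set.mem_iUnion₂.1 (hh (Finsupp.mem_support_iff.2 hη))
    rw [hN'] at hn
    refine hn ?_
    rw [Finset.mem_coe, Finsupp.mem_support_iff, deleted_mk, if_neg hC]
    exact Finsupp.mem_support_iff.1 hηn

/-- A group embedding in two sums of rational groups with disjoint index sets is free: dévissage
along the subgroups that are closed for both support functions. -/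
theorem free_of_isAdm {X Q : Type*} [AddCommGroup Q] {P : X → Set ℕ}
    (hprime : ∀ η, ∀ p ∈ P η, p.Prime) (hdisj : ∀ η ν, η ≠ ν → (P η ∩ P ν).Finite)
    {A B : Set X} {v w : Q →ₗ[ℤ] (X →₀ ℚ)} (hv : IsAdm P A v) (hw : IsAdm P B w)
    (hvi : Function.Injective v) (hwi : Function.Injective w)
    (hAB : Disjoint A B) : Module.Free ℤ Q := by
  have hbot : ∀ u : Q →ₗ[ℤ] (X →₀ ℚ), Function.Injective u →
      (⊥ : Submodule ℤ Q) = suppIn u (suppUnion u ⊥) := by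
    intro u hu
    refine (eq_bot_iff.2 fun h hh => ?_).symm
    rw [mem_suppIn] at hh
    have : u h = 0 := by
      simpa [suppUnion] using hh
    exact hu (by simpa using this)
  refine free_of_devissage
    (fun N => N = suppIn v (suppUnion v N) ∧ N = suppIn w (suppUnion w N))
    ⟨hbot v hvi, hbot w hwi⟩ ?_ ?_
  · intro c hc hch hne
    exact ⟨suppUnion_sSup v hch hne fun N hN => (hc N hN).1,
      suppUnion_sSup w hch hne fun N hN => (hc N hN).2⟩
  · rintro N ⟨hNv, hNw⟩ hNt
    obtain ⟨x, hx⟩ : ∃ x, x ∉ N := by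
      by_contra! hcon
      exact hNt (eq_top_iff.2 fun x _ => hcon x)
    have hvi' := deleted_injective v _ N hNv
    have hwi' := deleted_injective w _ N hNw
    have hv' := hv.deleted _ N hNv
    have hw' := hw.deleted _ N hNw
    set v' := deleted v _ N hNv with hv'def
    set w' := deleted w _ N hNw with hw'def
    have hkv : ((LinearMap.ker v' : Submodule ℤ (Q ⧸ N)) : Set (Q ⧸ N)).Countable := by
      rw [LinearMap.ker_eq_bot.2 hvi']; simp
    have hkw : ((LinearMap.ker w' : Submodule ℤ (Q ⧸ N)) : Set (Q ⧸ N)).Countable := by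
      rw [LinearMap.ker_eq_bot.2 hwi']; simp
    obtain ⟨C₁, C₂, h1, -, hc1, hc2, heq⟩ := exists_closed hkv hkw
      (C₁ := ((v' (N.mkQ x)).support : Set X)) (C₂ := ∅)
      (Finset.finite_toSet _).countable Set.countable_empty
    refine ⟨(suppIn v' C₁).comap N.mkQ, ⟨?_, ?_⟩, ?_, ?_⟩
    · exact closed_comap v _ N hNv C₁ _ rfl
    · exact closed_comap w _ N hNw C₂ _ (by rw [heq])
    · refine lt_of_le_of_ne (N.le_comap_mkQ _) fun h => hx ?_
      rw [h]; exact h1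
    · rw [Submodule.map_comap_eq_of_surjective N.mkQ_surjective]
      have : Countable (suppIn v' C₁) := (countable_suppIn hkv hc1).to_subtype
      have hi : Function.Injective (suppIn v' C₁).subtype := Subtype.val_injective
      exact free_of_isAdm_of_countable hprime hdisj (hv'.comp (suppIn v' C₁).subtype)
        (hw'.comp (suppIn v' C₁).subtype) (hvi'.comp hi) (hwi'.comp hi)
        (hAB.mono Set.sdiff_subset Set.sdiff_subset)

/-- With countable kernels and index sets meeting in a countable set, the problem reduces to
`free_of_isAdm` modulo a countable subgroup. -/
theorem free_of_countable_ker {X H : Type*} [AddCommGroup H] {P : X → Set ℕ}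
    (hprime : ∀ η, ∀ p ∈ P η, p.Prime) (hdisj : ∀ η ν, η ≠ ν → (P η ∩ P ν).Finite)
    {A B : Set X} {v w : H →ₗ[ℤ] (X →₀ ℚ)} (hv : IsAdm P A v) (hw : IsAdm P B w)
    (hkv : ((LinearMap.ker v : Submodule ℤ H) : Set H).Countable)
    (hkw : ((LinearMap.ker w : Submodule ℤ H) : Set H).Countable)
    (hAB : (A ∩ B).Countable)
    (hfree : ∀ K : Submodule ℤ H, (K : Set H).Countable → Module.Free ℤ K) :
    Module.Free ℤ H := by
  obtain ⟨C₁, C₂, h1, -, hc1, -, heq⟩ := exists_closed hkv hkw hAB Set.countable_empty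
  have := hfree _ (countable_suppIn hkv hc1)
  have : Module.Free ℤ (H ⧸ suppIn v C₁) := by
    refine free_of_isAdm hprime hdisj (hv.deleted C₁ _ rfl) (hw.deleted C₂ _ heq)
      (deleted_injective _ _ _ _) (deleted_injective _ _ _ _) ?_
    rw [Set.disjoint_left]
    rintro η ⟨hηA, hη⟩ ⟨hηB, -⟩
    exact hη (h1 ⟨hηA, hηB⟩)
  exact free_of_quotient (suppIn v C₁)

/-! ### Coordinates on the groups `G_S` -/

/-- The rational function `i ↦ ∑ η, u η * (∏ {p ∈ P η : p < i}) * f η i` attached to a finitely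
supported `u`. Up to finitely many values, `x_{η,j}` arises from a multiple of the basis vector
at `η`. -/
noncomputable def ratFun {X : Type*} (P : X → Set ℕ) (f : X → ℕ → ℤ) :
    (X →₀ ℚ) →ₗ[ℚ] (ℕ → ℚ) :=
  Finsupp.linearCombination ℚ
    (fun η i => (∏ p ∈ (Finset.range i).filter (fun p => p ∈ P η), (p : ℚ)) * (f η i : ℚ))

theorem ratFun_apply {X : Type*} (P : X → Set ℕ) (f : X → ℕ → ℤ) (u : X →₀ ℚ) (i : ℕ) :
    ratFun P f u i = ∑ η ∈ u.support,
      u η * ((∏ p ∈ (Finset.range i).filter (fun p => p ∈ P η), (p : ℚ)) * (f η i : ℚ)) := by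
  simp [ratFun, Finsupp.linearCombination_apply, Finsupp.sum, Finset.sum_apply]

/-- Independence of the `f η` makes `u` recoverable from the germ of `ratFun P f u` at infinity:
there are arbitrarily large `i` at which one chosen `f η` is `1` and the others vanish. -/
theorem eq_zero_of_ratFun {X : Type*} {P : X → Set ℕ} {f : X → ℕ → ℤ}
    (hprime : ∀ η, ∀ p ∈ P η, p.Prime)
    (hind : ∀ (k : ℕ) (ηs : Fin k → X) (a : Fin k → ℤ), Function.Injective ηs →
      {i : ℕ | ∀ l, f (ηs l) i = a l}.Infinite)
    {u : X →₀ ℚ} (hu : ∀ᶠ i in Filter.atTop, ratFun P f u i = 0) : u = 0 := by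
  by_contra hne
  obtain ⟨η₀, hη₀⟩ := Finsupp.support_nonempty_iff.2 hne
  obtain ⟨n, hn⟩ := Filter.eventually_atTop.1 hu
  let e := u.support.equivFin.symm
  have hinf := hind u.support.card (fun l => (e l : X)) (fun l => if (e l : X) = η₀ then 1 else 0)
    (Subtype.val_injective.comp e.injective)
  obtain ⟨i, hi, hni⟩ := hinf.exists_gt n
  have hf : ∀ η ∈ u.support, f η i = if η = η₀ then 1 else 0 := by
    intro η hη
    have := hi (e.symm ⟨η, hη⟩)
    simpa using this
  have h0 := hn i hni.le
  rw [ratFun_apply, Finset.sum_eq_single η₀] at h0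
  · rw [hf η₀ hη₀] at h0
    simp only [if_true, Int.cast_one, mul_one, mul_eq_zero] at h0
    rcases h0 with h0 | h0
    · exact Finsupp.mem_support_iff.1 hη₀ h0
    · obtain ⟨p, hp, hp0⟩ := Finset.prod_eq_zero_iff.1 h0
      exact (hprime η₀ p (Finset.mem_filter.1 hp).2).ne_zero (by exact_mod_cast hp0)
  · intro η hη hne
    rw [hf η hη, if_neg hne]; simp
  · intro h; exact absurd hη₀ h

theorem exists_coord {X : Type*} {P : X → Set ℕ} {f : X → ℕ → ℤ}
    (hprime : ∀ η, ∀ p ∈ P η, p.Prime) {S : Set X} {g : ℕ → ℤ} (hg : g ∈ GS P f S) :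
    ∃ u : X →₀ ℚ, ((∀ η, u η ∈ ratSub (P η)) ∧ (u.support : Set X) ⊆ S) ∧
      ∀ᶠ i in Filter.atTop, (g i : ℚ) = ratFun P f u i := by
  induction hg using AddSubgroup.closure_induction with
  | mem g hg =>
    rcases hg with hg | ⟨η, hη, j, rfl⟩
    · refine ⟨0, ⟨fun η => zero_mem _, by simp⟩, ?_⟩
      have hfin : (Function.support g).Finite := hg
      obtain ⟨n, hn⟩ := hfin.bddAbove
      filter_upwards [Filter.eventually_gt_atTop n] with i hi
      have : g i = 0 := by
        by_contra h0
        exact absurd (hn h0) (not_le.2 hi)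
      simp [this]
    · let s : Finset ℕ := (Finset.range j).filter (fun p => p ∈ P η)
      have hs0 : (∏ p ∈ s, (p : ℚ)) ≠ 0 := Finset.prod_ne_zero_iff.2 fun p hp => by
        exact_mod_cast (hprime η p (Finset.mem_filter.1 hp).2).ne_zero
      refine ⟨Finsupp.single η (∏ p ∈ s, (p : ℚ))⁻¹, ⟨fun ν => ?_, fun ν hν => ?_⟩, ?_⟩
      · by_cases h : η = ν
        · subst h
          refine ⟨s, fun p hp => (Finset.mem_filter.1 hp).2, 1, ?_⟩
          simp only [Finsupp.single_eq_same]
          push_cast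
          exact mul_inv_cancel₀ hs0
        · rw [Finsupp.single_eq_of_ne (Ne.symm h)]; exact zero_mem _
      · have := Finsupp.support_single_subset hν
        rw [Finset.mem_singleton] at this
        exact this ▸ hη
      · filter_upwards [Filter.eventually_ge_atTop j] with i hi
        have hsplit : (∏ p ∈ (Finset.range i).filter (fun p => p ∈ P η), (p : ℚ)) =
            (∏ p ∈ s, (p : ℚ)) *
              ∏ p ∈ (Finset.range i).filter (fun p => p ∈ P η ∧ j ≤ p), (p : ℚ) := by
          rw [← Finset.prod_union]
          · congr 1
            ext p
            simp only [s, Finset.mem_union, Finset.mem_filter, Finset.mem_range]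
            constructor
            · rintro ⟨h1, h2⟩
              by_cases h3 : p < j
              · exact Or.inl ⟨h3, h2⟩
              · exact Or.inr ⟨h1, h2, not_lt.1 h3⟩
            · rintro (⟨h1, h2⟩ | ⟨h1, h2, -⟩)
              · exact ⟨by omega, h2⟩
              · exact ⟨h1, h2⟩
          · rw [Finset.disjoint_left]
            intro p hp hp'
            simp only [s, Finset.mem_filter, Finset.mem_range] at hp hp'
            omega
        rw [ratFun, Finsupp.linearCombination_single, Pi.smul_apply, smul_eq_mul, hsplit, xv]
        push_cast
        rw [mul_assoc, inv_mul_cancel_left₀ hs0]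
  | zero => exact ⟨0, ⟨fun η => zero_mem _, by simp⟩, by simp⟩
  | add a b _ _ ha hb =>
    obtain ⟨u, ⟨hu, hus⟩, hua⟩ := ha
    obtain ⟨t, ⟨ht, hts⟩, htb⟩ := hb
    refine ⟨u + t, ⟨fun η => add_mem (hu η) (ht η), ?_⟩, ?_⟩
    · refine (Finset.coe_subset.2 Finsupp.support_add).trans ?_
      rw [Finset.coe_union]; exact Set.union_subset hus hts
    · filter_upwards [hua, htb] with i h1 h2
      simp [h1, h2]
  | neg a _ ha =>
    obtain ⟨u, ⟨hu, hus⟩, hua⟩ := ha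
    refine ⟨-u, ⟨fun η => neg_mem (hu η), by rwa [Finsupp.support_neg]⟩, ?_⟩
    filter_upwards [hua] with i h1
    simp [h1]

/-- A subgroup of `G_S` maps, with countable kernel, to the direct sum of the groups
`ratSub (P η)`, `η ∈ S`. -/
theorem exists_isAdm {X H : Type*} [AddCommGroup H] {P : X → Set ℕ} {f : X → ℕ → ℤ}
    (hprime : ∀ η, ∀ p ∈ P η, p.Prime)
    (hind : ∀ (k : ℕ) (ηs : Fin k → X) (a : Fin k → ℤ), Function.Injective ηs →
      {i : ℕ | ∀ l, f (ηs l) i = a l}.Infinite)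
    {S : Set X} (φ : H →+ (ℕ → ℤ)) (hφ : Function.Injective φ) (hmem : ∀ h, φ h ∈ GS P f S) :
    ∃ v : H →ₗ[ℤ] (X →₀ ℚ), IsAdm P S v ∧
      ((LinearMap.ker v : Submodule ℤ H) : Set H).Countable := by
  choose v hadm hv using fun h => exists_coord hprime (hmem h)
  have hadd : ∀ a b, v (a + b) = v a + v b := by
    intro a b
    rw [← sub_eq_zero]
    refine eq_zero_of_ratFun hprime hind ?_
    filter_upwards [hv a, hv b, hv (a + b)] with i h1 h2 h3
    simp [← h1, ← h2, ← h3]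
  refine ⟨(AddMonoidHom.mk' v hadd).toIntLinearMap, hadm, ?_⟩
  have hZ : (Set.range fun u : ℕ →₀ ℤ => (u : ℕ → ℤ)).Countable := Set.countable_range _
  refine (hZ.preimage_of_injOn (f := φ) hφ.injOn).mono fun h hh => ?_
  have h0 : v h = 0 := hh
  have h1 := hv h
  rw [h0] at h1
  obtain ⟨n, hn⟩ := Filter.eventually_atTop.1 h1
  have hfin : (Function.support (φ h)).Finite := by
    refine (Set.finite_Iio n).subset fun i hi => ?_
    by_contra hcon
    have := hn i (not_lt.1 hcon)
    simp only [map_zero, Pi.zero_apply, Int.cast_eq_zero] at this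
    exact hi this
  exact ⟨Finsupp.ofSupportFinite _ hfin, rfl⟩

theorem Geta_le_GS (P : BinSeqLt → Set ℕ) (f : BinSeqLt → ℕ → ℤ)
    (η : Set.Iio omega1 → Bool) : Geta P f η ≤ GS P f (Set.range (restrictSeq η)) := by
  refine AddSubgroup.closure_mono (Set.union_subset_union_right _ ?_)
  rintro g ⟨α, j, rfl⟩
  exact ⟨_, ⟨α, rfl⟩, j, rfl⟩

/-- If `η₁` and `η₂` differ at `δ`, their only common restrictions are those to `α ≤ δ`. -/
theorem countable_common {η₁ η₂ : Set.Iio omega1 → Bool} (hne : η₁ ≠ η₂) :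
    (Set.range (restrictSeq η₁) ∩ Set.range (restrictSeq η₂)).Countable := by
  obtain ⟨δ, hδ⟩ := Function.ne_iff.1 hne
  have hc : (Set.Iic δ).Countable := by
    have h1 : (Set.Iio (Order.succ δ.1)).Countable := by
      rw [← Cardinal.le_aleph0_iff_set_countable, Cardinal.mk_Iio_ordinal]
      have h2 : δ.1.card ≤ Cardinal.aleph0 := by
        have h3 : δ.1.card < Cardinal.aleph 1 := Cardinal.lt_ord.1 δ.2
        rwa [← Cardinal.succ_aleph0, Order.lt_succ_iff] at h3
      have h4 : (Order.succ δ.1).card ≤ Cardinal.aleph0 := by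
        rw [Order.succ_eq_add_one, Ordinal.card_add_one]
        exact Cardinal.add_le_aleph0.2 ⟨h2, Cardinal.one_le_aleph0⟩
      exact Cardinal.lift_le_aleph0.2 h4
    refine (h1.preimage_of_injOn (f := Subtype.val) Subtype.val_injective.injOn).mono ?_
    intro α hα
    exact Order.lt_succ_iff.2 (show α.1 ≤ δ.1 from hα)
  refine (hc.image (restrictSeq η₁)).mono ?_
  rintro s ⟨⟨α, rfl⟩, ⟨β, hβ⟩⟩
  refine ⟨α, ?_, rfl⟩
  by_contra hα
  have hlt : δ < α := not_le.1 hα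
  have h1 : (⟨β.1, _⟩ : Σ γ : Ordinal.{0}, Set.Iio γ → Bool) = ⟨α.1, _⟩ := congrArg Subtype.val hβ
  have h2 : β = α := Subtype.ext (congrArg Sigma.fst h1)
  subst h2
  have h3 := eq_of_heq (Sigma.mk.inj h1).2
  have h4 := congrFun h3 ⟨δ.1, hlt⟩
  exact hδ h4.symm

theorem free_of_embeddings
    (P : BinSeqLt → Set ℕ) (f : BinSeqLt → ℕ → ℤ)
    (hprime : ∀ η, ∀ p ∈ P η, p.Prime)
    (hdisj : ∀ η ν, η ≠ ν → (P η ∩ P ν).Finite)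
    (hind : ∀ (k : ℕ) (ηs : Fin k → BinSeqLt) (a : Fin k → ℤ), Function.Injective ηs →
      {i : ℕ | ∀ l, f (ηs l) i = a l}.Infinite)
    (η₁ η₂ : Set.Iio omega1 → Bool) (hne : η₁ ≠ η₂) (H : Type) [AddCommGroup H]
    (φ : H →+ (ℕ → ℤ)) (hφ : Function.Injective φ) (hφm : ∀ h, φ h ∈ Geta P f η₁)
    (ψ : H →+ (ℕ → ℤ)) (hψ : Function.Injective ψ) (hψm : ∀ h, ψ h ∈ Geta P f η₂) :
    Module.Free ℤ H := by
  obtain ⟨v, hv, hkv⟩ := exists_isAdm hprime hind φ hφ fun h => Geta_le_GS P f η₁ (hφm h)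
  obtain ⟨w, hw, hkw⟩ := exists_isAdm hprime hind ψ hψ fun h => Geta_le_GS P f η₂ (hψm h)
  refine free_of_countable_ker hprime hdisj hv hw hkv hkw (countable_common hne) fun K hK => ?_
  have : Countable K := hK.to_subtype
  exact free_of_countable_of_injective (φ.toIntLinearMap ∘ₗ K.subtype)
    (hφ.comp Subtype.val_injective)

/-- for distinct `η₁ η₂ : ω₁ → {0,1}`, the groups `G_{η₁}` and
`G_{η₂}` are almost disjoint: every abelian group `H` isomorphic to a subgroup of
`G_{η₁}` and to a subgroup of `G_{η₂}` is free.  In particular the intersection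
`G_{η₁} ⊓ G_{η₂}` is free. -/
theorem stmt11
    (P : BinSeqLt → Set ℕ) (f : BinSeqLt → ℕ → ℤ)
    (hprime : ∀ η, ∀ p ∈ P η, p.Prime)
    (hinf : ∀ η, (P η).Infinite)
    (hdisj : ∀ η ν, η ≠ ν → (P η ∩ P ν).Finite)
    (hind : ∀ (k : ℕ) (ηs : Fin k → BinSeqLt) (a : Fin k → ℤ), Function.Injective ηs →
      {i : ℕ | ∀ l, f (ηs l) i = a l}.Infinite)
    (η₁ η₂ : Set.Iio omega1 → Bool) (hne : η₁ ≠ η₂) :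
    (∀ (H : Type) [AddCommGroup H],
      (∃ φ : H →+ (ℕ → ℤ), Function.Injective φ ∧ ∀ h, φ h ∈ Geta P f η₁) →
      (∃ ψ : H →+ (ℕ → ℤ), Function.Injective ψ ∧ ∀ h, ψ h ∈ Geta P f η₂) →
      Module.Free ℤ H) ∧
    Module.Free ℤ (↥(Geta P f η₁ ⊓ Geta P f η₂)) := by
  have key := free_of_embeddings P f hprime hdisj hind η₁ η₂ hne
  refine ⟨fun H _ ⟨φ, hφ, hφm⟩ ⟨ψ, hψ, hψm⟩ => key H φ hφ hφm ψ hψ hψm, ?_⟩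
  exact key _ (AddSubgroup.subtype _) Subtype.val_injective (fun h => h.2.1)
    (AddSubgroup.subtype _) Subtype.val_injective (fun h => h.2.2)
end

section
/- Let η₁ and η₂ be distinct functions from ω₁ to {0,1}. Then the groups G_{η₁} and G_{η₂} are not isomorphic, and neither of them is free. -/
/-!
Modulo finitely supported functions, `x_{η,j}` is divisible by every prime of `P_η` that is `≥ j`.
Hence (`hom_xv_eq_zero`) a homomorphism `ψ : G_η → ℚ` that kills `Z_ω` also kills every `x_{ν,j}`
as soon as the denominators of its values only involve primes from a set almost disjoint from
`P_ν`: the numerator of `ψ x_{ν,j}` is divisible by infinitely many primes.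

*Non-freeness.* With a basis of `G_η`, all but countably many coordinate functionals vanish on the
countable group `Z_ω`, hence vanish identically. So the basis, and therefore `G_η`, is countable.
But the `x_{η↾α,0}` are `ℵ₁` many distinct elements.

*Non-isomorphism.* By the independence property, the classes of the `x_{ν,0}` in
`ℚ^ω` modulo finite support are linearly independent over `ℚ` (`linearIndependent_cls`), which
gives coordinate functionals `c_β` on `G_{η₂}`; the denominators of the values of `c_β` are
products of primes of `P_β`, and a subset of `G_{η₂}` on which only countably many `c_β` are
nonzero is countable (`countable_supported`). If `η₁` and `η₂` differ at `δ`, then `η₁↾α` is not of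
the form `η₂↾β` once `α > δ`. Given an isomorphism `φ`, let `T` be the countable set of coordinates
occurring in the images of `Z_ω` and of the `x_{η₁↾α,j}`, `α ≤ δ`. For `β ∉ T`, `c_β ∘ φ` kills
these elements, and by `hom_xv_eq_zero` also the remaining generators `x_{η₁↾α,j}`, `α > δ`. So
`φ` embeds the uncountable `G_{η₁}` in a countable set.
-/

open scoped Classical

/-! ### Divisibility modulo finite support -/

/-- The product of the primes of `P η` in the interval `[j, k)`. -/
noncomputable def primeProd {X : Type*} (P : X → Set ℕ) (η : X) (j k : ℕ) : ℤ :=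
  ∏ p ∈ (Finset.range k).filter (fun p => p ∈ P η ∧ j ≤ p), (p : ℤ)

lemma primeProd_mul {X : Type*} (P : X → Set ℕ) (η : X) {j k i : ℕ} (hjk : j ≤ k) (hki : k ≤ i) :
    primeProd P η j i = primeProd P η j k * primeProd P η k i := by
  unfold primeProd
  rw [← Finset.prod_union]
  · congr 1
    ext p
    simp only [Finset.mem_filter, Finset.mem_range, Finset.mem_union]
    by_cases hp : p ∈ P η
    · simp only [hp, true_and]; omega
    · simp [hp]
  · rw [Finset.disjoint_left]
    simp only [Finset.mem_filter, Finset.mem_range]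
    intro p h1 h2
    omega

lemma xv_sub_mem {X : Type*} (P : X → Set ℕ) (f : X → ℕ → ℤ) (η : X) {j k : ℕ} (hjk : j ≤ k) :
    xv P f η j - primeProd P η j k • xv P f η k ∈ Zomega := by
  change (Function.support _).Finite
  refine (Set.finite_Iio k).subset fun i hi => ?_
  by_contra hki
  have hki : k ≤ i := by simpa using hki
  apply hi
  change primeProd P η j i * f η i - primeProd P η j k • (primeProd P η k i * f η i) = 0
  rw [primeProd_mul P η hjk hki, smul_eq_mul]
  ring

lemma dvd_primeProd {X : Type*} (P : X → Set ℕ) (η : X) {j p : ℕ} (hp : p ∈ P η) (hj : j ≤ p) :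
    (p : ℤ) ∣ primeProd P η j (p + 1) :=
  Finset.dvd_prod_of_mem (fun p : ℕ => (p : ℤ)) (by simp [hp, hj])

lemma primeProd_ne_zero {X : Type*} {P : X → Set ℕ} (hprime : ∀ η, ∀ p ∈ P η, p.Prime) (η : X)
    (j k : ℕ) : primeProd P η j k ≠ 0 := by
  refine Finset.prod_ne_zero_iff.mpr fun p hp => ?_
  have := (hprime η p (Finset.mem_filter.mp hp).2.1).ne_zero
  exact_mod_cast this

lemma mem_of_dvd_primeProd {X : Type*} {P : X → Set ℕ} (hprime : ∀ η, ∀ p ∈ P η, p.Prime) (η : X)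
    {j k p : ℕ} (hp : p.Prime) (hd : (p : ℤ) ∣ primeProd P η j k) : p ∈ P η := by
  obtain ⟨q, hq, hpq⟩ := (Nat.prime_iff_prime_int.mp hp).exists_mem_finset_dvd hd
  have hqP := (Finset.mem_filter.mp hq).2.1
  have : p = q := (Nat.prime_dvd_prime_iff_eq hp (hprime η q hqP)).mp (by exact_mod_cast hpq)
  exact this ▸ hqP

/-- The group of rationals that can be written with a denominator all of whose prime factors lie
in `Q`. -/
def ratDen (Q : Set ℕ) : AddSubgroup ℚ where
  carrier := {q | ∃ a b : ℤ, b ≠ 0 ∧ (∀ p : ℕ, p.Prime → (p : ℤ) ∣ b → p ∈ Q) ∧ q * b = a}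
  zero_mem' := ⟨0, 1, one_ne_zero, fun p hp h => by
    have := (Nat.prime_iff_prime_int.mp hp).not_dvd_one; contradiction, by simp⟩
  add_mem' := by
    rintro x y ⟨a, b, hb, hbQ, h⟩ ⟨c, d, hd, hdQ, h'⟩
    refine ⟨a * d + c * b, b * d, mul_ne_zero hb hd, fun p hp hpd => ?_, ?_⟩
    · exact ((Nat.prime_iff_prime_int.mp hp).dvd_or_dvd hpd).elim (hbQ p hp) (hdQ p hp)
    · push_cast
      rw [← h, ← h']
      ring
  neg_mem' := by
    rintro x ⟨a, b, hb, hbQ, h⟩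
    exact ⟨-a, b, hb, hbQ, by push_cast; rw [← h]; ring⟩

lemma dvd_num_of_eq_mul {Q : Set ℕ} {q r : ℚ} {p : ℕ} {m : ℤ} (hp : p.Prime) (hpQ : p ∉ Q)
    (hr : r ∈ ratDen Q) (hm : (p : ℤ) ∣ m) (h : q = m * r) : (p : ℤ) ∣ q.num := by
  obtain ⟨a, b, hb, hbQ, hrb⟩ := hr
  have key : q.num * b = m * a * q.den := by
    have h1 : (q.num : ℚ) = q * q.den := (Rat.mul_den_eq_num q).symm
    have : (q.num : ℚ) * b = m * a * q.den := by
      rw [h1, ← hrb]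
      nth_rewrite 1 [h]
      ring
    exact_mod_cast this
  have hd : (p : ℤ) ∣ q.num * b := key ▸ ((hm.mul_right a).mul_right _)
  exact ((Nat.prime_iff_prime_int.mp hp).dvd_or_dvd hd).resolve_right fun hpb => hpQ (hbQ p hp hpb)

/-- A homomorphism killing `Z_ω` kills `x_{ν,j}` if the denominators of its values avoid almost all
primes of `P ν`. -/
lemma hom_xv_eq_zero {X : Type*} {P : X → Set ℕ} {f : X → ℕ → ℤ}
    (hprime : ∀ η, ∀ p ∈ P η, p.Prime) (hinf : ∀ η, (P η).Infinite)
    {G : AddSubgroup (ℕ → ℤ)} (hZ : Zomega ≤ G) {ν : X} (hν : ∀ j, xv P f ν j ∈ G)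
    {Q : Set ℕ} (hQ : (Q ∩ P ν).Finite) (ψ : G →+ ℚ) (hψ : ∀ g, ψ g ∈ ratDen Q)
    (hψZ : ∀ z (hz : z ∈ Zomega), ψ ⟨z, hZ hz⟩ = 0) (j : ℕ) : ψ ⟨_, hν j⟩ = 0 := by
  set q := ψ ⟨_, hν j⟩ with hq
  by_contra hne
  have hnum : q.num ≠ 0 := Rat.num_ne_zero.mpr hne
  have hbig : (P ν \ (Q ∩ P ν ∪ Set.Iio j ∪ Set.Iic q.num.natAbs)).Infinite :=
    (hinf ν).sdiff ((hQ.union (Set.finite_Iio j)).union (Set.finite_Iic _))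
  obtain ⟨p, hpP, hp⟩ := hbig.nonempty
  simp only [Set.mem_union, Set.mem_inter_iff, Set.mem_Iio, Set.mem_Iic, not_or, not_and,
    not_lt, not_le] at hp
  obtain ⟨⟨hpQ, hjp⟩, hpn⟩ := hp
  have heq : q = (primeProd P ν j (p + 1) : ℤ) * ψ ⟨_, hν (p + 1)⟩ := by
    have h0 := hψZ _ (xv_sub_mem P f ν (j := j) (k := p + 1) (by omega))
    have h1 : (⟨_, hZ (xv_sub_mem P f ν (j := j) (k := p + 1) (by omega))⟩ : G)
        = ⟨_, hν j⟩ - primeProd P ν j (p + 1) • ⟨_, hν (p + 1)⟩ := rfl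
    rw [h1, map_sub, map_zsmul, sub_eq_zero, zsmul_eq_mul] at h0
    exact h0
  have hd := dvd_num_of_eq_mul (hprime ν p hpP) (fun h => hpQ h hpP) (hψ _)
    (dvd_primeProd P ν hpP hjp) heq
  have := Nat.le_of_dvd (Int.natAbs_pos.mpr hnum) (Int.natCast_dvd.mp hd)
  omega

/-! ### Coordinates modulo finite support -/

/-- The rational functions on `ℕ` with finite support, as a subspace of `ℚ^ω`. -/
def finSuppQ : Submodule ℚ (ℕ → ℚ) where
  carrier := {g | (Function.support g).Finite}
  zero_mem' := by simp
  add_mem' := fun ha hb => (ha.union hb).subset (Function.support_add _ _)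
  smul_mem' := fun c _ ha => ha.subset (Function.support_const_smul_subset c _)

/-- The class of an integer sequence in `ℚ^ω` modulo finite support. -/
def cls : (ℕ → ℤ) →+ ((ℕ → ℚ) ⧸ finSuppQ) :=
  finSuppQ.mkQ.toAddMonoidHom.comp ((Int.castAddHom ℚ).compLeft ℕ)

lemma cls_eq_zero_iff {y : ℕ → ℤ} : cls y = 0 ↔ y ∈ Zomega := by
  change Submodule.Quotient.mk (p := finSuppQ) (fun i => ((y i : ℤ) : ℚ)) = 0 ↔ _
  rw [Submodule.Quotient.mk_eq_zero]
  change (Function.support _).Finite ↔ (Function.support _).Finite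
  have : Function.support (fun i => ((y i : ℤ) : ℚ)) = Function.support y := by
    ext i; simp
  rw [this]

lemma cls_xv {X : Type*} {P : X → Set ℕ} (f : X → ℕ → ℤ)
    (hprime : ∀ η, ∀ p ∈ P η, p.Prime) (η : X) (j : ℕ) :
    cls (xv P f η j) = ((primeProd P η 0 j : ℤ) : ℚ)⁻¹ • cls (xv P f η 0) := by
  have h := cls_eq_zero_iff.mpr (xv_sub_mem P f η (Nat.zero_le j))
  rw [map_sub, map_zsmul, sub_eq_zero] at h
  have hne : ((primeProd P η 0 j : ℤ) : ℚ) ≠ 0 := by exact_mod_cast primeProd_ne_zero hprime η 0 j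
  rw [h, ← Int.cast_smul_eq_zsmul ℚ, smul_smul, inv_mul_cancel₀ hne, one_smul]

/-- Independence of the `f_η` makes the classes of the `x_{η,0}` linearly independent: at
infinitely many places, one chosen `f_η` equals `1` and finitely many others vanish. -/
lemma linearIndependent_cls {X : Type*} {P : X → Set ℕ} {f : X → ℕ → ℤ}
    (hprime : ∀ η, ∀ p ∈ P η, p.Prime)
    (hind : ∀ (k : ℕ) (ηs : Fin k → X) (a : Fin k → ℤ), Function.Injective ηs →
      {i : ℕ | ∀ l, f (ηs l) i = a l}.Infinite) :
    LinearIndependent ℚ (fun η => cls (xv P f η 0)) := by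
  rw [linearIndependent_iff]
  intro l hl
  by_contra hne
  obtain ⟨β, hβ⟩ := Finsupp.support_nonempty_iff.mpr hne
  have hsum : (fun i => ∑ η ∈ l.support, l η * ((xv P f η 0 i : ℤ) : ℚ)) ∈ finSuppQ := by
    rw [← Submodule.Quotient.mk_eq_zero, ← hl, Finsupp.linearCombination_apply, Finsupp.sum]
    have : (fun i => ∑ η ∈ l.support, l η * ((xv P f η 0 i : ℤ) : ℚ))
        = ∑ η ∈ l.support, l η • (fun i => ((xv P f η 0 i : ℤ) : ℚ)) := by
      ext i; simp
    rw [this]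
    exact map_sum finSuppQ.mkQ _ _
  let e := l.support.equivFin.symm
  have hinf := hind l.support.card (fun n => (e n : X)) (fun n => if (e n : X) = β then 1 else 0)
    (Subtype.val_injective.comp e.injective)
  obtain ⟨i, hi, hi'⟩ := (hinf.sdiff hsum).nonempty
  have hf : ∀ η ∈ l.support, f η i = if η = β then 1 else 0 := by
    intro η hη
    have := hi (e.symm ⟨η, hη⟩)
    simpa using this
  apply hi'
  change (∑ η ∈ l.support, l η * ((xv P f η 0 i : ℤ) : ℚ)) ≠ 0
  rw [Finset.sum_eq_single_of_mem β hβ]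
  · have h1 : xv P f β 0 i = primeProd P β 0 i * f β i := rfl
    rw [h1, hf β hβ]
    have := primeProd_ne_zero hprime β 0 i
    simp only [if_true, mul_one]
    exact mul_ne_zero (Finsupp.mem_support_iff.mp hβ) (by exact_mod_cast this)
  · intro η hη hηβ
    have h1 : xv P f η 0 i = primeProd P η 0 i * f η i := rfl
    rw [h1, hf η hη, if_neg hηβ]
    simp

/-! ### The groups `G_η` -/

lemma Zomega_le_Geta (P : BinSeqLt → Set ℕ) (f : BinSeqLt → ℕ → ℤ) (η : Set.Iio omega1 → Bool) :
    Zomega ≤ Geta P f η :=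
  fun _ hz => AddSubgroup.subset_closure (Or.inl hz)

lemma xv_mem_Geta (P : BinSeqLt → Set ℕ) (f : BinSeqLt → ℕ → ℤ) (η : Set.Iio omega1 → Bool)
    (α : Set.Iio omega1) (j : ℕ) : xv P f (restrictSeq η α) j ∈ Geta P f η :=
  AddSubgroup.subset_closure (Or.inr ⟨α, j, rfl⟩)

lemma hom_Geta_eq_zero {P : BinSeqLt → Set ℕ} {f : BinSeqLt → ℕ → ℤ} {η : Set.Iio omega1 → Bool}
    (ψ : Geta P f η →+ ℚ) (hZ : ∀ z (hz : z ∈ Zomega), ψ ⟨z, Zomega_le_Geta P f η hz⟩ = 0)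
    (hx : ∀ α j, ψ ⟨_, xv_mem_Geta P f η α j⟩ = 0) (g : Geta P f η) : ψ g = 0 := by
  obtain ⟨g, hg⟩ := g
  induction hg using AddSubgroup.closure_induction with
  | mem y hy =>
    rcases hy with hy | ⟨α, j, rfl⟩
    · exact hZ y hy
    · exact hx α j
  | zero => exact map_zero ψ
  | add a b ha hb iha ihb =>
    exact (map_add ψ ⟨a, ha⟩ ⟨b, hb⟩).trans (by rw [iha, ihb, add_zero])
  | neg a ha iha => exact (map_neg ψ ⟨a, ha⟩).trans (by rw [iha, neg_zero])

lemma countable_Zomega_s12 : (Zomega : Set (ℕ → ℤ)).Countable := by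
  refine (Set.countable_range (fun l : ℕ →₀ ℤ => (l : ℕ → ℤ))).mono fun z hz => ?_
  exact ⟨Finsupp.ofSupportFinite z hz, rfl⟩

lemma restrictSeq_injective (η : Set.Iio omega1 → Bool) : Function.Injective (restrictSeq η) := by
  intro α β h
  have : (restrictSeq η α).1.1 = (restrictSeq η β).1.1 := by rw [h]
  exact Subtype.ext this

lemma restrictSeq_ne {η₁ η₂ : Set.Iio omega1 → Bool} {δ α β : Set.Iio omega1}
    (hδ : η₁ δ ≠ η₂ δ) (hα : δ < α) : restrictSeq η₁ α ≠ restrictSeq η₂ β := by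
  intro h
  have h1 : α.1 = β.1 := congrArg (fun s : BinSeqLt => s.1.1) h
  obtain rfl : α = β := Subtype.ext h1
  have h2 := eq_of_heq (Sigma.mk.inj (Subtype.mk.inj h)).2
  exact hδ (congrFun h2 ⟨δ.1, hα⟩)

lemma uncountable_Iio_omega1 : Uncountable (Set.Iio omega1) := by
  rw [← not_countable_iff]
  intro h
  have h1 : Cardinal.mk (Set.Iio omega1) ≤ Cardinal.aleph0 := Cardinal.mk_le_aleph0_iff.mpr h
  rw [Cardinal.mk_Iio_ordinal, omega1, Cardinal.card_ord, Cardinal.lift_le_aleph0] at h1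
  exact absurd h1 (not_le.mpr Cardinal.aleph0_lt_aleph_one)

lemma countable_Iic (δ : Set.Iio omega1) : (Set.Iic δ).Countable := by
  have hlt : (Order.succ δ.1) < omega1 :=
    (Cardinal.isSuccLimit_ord (Cardinal.aleph0_le_aleph 1)).succ_lt δ.2
  have h1 : (Set.Iio (Order.succ δ.1)).Countable := by
    rw [← Set.countable_coe_iff, ← Cardinal.mk_le_aleph0_iff, Cardinal.mk_Iio_ordinal,
      Cardinal.lift_le_aleph0, ← Order.lt_succ_iff, Cardinal.succ_aleph0]
    exact Cardinal.lt_ord.mp hlt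
  refine (h1.preimage Subtype.val_injective).mono fun α hα => ?_
  exact Order.lt_succ_iff.mpr (show α.1 ≤ δ.1 from hα)

section

variable {P : BinSeqLt → Set ℕ} {f : BinSeqLt → ℕ → ℤ}

lemma uncountable_Geta
    (hli : LinearIndependent ℚ (fun η => cls (xv P f η 0))) (η : Set.Iio omega1 → Bool) :
    Uncountable (Geta P f η) := by
  have := uncountable_Iio_omega1
  refine Function.Injective.uncountable
    (f := fun α => (⟨_, xv_mem_Geta P f η α 0⟩ : Geta P f η)) fun α β h => ?_
  apply restrictSeq_injective η
  apply hli.injective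
  exact congrArg cls (Subtype.mk.inj h)

lemma not_free_Geta
    (hprime : ∀ η, ∀ p ∈ P η, p.Prime) (hinf : ∀ η, (P η).Infinite)
    (hli : LinearIndependent ℚ (fun η => cls (xv P f η 0))) (η : Set.Iio omega1 → Bool) :
    ¬ Module.Free ℤ (Geta P f η) := by
  intro hfree
  let b := Module.Free.chooseBasis ℤ (Geta P f η)
  set ι := Module.Free.ChooseBasisIndex ℤ (Geta P f η)
  have hZc : Countable (Zomega : Set (ℕ → ℤ)) := countable_Zomega_s12.to_subtype
  let I : Set ι := ⋃ z : (Zomega : Set (ℕ → ℤ)),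
    ((b.repr ⟨z.1, Zomega_le_Geta P f η z.2⟩).support : Set ι)
  have hI : I.Countable := Set.countable_iUnion fun z => Finset.countable_toSet _
  have hall : I = Set.univ := by
    refine Set.eq_univ_of_forall fun n => ?_
    by_contra hn
    let ψ : Geta P f η →+ ℚ := (Int.castAddHom ℚ).comp (b.coord n).toAddMonoidHom
    have hψ : ∀ g, ψ g = ((b.repr g n : ℤ) : ℚ) := fun g => rfl
    have hψZ : ∀ z (hz : z ∈ Zomega), ψ ⟨z, Zomega_le_Geta P f η hz⟩ = 0 := by
      intro z hz
      rw [hψ]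
      by_contra h0
      apply hn
      refine Set.mem_iUnion.mpr ⟨⟨z, hz⟩, ?_⟩
      simp only [Finset.mem_coe, Finsupp.mem_support_iff]
      exact fun h => h0 (by rw [h]; simp)
    have hzero := hom_Geta_eq_zero ψ hψZ fun α j =>
      hom_xv_eq_zero hprime hinf (Zomega_le_Geta P f η) (xv_mem_Geta P f η α) (Q := ∅)
        (by simp) ψ (fun g => ⟨b.repr g n, 1, one_ne_zero, fun p hp h =>
          absurd h (Nat.prime_iff_prime_int.mp hp).not_dvd_one, by simp [hψ]⟩) hψZ j
    have := hzero (b n)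
    rw [hψ] at this
    simp at this
  have hι : Countable ι := Set.countable_univ_iff.mp (hall ▸ hI)
  have : Countable (Geta P f η) := b.repr.toEquiv.countable_iff.mpr inferInstance
  exact not_countable_iff.mpr (uncountable_Geta hli η) this

variable {D : ((ℕ → ℚ) ⧸ finSuppQ) →ₗ[ℚ] (BinSeqLt →₀ ℚ)}

/-- Every class of an element of `G_η` is recovered from its coordinates. -/
lemma linearCombination_coords
    (hprime : ∀ η, ∀ p ∈ P η, p.Prime)
    (hD : D ∘ₗ Finsupp.linearCombination ℚ (fun η => cls (xv P f η 0)) = LinearMap.id)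
    {η : Set.Iio omega1 → Bool} {y : ℕ → ℤ} (hy : y ∈ Geta P f η) :
    Finsupp.linearCombination ℚ (fun η => cls (xv P f η 0)) (D (cls y)) = cls y := by
  have hDa : ∀ l, D (Finsupp.linearCombination ℚ (fun η => cls (xv P f η 0)) l) = l :=
    fun l => LinearMap.congr_fun hD l
  have hrange : ∃ l, Finsupp.linearCombination ℚ (fun η => cls (xv P f η 0)) l = cls y := by
    induction hy using AddSubgroup.closure_induction with
    | mem y hy =>
      rcases hy with hy | ⟨α, j, rfl⟩
      · exact ⟨0, by rw [map_zero, cls_eq_zero_iff.mpr hy]⟩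
      · exact ⟨Finsupp.single (restrictSeq η α) ((primeProd P (restrictSeq η α) 0 j : ℤ) : ℚ)⁻¹, by
          rw [Finsupp.linearCombination_single, cls_xv f hprime _ j]⟩
    | zero => exact ⟨0, by simp⟩
    | add a b _ _ iha ihb =>
      obtain ⟨l, hl⟩ := iha
      obtain ⟨m, hm⟩ := ihb
      exact ⟨l + m, by rw [map_add, map_add, hl, hm]⟩
    | neg a _ iha =>
      obtain ⟨l, hl⟩ := iha
      exact ⟨-l, by rw [map_neg, map_neg, hl]⟩
  obtain ⟨l, hl⟩ := hrange
  rw [← hl, hDa]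

lemma coords_xv
    (hprime : ∀ η, ∀ p ∈ P η, p.Prime)
    (hD : D ∘ₗ Finsupp.linearCombination ℚ (fun η => cls (xv P f η 0)) = LinearMap.id)
    (ν : BinSeqLt) (j : ℕ) :
    D (cls (xv P f ν j)) = Finsupp.single ν ((primeProd P ν 0 j : ℤ) : ℚ)⁻¹ := by
  have := LinearMap.congr_fun hD (Finsupp.single ν ((primeProd P ν 0 j : ℤ) : ℚ)⁻¹)
  rwa [LinearMap.comp_apply, Finsupp.linearCombination_single, ← cls_xv f hprime] at this

/-- The coordinate at `β` of an element of `G_η` has a denominator built from primes of `P β`, and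
vanishes unless `β` is a restriction of `η`. -/
lemma coord_mem
    (hprime : ∀ η, ∀ p ∈ P η, p.Prime)
    (hD : D ∘ₗ Finsupp.linearCombination ℚ (fun η => cls (xv P f η 0)) = LinearMap.id)
    {η : Set.Iio omega1 → Bool} (β : BinSeqLt) {y : ℕ → ℤ} (hy : y ∈ Geta P f η) :
    D (cls y) β ∈ ratDen (P β) ∧ (β ∉ Set.range (restrictSeq η) → D (cls y) β = 0) := by
  induction hy using AddSubgroup.closure_induction with
  | mem y hy =>
    rcases hy with hy | ⟨α, j, rfl⟩
    · rw [cls_eq_zero_iff.mpr hy, map_zero]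
      exact ⟨zero_mem _, fun _ => rfl⟩
    · rw [coords_xv hprime hD]
      by_cases hβ : restrictSeq η α = β
      · subst hβ
        refine ⟨⟨1, primeProd P (restrictSeq η α) 0 j, primeProd_ne_zero hprime _ _ _,
          fun p hp hd => mem_of_dvd_primeProd hprime _ hp hd, ?_⟩, fun h => absurd ⟨α, rfl⟩ h⟩
        have : ((primeProd P (restrictSeq η α) 0 j : ℤ) : ℚ) ≠ 0 := by
          exact_mod_cast primeProd_ne_zero hprime _ 0 j
        rw [Finsupp.single_eq_same, inv_mul_cancel₀ this, Int.cast_one]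
      · rw [Finsupp.single_eq_of_ne (Ne.symm hβ)]
        exact ⟨zero_mem _, fun _ => rfl⟩
  | zero =>
    rw [map_zero, map_zero]
    exact ⟨zero_mem _, fun _ => rfl⟩
  | add a b _ _ iha ihb =>
    rw [map_add, map_add, Finsupp.add_apply]
    exact ⟨add_mem iha.1 ihb.1, fun h => by rw [iha.2 h, ihb.2 h, add_zero]⟩
  | neg a _ iha =>
    rw [map_neg, map_neg, Finsupp.neg_apply]
    exact ⟨neg_mem iha.1, fun h => by rw [iha.2 h, neg_zero]⟩

/-- The elements of `G_η` with coordinates in a countable set form countably many cosets of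
`Z_ω`. -/
lemma countable_supported
    (hprime : ∀ η, ∀ p ∈ P η, p.Prime)
    (hD : D ∘ₗ Finsupp.linearCombination ℚ (fun η => cls (xv P f η 0)) = LinearMap.id)
    (η : Set.Iio omega1 → Bool) {T : Set BinSeqLt} (hT : T.Countable) :
    {y | y ∈ Geta P f η ∧ ∀ β ∉ T, D (cls y) β = 0}.Countable := by
  have : Countable T := hT.to_subtype
  have hC : (Set.range fun l : T →₀ ℚ => l.mapDomain Subtype.val).Countable :=
    Set.countable_range _
  refine (hC.biUnion (t := fun l _ => {y | y ∈ Geta P f η ∧ D (cls y) = l}) fun l _ => ?_).mono ?_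
  · rcases Set.eq_empty_or_nonempty {y | y ∈ Geta P f η ∧ D (cls y) = l} with h | ⟨y₀, h₀, h₀'⟩
    · rw [h]; exact Set.countable_empty
    · refine (countable_Zomega_s12.image fun z => y₀ + z).mono ?_
      rintro y ⟨hy, hy'⟩
      refine ⟨y - y₀, ?_, by simp⟩
      rw [SetLike.mem_coe, ← cls_eq_zero_iff, map_sub, ← linearCombination_coords hprime hD hy,
        ← linearCombination_coords hprime hD h₀, hy', h₀', sub_self]
  · rintro y ⟨hy, hyT⟩
    refine Set.mem_biUnion (x := D (cls y)) ?_ ⟨hy, rfl⟩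
    refine ⟨(D (cls y)).comapDomain Subtype.val Subtype.val_injective.injOn, ?_⟩
    refine Finsupp.mapDomain_comapDomain _ Subtype.val_injective _ fun β hβ => ?_
    by_contra hn
    exact Finsupp.mem_support_iff.mp hβ (hyT β fun h => hn ⟨⟨β, h⟩, rfl⟩)

end

/-- for distinct `η₁ η₂ : ω₁ → {0,1}`, the groups `G_{η₁}` and
`G_{η₂}` are not isomorphic, and neither of them is free. -/
theorem stmt12
    (P : BinSeqLt → Set ℕ) (f : BinSeqLt → ℕ → ℤ)
    (hprime : ∀ η, ∀ p ∈ P η, p.Prime)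
    (hinf : ∀ η, (P η).Infinite)
    (hdisj : ∀ η ν, η ≠ ν → (P η ∩ P ν).Finite)
    (hind : ∀ (k : ℕ) (ηs : Fin k → BinSeqLt) (a : Fin k → ℤ), Function.Injective ηs →
      {i : ℕ | ∀ l, f (ηs l) i = a l}.Infinite)
    (η₁ η₂ : Set.Iio omega1 → Bool) (hne : η₁ ≠ η₂) :
    ¬ Nonempty ((Geta P f η₁) ≃+ (Geta P f η₂)) ∧
    ¬ Module.Free ℤ (Geta P f η₁) ∧ ¬ Module.Free ℤ (Geta P f η₂) := by
  have hli := linearIndependent_cls hprime hind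
  refine ⟨?_, not_free_Geta hprime hinf hli η₁, not_free_Geta hprime hinf hli η₂⟩
  rintro ⟨φ⟩
  obtain ⟨δ, hδ⟩ := Function.ne_iff.mp hne
  obtain ⟨D, hD⟩ := LinearMap.exists_leftInverse_of_injective
    (Finsupp.linearCombination ℚ (fun η => cls (xv P f η 0))) (LinearMap.ker_eq_bot.mpr hli)
  have hZc : Countable (Zomega : Set (ℕ → ℤ)) := countable_Zomega_s12.to_subtype
  have hδc : Countable (Set.Iic δ) := (countable_Iic δ).to_subtype
  -- the coordinates occurring in the images of `Z_ω` and of the `x_{η₁↾α,j}` with `α ≤ δ`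
  let T : Set BinSeqLt :=
    (⋃ z : (Zomega : Set (ℕ → ℤ)),
      ((D (cls (φ ⟨z.1, Zomega_le_Geta P f η₁ z.2⟩))).support : Set BinSeqLt)) ∪
    ⋃ a : Set.Iic δ × ℕ,
      ((D (cls (φ ⟨_, xv_mem_Geta P f η₁ a.1.1 a.2⟩))).support : Set BinSeqLt)
  have hT : T.Countable :=
    (Set.countable_iUnion fun z => Finset.countable_toSet _).union
      (Set.countable_iUnion fun z => Finset.countable_toSet _)
  have hzero : ∀ β ∉ T, ∀ g, D (cls (φ g)) β = 0 := by
    intro β hβ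
    let ψ : Geta P f η₁ →+ ℚ :=
      ((Finsupp.applyAddHom β).comp (D.toAddMonoidHom.comp cls)).comp
        ((Geta P f η₂).subtype.comp φ.toAddMonoidHom)
    have hψ : ∀ g, ψ g = D (cls (φ g)) β := fun g => rfl
    have hψZ : ∀ z (hz : z ∈ Zomega), ψ ⟨z, Zomega_le_Geta P f η₁ hz⟩ = 0 := by
      intro z hz
      rw [hψ]
      by_contra h0
      exact hβ (Or.inl (Set.mem_iUnion.mpr ⟨⟨z, hz⟩, Finsupp.mem_support_iff.mpr h0⟩))
    refine hom_Geta_eq_zero ψ hψZ fun α j => ?_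
    rcases le_or_gt α δ with hα | hα
    · rw [hψ]
      by_contra h0
      exact hβ (Or.inr (Set.mem_iUnion.mpr ⟨(⟨α, hα⟩, j), Finsupp.mem_support_iff.mpr h0⟩))
    · by_cases hβα : β = restrictSeq η₁ α
      · refine (coord_mem hprime hD β (φ _).2).2 ?_
        rintro ⟨γ, hγ⟩
        exact restrictSeq_ne hδ hα (hβα.symm.trans hγ.symm)
      · exact hom_xv_eq_zero hprime hinf (Zomega_le_Geta P f η₁) (xv_mem_Geta P f η₁ α)
          (hdisj _ _ hβα) ψ (fun g => (coord_mem hprime hD β (φ g).2).1) hψZ j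
  have hcount := (countable_supported hprime hD η₂ hT).to_subtype
  have : Countable (Geta P f η₁) :=
    Function.Injective.countable
      (f := fun g => (⟨(φ g : ℕ → ℤ), (φ g).2, fun β hβ => hzero β hβ g⟩ :
        {y | y ∈ Geta P f η₂ ∧ ∀ β ∉ T, D (cls y) β = 0}))
      fun a b h => φ.injective (Subtype.ext (Subtype.mk.inj h))
  exact not_countable_iff.mpr (uncountable_Geta hli η₁) this
end
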